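/- arXiv:2302.09849 — 2 statements merged into one kernel-verified Lean document; each statement's English description precedes it below -/
import Mathlib

section
/- Suppose that F is an r-graph on m vertices and P is a minimal pattern such that (F,P) is a Turán pair and F is degree-stable with respect to P. Then there exists a constant c > 0 such that: (a) ex(n,F) is 4·C(n−1,r−2)-smooth, i.e. |δ(n,F) − d(n−1,F)| ≤ 4·C(n−1,r−2) for all n; and (b) for all sufficiently large n, F is (c·C(n−1,r−1), ((1−π(F))/(8m))·C(n−1,r−1))-bounded. -/
open Filter

namespace DensityCH

/-- An `r`-uniform hypergraph with vertices in `ℕ`: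
a finite vertex set together with a set of `r`-element edges. -/
structure HGraph (r : ℕ) where
  verts : Finset ℕ
  edges : Finset (Finset ℕ)
  edges_sub : ∀ e ∈ edges, e ⊆ verts
  edges_card : ∀ e ∈ edges, e.card = r

namespace HGraph

/-- Build an `r`-graph from a vertex set and a set of candidate edges,
keeping exactly the well-formed candidates. -/
def ofEdges (r : ℕ) (V : Finset ℕ) (E : Finset (Finset ℕ)) : HGraph r where
  verts := V
  edges := E.filter fun e => e ⊆ V ∧ e.card = r
  edges_sub := fun e he => ((Finset.mem_filter.mp he).2).1
  edges_card := fun e he => ((Finset.mem_filter.mp he).2).2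

variable {r : ℕ}

/-- `H` contains a copy of `F`, i.e. a subgraph isomorphic to `F`. -/
def IsCopyIn (F H : HGraph r) : Prop :=
  ∃ f : ℕ → ℕ, Set.InjOn f ↑F.verts ∧ (∀ v ∈ F.verts, f v ∈ H.verts) ∧
    ∀ e ∈ F.edges, e.image f ∈ H.edges

/-- The subgraph of `H` induced on `S`. -/
def induce (H : HGraph r) (S : Finset ℕ) : HGraph r :=
  ofEdges r (H.verts ∩ S) (H.edges.filter fun e => e ⊆ S)

/-- Delete a vertex from `H`. -/
def deleteVert (H : HGraph r) (v : ℕ) : HGraph r :=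
  ofEdges r (H.verts.erase v) (H.edges.filter fun e => v ∉ e)

/-- The degree of a vertex. -/
def deg (H : HGraph r) (v : ℕ) : ℕ := (H.edges.filter fun e => v ∈ e).card

/-- The maximum degree `Δ(H)`. -/
def maxDeg (H : HGraph r) : ℕ := H.verts.sup H.deg

/-- The minimum degree `δ(H)`. -/
def minDeg (H : HGraph r) : ℕ :=
  if h : H.verts.Nonempty then H.verts.inf' h H.deg else 0

/-- The average degree `d(H) = r·|E(H)|/|V(H)|`. -/
noncomputable def avgDeg (H : HGraph r) : ℝ :=
  (r : ℝ) * (H.edges.card : ℝ) / (H.verts.card : ℝ)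

/-- `H` contains `k` pairwise vertex-disjoint copies of `F`, i.e. `ν(F,H) ≥ k`. -/
def HasMatching (F H : HGraph r) (k : ℕ) : Prop :=
  ∃ S : Fin k → Finset ℕ,
    (∀ i, S i ⊆ H.verts ∧ (S i).card = F.verts.card) ∧
    (∀ i j, i ≠ j → Disjoint (S i) (S j)) ∧
    ∀ i, F.IsCopyIn (H.induce (S i))

/-- Isomorphism of hypergraphs. -/
def Iso (G H : HGraph r) : Prop :=
  ∃ f : ℕ → ℕ, Set.BijOn f ↑G.verts ↑H.verts ∧
    ∀ e ∈ Finset.powersetCard r G.verts, (e ∈ G.edges ↔ e.image f ∈ H.edges)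

/-- The join `G ⋈ H`: all edges of `G`, all edges of `H`, and all `r`-sets meeting
both vertex sets. -/
def join (G H : HGraph r) : HGraph r :=
  ofEdges r (G.verts ∪ H.verts)
    (G.edges ∪ H.edges ∪ ((Finset.powersetCard r (G.verts ∪ H.verts)).filter
      fun e => (e ∩ G.verts).Nonempty ∧ (e ∩ H.verts).Nonempty))

end HGraph

/-- The complete `r`-graph on a vertex set `S`. -/
def completeOn (r : ℕ) (S : Finset ℕ) : HGraph r :=
  HGraph.ofEdges r S (Finset.powersetCard r S)

/-- The `r`-graph on `V` with no edges. -/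
def emptyOn (r : ℕ) (V : Finset ℕ) : HGraph r := HGraph.ofEdges r V ∅

/-- The Turán number `ex(n,F)`. -/
noncomputable def exN (r n : ℕ) (F : HGraph r) : ℕ :=
  sSup {m | ∃ H : HGraph r, H.verts.card = n ∧ ¬ F.IsCopyIn H ∧ H.edges.card = m}

/-- `d(n,F) = r·ex(n,F)/n`. -/
noncomputable def dN (r n : ℕ) (F : HGraph r) : ℝ := (r : ℝ) * (exN r n F : ℝ) / (n : ℝ)

/-- `δ(n,F) = ex(n,F) − ex(n−1,F)` (as a real number). -/
noncomputable def deltaN (r n : ℕ) (F : HGraph r) : ℝ := (exN r n F : ℝ) - (exN r (n-1) F : ℝ)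

/-- `x` is the Turán density `π(F)`, i.e. the limit of `ex(n,F)/C(n,r)`. -/
def HasTuranDensity (r : ℕ) (F : HGraph r) (x : ℝ) : Prop :=
  Tendsto (fun n : ℕ => (exN r n F : ℝ) / (n.choose r : ℝ)) atTop (nhds x)

/-- `ex(n,(t+1)F)`: the maximum number of edges of an `n`-vertex `r`-graph with no
`t+1` pairwise vertex-disjoint copies of `F`. -/
noncomputable def exMatchN (r n t : ℕ) (F : HGraph r) : ℕ :=
  sSup {m | ∃ H : HGraph r, H.verts.card = n ∧ ¬ F.HasMatching H (t+1) ∧ H.edges.card = m}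

/-- `H ∈ EX(n,F)`. -/
def IsExtremalFree (r n : ℕ) (F H : HGraph r) : Prop :=
  H.verts.card = n ∧ ¬ F.IsCopyIn H ∧ H.edges.card = exN r n F

/-- `H ∈ EX(n,(t+1)F)`. -/
def IsExtremalMatchingFree (r n t : ℕ) (F H : HGraph r) : Prop :=
  H.verts.card = n ∧ ¬ F.HasMatching H (t+1) ∧ H.edges.card = exMatchN r n t F

/-- `F` is `(f1, f2)`-bounded at `n`. -/
def BoundedAt (r n : ℕ) (F : HGraph r) (f1 f2 : ℝ) : Prop :=
  ∀ H : HGraph r, H.verts.card = n → ¬ F.IsCopyIn H →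
    dN r n F - f1 ≤ H.avgDeg → (H.maxDeg : ℝ) ≤ dN r n F + f2

/-- `ex(·,F)` is `g`-smooth at `n`: `|δ(n,F) − d(n−1,F)| ≤ g(n)`. -/
def SmoothAt (r n : ℕ) (F : HGraph r) (g : ℝ) : Prop :=
  |deltaN r n F - dN r (n-1) F| ≤ g

/-- The collection `H 0, …, H t` (on a common vertex set) has a rainbow `F`-matching. -/
def HasRainbowMatching (r t : ℕ) (F : HGraph r) (H : Fin (t+1) → HGraph r) : Prop :=
  ∃ S : Fin (t+1) → Finset ℕ,
    (∀ i, S i ⊆ (H i).verts ∧ (S i).card = F.verts.card) ∧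
    (∀ i j, i ≠ j → Disjoint (S i) (S j)) ∧
    ∀ i, F.IsCopyIn ((H i).induce (S i))

/-!  Patterns -/

/-- An `r`-uniform pattern: a finite index set together with a collection of
`r`-multisets on it. -/
structure Pattern (r : ℕ) where
  idx : Finset ℕ
  mE : Finset (Multiset ℕ)
  card_eq : ∀ s ∈ mE, Multiset.card s = r
  mem_idx : ∀ s ∈ mE, ∀ i ∈ s, i ∈ idx

namespace Pattern

variable {r : ℕ}

/-- The pattern `P − i`. -/
def erase (P : Pattern r) (i : ℕ) : Pattern r where
  idx := P.idx.erase i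
  mE := P.mE.filter fun s => i ∉ s
  card_eq := fun s hs => P.card_eq s (Finset.mem_filter.mp hs).1
  mem_idx := by
    intro s hs j hj
    have h1 := Finset.mem_filter.mp hs
    refine Finset.mem_erase.mpr ⟨?_, P.mem_idx s h1.1 j hj⟩
    rintro rfl
    exact h1.2 hj

/-- `H` is a `P`-construction: a blowup of the pattern `P`. -/
def IsConstruction (P : Pattern r) (H : HGraph r) : Prop :=
  ∃ part : ℕ → ℕ, (∀ v ∈ H.verts, part v ∈ P.idx) ∧
    ∀ e : Finset ℕ, e ∈ H.edges ↔ (e ⊆ H.verts ∧ e.card = r ∧ Multiset.map part e.val ∈ P.mE)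

/-- `H` is a `P`-subconstruction: a subgraph of a `P`-construction. -/
def IsSubconstruction (P : Pattern r) (H : HGraph r) : Prop :=
  ∃ G : HGraph r, P.IsConstruction G ∧ H.verts ⊆ G.verts ∧ H.edges ⊆ G.edges

end Pattern

/-- `Λ(P,n)`: the maximum number of edges of an `n`-vertex `P`-construction. -/
noncomputable def patEx (r : ℕ) (P : Pattern r) (n : ℕ) : ℕ :=
  sSup {m | ∃ H : HGraph r, P.IsConstruction H ∧ H.verts.card = n ∧ H.edges.card = m}

/-- The Lagrangian `λ(P) = lim Λ(P,n)/C(n,r)`. -/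
noncomputable def patLagrangian (r : ℕ) (P : Pattern r) : ℝ :=
  limUnder atTop fun n : ℕ => (patEx r P n : ℝ) / (n.choose r : ℝ)

/-- The pattern `P` is minimal: `λ(P−i) < λ(P)` for all `i`. -/
def Pattern.Minimal {r : ℕ} (P : Pattern r) : Prop :=
  ∀ i ∈ P.idx, patLagrangian r (P.erase i) < patLagrangian r P

/-- `(F,P)` is a Turán pair. -/
def IsTuranPair (r : ℕ) (F : HGraph r) (P : Pattern r) : Prop :=
  (∀ H : HGraph r, P.IsConstruction H → ¬ F.IsCopyIn H) ∧
  (∀ H : HGraph r, ¬ F.IsCopyIn H → H.edges.card = exN r H.verts.card F →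
    P.IsConstruction H)

/-- `F` is edge-stable with respect to `P` (with Turán density `π`). -/
def EdgeStable (r : ℕ) (F : HGraph r) (P : Pattern r) (π : ℝ) : Prop :=
  ∀ δ : ℝ, 0 < δ → ∃ N₀ : ℕ, ∃ ζ : ℝ, 0 < ζ ∧
    ∀ H : HGraph r, N₀ ≤ H.verts.card → ¬ F.IsCopyIn H →
      (π - ζ) * (H.verts.card.choose r : ℝ) ≤ (H.edges.card : ℝ) →
      ∃ H' : HGraph r, H'.verts ⊆ H.verts ∧ H'.edges ⊆ H.edges ∧
        (π - δ) * (H.verts.card.choose r : ℝ) ≤ (H'.edges.card : ℝ) ∧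
        P.IsSubconstruction H'

/-- `F` is weakly vertex-extendable with respect to `P` (with Turán density `π`). -/
def WeaklyVertexExtendable (r : ℕ) (F : HGraph r) (P : Pattern r) (π : ℝ) : Prop :=
  ∀ δ : ℝ, 0 < δ → ∃ N₀ : ℕ, ∃ ζ : ℝ, 0 < ζ ∧
    ∀ H : HGraph r, N₀ ≤ H.verts.card → ¬ F.IsCopyIn H →
      (π - ζ) * (((H.verts.card - 1).choose (r-1) : ℕ) : ℝ) ≤ (H.minDeg : ℝ) →
      ∀ v ∈ H.verts, P.IsSubconstruction (H.deleteVert v) →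
        (H.deg v : ℝ) ≤ (π + δ) * (((H.verts.card - 1).choose (r-1) : ℕ) : ℝ)

/-- `F` is degree-stable with respect to `P` (with Turán density `π`). -/
def DegreeStable (r : ℕ) (F : HGraph r) (P : Pattern r) (π : ℝ) : Prop :=
  ∃ ζ : ℝ, 0 < ζ ∧ ∃ N₀ : ℕ,
    ∀ H : HGraph r, N₀ ≤ H.verts.card → ¬ F.IsCopyIn H →
      (π - ζ) * (((H.verts.card - 1).choose (r-1) : ℕ) : ℝ) ≤ (H.minDeg : ℝ) →
      P.IsSubconstruction H

/-!  Concrete constructions -/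

/-- The generalized Turán graph `T_r(·,ℓ)` on vertex set `V` (parts are residue
classes mod `ℓ`; on an interval these are balanced). -/
def turanOn (r ℓ : ℕ) (V : Finset ℕ) : HGraph r :=
  HGraph.ofEdges r V ((Finset.powersetCard r V).filter
    fun e => ∀ u ∈ e, ∀ v ∈ e, u % ℓ = v % ℓ → u = v)

/-- The `r`-graph on `V₁ ∪ V₂` whose edges are all `r`-sets meeting both parts. -/
def crossOn (r : ℕ) (V₁ V₂ : Finset ℕ) : HGraph r :=
  HGraph.ofEdges r (V₁ ∪ V₂) ((Finset.powersetCard r (V₁ ∪ V₂)).filter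
    fun e => (e ∩ V₁).Nonempty ∧ (e ∩ V₂).Nonempty)

/-- The `r`-graph on `V₁ ∪ V₂` whose edges are all `r`-sets meeting `V₁` in an odd
number of vertices. -/
def oddCross (r : ℕ) (V₁ V₂ : Finset ℕ) : HGraph r :=
  HGraph.ofEdges r (V₁ ∪ V₂) ((Finset.powersetCard r (V₁ ∪ V₂)).filter
    fun e => Odd (e ∩ V₁).card)

/-- The Fano plane. -/
def fano : HGraph 3 :=
  HGraph.ofEdges 3 (Finset.Icc 1 7)
    {({1,2,3} : Finset ℕ), {3,4,5}, {5,6,1}, {1,7,4}, {2,7,5}, {3,7,6}, {2,4,6}}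

/-- The generalized triangle `𝕋_r`, with edges `{1,…,r}`, `{1,…,r−1,r+1}` and
`{r,…,2r−1}`. -/
def genTri (r : ℕ) : HGraph r :=
  HGraph.ofEdges r (Finset.Icc 1 (2*r - 1))
    {Finset.Icc 1 r, Finset.Icc 1 (r-1) ∪ {r+1}, Finset.Icc r (2*r - 1)}

/-- `G` is a blowup of the `r`-graph `W` (viewing `W` as a pattern). -/
def IsBlowupOf {r : ℕ} (W G : HGraph r) : Prop :=
  ∃ part : ℕ → ℕ, (∀ v ∈ G.verts, part v ∈ W.verts) ∧
    ∀ e : Finset ℕ, e ∈ G.edges ↔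
      (e ⊆ G.verts ∧ e.card = r ∧ ∃ f ∈ W.edges, Multiset.map part e.val = f.val)

/-- The expansion `H^F` of an `r`-graph `F`: for every pair of vertices not covered
by an edge of `F`, add an edge consisting of this pair plus `r−2` new vertices,
these sets of new vertices being pairwise disjoint. -/
def HGraph.expansion {r : ℕ} (F : HGraph r) : HGraph r :=
  HGraph.ofEdges r
    (F.verts ∪ (((F.verts ×ˢ F.verts).filter fun p =>
        p.1 < p.2 ∧ ∀ e ∈ F.edges, ¬ (p.1 ∈ e ∧ p.2 ∈ e)).biUnion fun p =>
      (Finset.range (r-2)).image fun s =>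
        (F.verts.sup id + 1) + (p.1 * (F.verts.sup id + 1) + p.2) * r + s))
    (F.edges ∪ (((F.verts ×ˢ F.verts).filter fun p =>
        p.1 < p.2 ∧ ∀ e ∈ F.edges, ¬ (p.1 ∈ e ∧ p.2 ∈ e)).image fun p =>
      insert p.1 (insert p.2 ((Finset.range (r-2)).image fun s =>
        (F.verts.sup id + 1) + (p.1 * (F.verts.sup id + 1) + p.2) * r + s))))

/-- A `2`-graph is a tree on `k` vertices: `k` vertices, `k−1` edges, connected. -/
def IsTreeGraph (k : ℕ) (T : HGraph 2) : Prop :=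
  T.verts.card = k ∧ T.edges.card = k - 1 ∧
  ∀ S : Finset ℕ, S ⊆ T.verts → S.Nonempty → S ≠ T.verts →
    ∃ e ∈ T.edges, (e ∩ S).Nonempty ∧ (e \ S).Nonempty

/-- `T` satisfies the Erdős–Sós property for `k`: every graph with average degree
greater than `k−2` contains `T`. -/
def ErdosSos (k : ℕ) (T : HGraph 2) : Prop :=
  ∀ G : HGraph 2, ((k : ℝ) - 2) * (G.verts.card : ℝ) < 2 * (G.edges.card : ℝ) →
    T.IsCopyIn G

/-- The `(r−2)`-expansion `Exp(T)` of a `2`-graph `T`: enlarge every edge by one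
common fixed set of `r−2` new vertices. -/
def expTree (r : ℕ) (T : HGraph 2) : HGraph r :=
  HGraph.ofEdges r
    (T.verts ∪ ((Finset.range (r-2)).image fun s => T.verts.sup id + 1 + s))
    (T.edges.image fun e =>
      e ∪ ((Finset.range (r-2)).image fun s => T.verts.sup id + 1 + s))

/-- The chromatic number of a `2`-graph. -/
noncomputable def chrom (F : HGraph 2) : ℕ :=
  sInf {k | ∃ c : ℕ → ℕ, (∀ v ∈ F.verts, c v < k) ∧
    ∀ e ∈ F.edges, ∀ u ∈ e, ∀ v ∈ e, u ≠ v → c u ≠ c v}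

/-- A graph is edge-critical if deleting some edge lowers its chromatic number. -/
def EdgeCritical (F : HGraph 2) : Prop :=
  ∃ e ∈ F.edges, chrom (HGraph.ofEdges 2 F.verts (F.edges.erase e)) < chrom F

/-- `H` is semibipartite: the vertex set splits into `V₁ ∪ V₂` so that every edge
has exactly one vertex in `V₁`. -/
def Semibipartite (r : ℕ) (H : HGraph r) : Prop :=
  ∃ V₁ ⊆ H.verts, ∀ e ∈ H.edges, (e ∩ V₁).card = 1

/-- `H` is a `K_ℓ^r`-subconstruction, i.e. an `ℓ`-partite `r`-graph. -/
def IsKlSub (r ℓ : ℕ) (H : HGraph r) : Prop :=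
  ∃ f : ℕ → ℕ, (∀ v ∈ H.verts, f v < ℓ) ∧
    ∀ e ∈ H.edges, ∀ u ∈ e, ∀ v ∈ e, f u = f v → u = v

/-- The Lagrangian `λ(W)` of an `r`-graph `W`, viewing `W` as a pattern. -/
noncomputable def hgLagrangian (r : ℕ) (W : HGraph r) : ℝ :=
  limUnder atTop fun n : ℕ =>
    ((sSup {m | ∃ G : HGraph r, IsBlowupOf W G ∧ G.verts.card = n ∧ G.edges.card = m} : ℕ) : ℝ)
      / (n.choose r : ℝ)

/-- The `r`-graph `B(r,ℓ+1)`. -/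
def BGraph (r ℓ : ℕ) : HGraph r :=
  HGraph.ofEdges r (Finset.Icc 1 (ℓ+1))
    (insert (Finset.Icc 1 r)
      ((Finset.powersetCard r (Finset.Icc 2 (ℓ+1))).filter
        fun e => (e ∩ Finset.Icc 2 r).card ≤ 1))

/-- The `r`-uniform matching of size two, `M_2^r`. -/
def matching2 (r : ℕ) : HGraph r :=
  HGraph.ofEdges r (Finset.Icc 1 (2*r)) {Finset.Icc 1 r, Finset.Icc (r+1) (2*r)}

/-- The expanded triangle `𝓒_3^{2r}`. -/
def expandedTriangle (r : ℕ) : HGraph (2*r) :=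
  HGraph.ofEdges (2*r) (Finset.Icc 1 (3*r))
    {Finset.Icc 1 (2*r), Finset.Icc (r+1) (3*r), Finset.Icc 1 r ∪ Finset.Icc (2*r+1) (3*r)}

/-- The `4`-graph `𝔽_{4,3}`. -/
def F43 : HGraph 4 :=
  HGraph.ofEdges 4 (Finset.Icc 1 7)
    {({1,2,3,4} : Finset ℕ), {1,2,3,5}, {1,2,3,6}, {1,2,3,7}, {4,5,6,7}}

/-- The `3`-graph `𝔽_{3,2}`. -/
def F32 : HGraph 3 :=
  HGraph.ofEdges 3 (Finset.Icc 1 5)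
    {({1,2,3} : Finset ℕ), {1,2,4}, {1,2,5}, {3,4,5}}

/-- `H` contains pairwise vertex-disjoint copies of `F i`, `ts i` many of each. -/
def HasMixedMatching (r k : ℕ) (F : Fin k → HGraph r) (ts : Fin k → ℕ)
    (H : HGraph r) : Prop :=
  ∃ S : (i : Fin k) → Fin (ts i) → Finset ℕ,
    (∀ i j, S i j ⊆ H.verts ∧ (S i j).card = (F i).verts.card) ∧
    (∀ p q : Σ i : Fin k, Fin (ts i), p ≠ q → Disjoint (S p.1 p.2) (S q.1 q.2)) ∧
    ∀ i j, (F i).IsCopyIn (H.induce (S i j))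

/-- `ex(n, ⊔ᵢ tᵢ Fᵢ)`. -/
noncomputable def exMixedN (r k : ℕ) (F : Fin k → HGraph r) (ts : Fin k → ℕ)
    (n : ℕ) : ℕ :=
  sSup {m | ∃ H : HGraph r, H.verts.card = n ∧ ¬ HasMixedMatching r k F ts H ∧
    H.edges.card = m}

/-- `ex(n, {F₁,…,F_k})`. -/
noncomputable def exFamN (r k : ℕ) (F : Fin k → HGraph r) (n : ℕ) : ℕ :=
  sSup {m | ∃ H : HGraph r, H.verts.card = n ∧ (∀ i, ¬ (F i).IsCopyIn H) ∧
    H.edges.card = m}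

/-!
Smoothness: deleting a vertex of minimum degree from an extremal `r`-graph bounds `δ(n, F)` from
above, and cloning a vertex of maximum degree bounds it from below, because an extremal `r`-graph
is a `P`-construction and cloning keeps it a `P`-subconstruction, hence `F`-free.

Boundedness: an `F`-free `r`-graph with almost `ex(n, F)` edges has few vertices of degree well
below `π C(n - 1, r - 1)`, since deleting many of them would leave more than
`ex(n', F) ≈ π C(n', r)` edges on the `n'` remaining vertices. What is left after deleting them is
a `P`-subconstruction by degree-stability. A vertex of degree well above `π C(n - 1, r - 1)`
survives, and cloning it `K = Θ(n)` times would produce an `F`-free `r`-graph with too many edges.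
-/

namespace HGraph

section Basic

variable {r : ℕ} {F G H : HGraph r} {S : Finset ℕ} {v : ℕ}

theorem IsCopyIn.mono (h : F.IsCopyIn G) (hv : G.verts ⊆ H.verts) (he : G.edges ⊆ H.edges) :
    F.IsCopyIn H := by
  obtain ⟨f, hinj, hfv, hfe⟩ := h
  exact ⟨f, hinj, fun v hvF => hv (hfv v hvF), fun e heF => he (hfe e heF)⟩

theorem edges_subset_powersetCard (H : HGraph r) : H.edges ⊆ H.verts.powersetCard r :=
  fun e he => Finset.mem_powersetCard.2 ⟨H.edges_sub e he, H.edges_card e he⟩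

theorem card_edges_le_choose (H : HGraph r) : H.edges.card ≤ H.verts.card.choose r := by
  simpa only [Finset.card_powersetCard] using Finset.card_le_card H.edges_subset_powersetCard

theorem isCopyIn_of_edges_eq_powersetCard (hH : H.edges = H.verts.powersetCard r)
    (hFH : F.verts.card ≤ H.verts.card) : F.IsCopyIn H := by
  obtain ⟨f, hmaps, hinj⟩ := F.verts.finite_toSet.exists_injOn_of_encard_le
    (t := (H.verts : Set ℕ)) (by simpa only [Set.encard_coe_eq_coe_finsetCard, Nat.cast_le])
  refine ⟨f, hinj, hmaps, fun e he => ?_⟩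
  rw [hH, Finset.mem_powersetCard, Finset.image_subset_iff,
    Finset.card_image_of_injOn (hinj.mono (F.edges_sub e he)), F.edges_card e he]
  exact ⟨fun v hv => hmaps (F.edges_sub e he hv), rfl⟩

theorem card_edges_lt_choose (hF : ¬F.IsCopyIn H) (hFH : F.verts.card ≤ H.verts.card) :
    H.edges.card < H.verts.card.choose r := by
  refine H.card_edges_le_choose.lt_of_ne fun hcard => hF ?_
  refine isCopyIn_of_edges_eq_powersetCard (Finset.eq_of_subset_of_card_le
    H.edges_subset_powersetCard ?_) hFH
  rw [Finset.card_powersetCard, hcard]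

theorem isCopyIn_of_verts_eq_empty (hr : r ≠ 0) (hF : F.verts = ∅) (H : HGraph r) :
    F.IsCopyIn H := by
  refine ⟨id, by simp [hF], by simp [hF], fun e he => absurd (F.edges_card e he) ?_⟩
  have he₀ : e = ∅ := Finset.subset_empty.1 (hF ▸ F.edges_sub e he)
  rw [he₀, Finset.card_empty]
  exact hr.symm

theorem deg_eq_zero_of_uniformity_zero (H : HGraph 0) (v : ℕ) : H.deg v = 0 := by
  refine Finset.card_eq_zero.2 (Finset.filter_eq_empty_iff.2 fun e he hve => ?_)
  exact Finset.notMem_empty v (Finset.card_eq_zero.1 (H.edges_card e he) ▸ hve)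

theorem deg_mono (he : G.edges ⊆ H.edges) (v : ℕ) : G.deg v ≤ H.deg v :=
  Finset.card_le_card (Finset.filter_subset_filter _ he)

theorem sum_deg (H : HGraph r) : ∑ v ∈ H.verts, H.deg v = r * H.edges.card := by
  calc ∑ v ∈ H.verts, H.deg v = ∑ e ∈ H.edges, (H.verts.bipartiteBelow (· ∈ ·) e).card :=
        Finset.sum_card_bipartiteAbove_eq_sum_card_bipartiteBelow _
    _ = ∑ _e ∈ H.edges, r := Finset.sum_congr rfl fun e he => by
        rw [Finset.bipartiteBelow, Finset.filter_mem_eq_inter,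
          Finset.inter_eq_right.2 (H.edges_sub e he), H.edges_card e he]
    _ = r * H.edges.card := by rw [Finset.sum_const, smul_eq_mul, mul_comm]

theorem exists_card_mul_deg_le (hV : H.verts.Nonempty) :
    ∃ v ∈ H.verts, H.verts.card * H.deg v ≤ r * H.edges.card := by
  refine Finset.exists_le_of_sum_le hV ?_
  rw [← Finset.mul_sum, sum_deg, Finset.sum_const, smul_eq_mul]

theorem exists_le_card_mul_deg (hV : H.verts.Nonempty) :
    ∃ v ∈ H.verts, r * H.edges.card ≤ H.verts.card * H.deg v := by
  refine Finset.exists_le_of_sum_le hV ?_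
  rw [← Finset.mul_sum H.verts H.deg, sum_deg, Finset.sum_const, smul_eq_mul]

theorem le_minDeg (hV : H.verts.Nonempty) {x : ℝ} (hx : ∀ v ∈ H.verts, x ≤ H.deg v) :
    x ≤ H.minDeg := by
  obtain ⟨v, hv, hmin⟩ := H.verts.exists_mem_eq_inf' hV H.deg
  rw [minDeg, dif_pos hV, hmin]
  exact hx v hv

theorem maxDeg_le {x : ℝ} (hx₀ : 0 ≤ x) (hx : ∀ v ∈ H.verts, H.deg v ≤ x) : H.maxDeg ≤ x :=
  (Nat.le_floor_iff hx₀).1 (Finset.sup_le fun v hv => Nat.le_floor (hx v hv))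

end Basic

section Induce

variable {r : ℕ} {F H : HGraph r} {S : Finset ℕ} {v : ℕ}

theorem mem_edges_induce {e : Finset ℕ} : e ∈ (H.induce S).edges ↔ e ∈ H.edges ∧ e ⊆ S := by
  simp only [induce, ofEdges, Finset.mem_filter, Finset.subset_inter_iff]
  exact ⟨fun h => h.1, fun h => ⟨h, ⟨H.edges_sub e h.1, h.2⟩, H.edges_card e h.1⟩⟩

theorem edges_induce_subset : (H.induce S).edges ⊆ H.edges :=
  fun _ he => (mem_edges_induce.1 he).1

theorem not_isCopyIn_induce (hF : ¬F.IsCopyIn H) : ¬F.IsCopyIn (H.induce S) :=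
  mt (fun h => h.mono Finset.inter_subset_left edges_induce_subset) hF

theorem card_verts_induce_add : (H.induce S).verts.card + (H.verts \ S).card = H.verts.card :=
  Finset.card_inter_add_card_sdiff H.verts S

theorem card_edges_le_card_edges_induce_add (H : HGraph r) (S : Finset ℕ) :
    H.edges.card ≤ (H.induce S).edges.card + ∑ u ∈ H.verts \ S, H.deg u := by
  have hcover : H.edges ⊆
      (H.induce S).edges ∪ (H.verts \ S).biUnion fun u => H.edges.filter (u ∈ ·) := by
    intro e he
    by_cases heS : e ⊆ S
    · exact Finset.mem_union_left _ (mem_edges_induce.2 ⟨he, heS⟩)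
    · obtain ⟨u, hue, huS⟩ := Finset.not_subset.1 heS
      exact Finset.mem_union_right _ (Finset.mem_biUnion.2
        ⟨u, Finset.mem_sdiff.2 ⟨H.edges_sub e he hue, huS⟩, Finset.mem_filter.2 ⟨he, hue⟩⟩)
  calc H.edges.card ≤ _ := Finset.card_le_card hcover
    _ ≤ _ := Finset.card_union_le _ _
    _ ≤ _ := Nat.add_le_add_left Finset.card_biUnion_le _

end Induce

section Link

variable {r : ℕ} {H : HGraph r} {S : Finset ℕ} {v : ℕ}

/-- The link of `v` in `H`: the `(r - 1)`-graph on the other vertices whose edges are the sets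
completed by `v` to an edge of `H`. It turns degrees into edge counts and codegrees into degrees. -/
def link (H : HGraph r) (v : ℕ) : HGraph (r - 1) where
  verts := H.verts.erase v
  edges := (H.edges.filter (v ∈ ·)).image (·.erase v)
  edges_sub := by
    simp only [Finset.forall_mem_image, Finset.mem_filter]
    exact fun e he => Finset.erase_subset_erase v (H.edges_sub e he.1)
  edges_card := by
    simp only [Finset.forall_mem_image, Finset.mem_filter]
    exact fun e he => by rw [Finset.card_erase_of_mem he.2, H.edges_card e he.1]

theorem card_edges_link (H : HGraph r) (v : ℕ) : (H.link v).edges.card = H.deg v :=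
  Finset.card_image_of_injOn ((Finset.erase_injOn' v).mono fun _ he => (Finset.mem_filter.1 he).2)

theorem card_verts_link (hv : v ∈ H.verts) : (H.link v).verts.card = H.verts.card - 1 :=
  Finset.card_erase_of_mem hv

theorem deg_le_choose (hv : v ∈ H.verts) : H.deg v ≤ (H.verts.card - 1).choose (r - 1) := by
  rw [← card_edges_link, ← card_verts_link hv]
  exact (H.link v).card_edges_le_choose

theorem card_edges_le_card_edges_induce_add_mul (H : HGraph r) (S : Finset ℕ) :
    H.edges.card ≤ (H.induce S).edges.card +
      (H.verts \ S).card * (H.verts.card - 1).choose (r - 1) :=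
  (card_edges_le_card_edges_induce_add H S).trans (Nat.add_le_add_left
    (Finset.sum_le_card_nsmul _ _ _ fun _ hu => deg_le_choose (Finset.sdiff_subset hu)) _)

theorem card_mul_deg_le (hv : v ∈ H.verts) :
    H.verts.card * H.deg v ≤ r * H.verts.card.choose r := by
  obtain _ | k := r
  · rw [deg_eq_zero_of_uniformity_zero, mul_zero]
    exact Nat.zero_le _
  · calc H.verts.card * H.deg v ≤ H.verts.card * (H.verts.card - 1).choose k :=
          Nat.mul_le_mul_left _ (deg_le_choose hv)
      _ = (k + 1) * H.verts.card.choose (k + 1) := by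
          obtain ⟨n, hn⟩ := Nat.exists_eq_add_one.2 (Finset.card_pos.2 ⟨v, hv⟩)
          rw [hn, Nat.add_sub_cancel, Nat.add_one_mul_choose_eq, mul_comm]

theorem deg_le_deg_induce_add (hvS : v ∈ S) :
    H.deg v ≤ (H.induce S).deg v + ∑ u ∈ (H.link v).verts \ S, (H.link v).deg u := by
  have hlink : ((H.link v).induce S).edges ⊆ ((H.induce S).link v).edges := by
    intro e he
    obtain ⟨he, heS⟩ := mem_edges_induce.1 he
    obtain ⟨f, hf, rfl⟩ := Finset.mem_image.1 he
    obtain ⟨hfH, hvf⟩ := Finset.mem_filter.1 hf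
    refine Finset.mem_image_of_mem _ (Finset.mem_filter.2 ⟨mem_edges_induce.2 ⟨hfH, ?_⟩, hvf⟩)
    rw [← Finset.insert_erase hvf]
    exact Finset.insert_subset hvS heS
  rw [← card_edges_link, ← card_edges_link]
  exact (card_edges_le_card_edges_induce_add _ S).trans
    (Nat.add_le_add_right (Finset.card_le_card hlink) _)

theorem mul_deg_le_mul_deg_induce_add (hv : v ∈ H.verts) (hvS : v ∈ S) :
    (H.verts.card - 1) * H.deg v ≤ (H.verts.card - 1) * (H.induce S).deg v +
      (H.verts \ S).card * ((r - 1) * (H.verts.card - 1).choose (r - 1)) := by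
  have hcodeg : ∀ u ∈ (H.link v).verts \ S, (H.verts.card - 1) * (H.link v).deg u ≤
      (r - 1) * (H.verts.card - 1).choose (r - 1) := by
    intro u hu
    rw [← card_verts_link hv]
    exact card_mul_deg_le (Finset.sdiff_subset hu)
  calc (H.verts.card - 1) * H.deg v
      ≤ (H.verts.card - 1) * (H.induce S).deg v +
          ∑ u ∈ (H.link v).verts \ S, (H.verts.card - 1) * (H.link v).deg u := by
        rw [← Finset.mul_sum, ← mul_add]
        exact Nat.mul_le_mul_left _ (deg_le_deg_induce_add hvS)
    _ ≤ _ := Nat.add_le_add_left ((Finset.sum_le_card_nsmul _ _ _ hcodeg).trans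
        (Nat.mul_le_mul_right _ (Finset.card_le_card
          (Finset.sdiff_subset_sdiff (Finset.erase_subset v _) le_rfl)))) _

end Link

end HGraph

section Clone

namespace HGraph

variable {r : ℕ} {H : HGraph r} {v w : ℕ}

/-- `H` with a new vertex `w` that duplicates `v`: the link of `w` is that of `v`, and no edge
contains both. -/
def clone (H : HGraph r) (v w : ℕ) (hw : w ∉ H.verts) : HGraph r where
  verts := insert w H.verts
  edges := H.edges ∪ (H.edges.filter (v ∈ ·)).image fun e => insert w (e.erase v)
  edges_sub := by
    simp only [Finset.forall_mem_union, Finset.forall_mem_image, Finset.mem_filter]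
    exact ⟨fun e he => (H.edges_sub e he).trans (Finset.subset_insert _ _), fun e he =>
      Finset.insert_subset_insert _ ((Finset.erase_subset _ _).trans (H.edges_sub e he.1))⟩
  edges_card := by
    simp only [Finset.forall_mem_union, Finset.forall_mem_image, Finset.mem_filter]
    refine ⟨H.edges_card, fun e he => ?_⟩
    rw [Finset.card_insert_of_notMem fun h => hw (H.edges_sub e he.1 (Finset.mem_of_mem_erase h)),
      Finset.card_erase_add_one he.2, H.edges_card e he.1]

theorem notMem_of_mem_edges (hw : w ∉ H.verts) {e : Finset ℕ} (he : e ∈ H.edges) : w ∉ e :=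
  fun h => hw (H.edges_sub e he h)

theorem card_verts_clone (hw : w ∉ H.verts) : (H.clone v w hw).verts.card = H.verts.card + 1 :=
  Finset.card_insert_of_notMem hw

theorem card_edges_clone (hw : w ∉ H.verts) :
    (H.clone v w hw).edges.card = H.edges.card + H.deg v := by
  have hdisj : Disjoint H.edges
      ((H.edges.filter (v ∈ ·)).image fun e => insert w (e.erase v)) := by
    simp only [Finset.disjoint_right, Finset.forall_mem_image]
    exact fun e _ he => notMem_of_mem_edges hw he (Finset.mem_insert_self _ _)
  have hinj : Set.InjOn (fun e : Finset ℕ => insert w (e.erase v)) ↑(H.edges.filter (v ∈ ·)) := by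
    intro e he e' he' h
    obtain ⟨heH, hve⟩ := Finset.mem_filter.1 he
    obtain ⟨heH', hve'⟩ := Finset.mem_filter.1 he'
    refine Finset.erase_injOn' v hve hve' ?_
    have h := congrArg (·.erase w) h
    rwa [Finset.erase_insert fun h => notMem_of_mem_edges hw heH (Finset.mem_of_mem_erase h),
      Finset.erase_insert fun h => notMem_of_mem_edges hw heH' (Finset.mem_of_mem_erase h)] at h
  rw [clone, Finset.card_union_of_disjoint hdisj, Finset.card_image_of_injOn hinj, deg]

theorem deg_le_deg_clone (hw : w ∉ H.verts) : H.deg v ≤ (H.clone v w hw).deg v :=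
  deg_mono Finset.subset_union_left v

end HGraph

namespace Pattern

variable {r : ℕ} {P : Pattern r} {F H : HGraph r} {v w : ℕ}

theorem IsConstruction.isSubconstruction (hH : P.IsConstruction H) : P.IsSubconstruction H :=
  ⟨H, hH, subset_rfl, subset_rfl⟩

theorem IsSubconstruction.not_isCopyIn (hFP : ∀ H : HGraph r, P.IsConstruction H → ¬F.IsCopyIn H)
    (hH : P.IsSubconstruction H) : ¬F.IsCopyIn H := by
  obtain ⟨G, hG, hv, he⟩ := hH
  exact fun h => hFP G hG (h.mono hv he)

theorem isSubconstruction_iff : P.IsSubconstruction H ↔ ∃ part : ℕ → ℕ,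
    (∀ v ∈ H.verts, part v ∈ P.idx) ∧ ∀ e ∈ H.edges, e.val.map part ∈ P.mE := by
  constructor
  · rintro ⟨G, ⟨part, hidx, hedges⟩, hv, he⟩
    exact ⟨part, fun v h => hidx v (hv h), fun e h => ((hedges e).1 (he h)).2.2⟩
  · rintro ⟨part, hidx, hedges⟩
    let G := HGraph.ofEdges r H.verts
      ((H.verts.powersetCard r).filter fun e => e.val.map part ∈ P.mE)
    have hG (e : Finset ℕ) : e ∈ G.edges ↔ e ⊆ H.verts ∧ e.card = r ∧ e.val.map part ∈ P.mE := by
      simp only [G, HGraph.ofEdges, Finset.mem_filter, Finset.mem_powersetCard]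
      tauto
    exact ⟨G, ⟨part, hidx, hG⟩, subset_rfl, fun e he =>
      (hG e).2 ⟨H.edges_sub e he, H.edges_card e he, hedges e he⟩⟩

theorem IsSubconstruction.clone (hH : P.IsSubconstruction H) (hv : v ∈ H.verts)
    (hw : w ∉ H.verts) : P.IsSubconstruction (H.clone v w hw) := by
  obtain ⟨part, hidx, hedges⟩ := isSubconstruction_iff.1 hH
  have hold {e : Finset ℕ} (hwe : w ∉ e) :
      e.val.map (Function.update part w (part v)) = e.val.map part :=
    Multiset.map_congr rfl fun x hx => Function.update_of_ne (ne_of_mem_of_not_mem hx hwe) _ _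
  refine isSubconstruction_iff.2 ⟨Function.update part w (part v), ?_, ?_⟩ <;>
    simp only [HGraph.clone, Finset.forall_mem_insert, Finset.forall_mem_union,
      Finset.forall_mem_image, Finset.mem_filter]
  · rw [Function.update_self]
    refine ⟨hidx v hv, fun x hx => ?_⟩
    rw [Function.update_of_ne (ne_of_mem_of_not_mem hx hw)]
    exact hidx x hx
  · refine ⟨fun e he => hold (HGraph.notMem_of_mem_edges hw he) ▸ hedges e he, fun e he => ?_⟩
    have hwe : w ∉ e.erase v :=
      fun h => HGraph.notMem_of_mem_edges hw he.1 (Finset.mem_of_mem_erase h)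
    rw [Finset.insert_val_of_notMem hwe, Multiset.map_cons, Function.update_self, hold hwe,
      ← Multiset.map_cons, ← Finset.insert_val_of_notMem (Finset.notMem_erase v e),
      Finset.insert_erase he.2]
    exact hedges e he.1

theorem IsSubconstruction.exists_clones (hH : P.IsSubconstruction H) (hv : v ∈ H.verts) (K : ℕ) :
    ∃ G : HGraph r, P.IsSubconstruction G ∧ v ∈ G.verts ∧ G.verts.card = H.verts.card + K ∧
      H.edges.card + K * H.deg v ≤ G.edges.card ∧ H.deg v ≤ G.deg v := by
  induction K with
  | zero => exact ⟨H, hH, hv, rfl, by rw [zero_mul, add_zero], le_rfl⟩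
  | succ K ih =>
    obtain ⟨G, hG, hvG, hverts, hedges, hdeg⟩ := ih
    obtain ⟨w, hw⟩ := Infinite.exists_notMem_finset G.verts
    refine ⟨G.clone v w hw, hG.clone hvG hw, Finset.mem_insert_of_mem hvG, ?_, ?_,
      hdeg.trans (HGraph.deg_le_deg_clone hw)⟩
    · rw [HGraph.card_verts_clone, hverts, add_assoc]
    · rw [HGraph.card_edges_clone, Nat.succ_mul, ← add_assoc]
      exact Nat.add_le_add hedges hdeg

end Pattern

end Clone

section TuranNumber

open HGraph

variable {r n : ℕ} {F H : HGraph r} {P : Pattern r} {v : ℕ}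

theorem exN_le_choose (r n : ℕ) (F : HGraph r) : exN r n F ≤ n.choose r := by
  refine csSup_le' ?_
  rintro _ ⟨H, rfl, -, rfl⟩
  exact H.card_edges_le_choose

theorem card_edges_le_exN (hF : ¬F.IsCopyIn H) : H.edges.card ≤ exN r H.verts.card F := by
  refine le_csSup ⟨H.verts.card.choose r, ?_⟩ ⟨H, rfl, hF, rfl⟩
  rintro _ ⟨G, hG, -, rfl⟩
  exact hG ▸ G.card_edges_le_choose

theorem exN_eq_zero_or_exists_isExtremalFree (r n : ℕ) (F : HGraph r) :
    exN r n F = 0 ∨ ∃ H, IsExtremalFree r n F H := by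
  rw [exN]
  rcases Set.eq_empty_or_nonempty
    {m | ∃ H : HGraph r, H.verts.card = n ∧ ¬F.IsCopyIn H ∧ H.edges.card = m} with h | h
  · exact .inl (by rw [h, csSup_empty, Nat.bot_eq_zero])
  · refine .inr (Nat.sSup_mem h ⟨n.choose r, ?_⟩)
    rintro _ ⟨H, rfl, -, rfl⟩
    exact H.card_edges_le_choose

theorem card_edges_le_exN_add_sum_deg (hF : ¬F.IsCopyIn H) {U : Finset ℕ} (hU : U ⊆ H.verts) :
    H.edges.card ≤ exN r (H.verts.card - U.card) F + ∑ u ∈ U, H.deg u := by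
  have hverts : (H.induce (H.verts \ U)).verts.card = H.verts.card - U.card := by
    rw [← Finset.card_sdiff_of_subset hU]
    exact congrArg Finset.card (Finset.inter_eq_right.2 Finset.sdiff_subset)
  have hsum := card_edges_le_card_edges_induce_add H (H.verts \ U)
  rw [Finset.sdiff_sdiff_eq_self hU] at hsum
  exact hsum.trans (Nat.add_le_add_right (hverts ▸ card_edges_le_exN (not_isCopyIn_induce hF)) _)

theorem card_edges_le_exN_add_mul (hF : ¬F.IsCopyIn H) {U : Finset ℕ} (hU : U ⊆ H.verts) {D : ℝ}
    (hD : ∀ u ∈ U, H.deg u ≤ D) :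
    (H.edges.card : ℝ) ≤ exN r (H.verts.card - U.card) F + U.card * D := by
  have hsum : ∑ u ∈ U, (H.deg u : ℝ) ≤ U.card * D :=
    nsmul_eq_mul U.card D ▸ Finset.sum_le_card_nsmul _ _ _ hD
  refine le_trans ?_ (add_le_add_right hsum _)
  exact_mod_cast card_edges_le_exN_add_sum_deg hF hU

theorem card_edges_le_exN_add_deg (hF : ¬F.IsCopyIn H) (hv : v ∈ H.verts) :
    H.edges.card ≤ exN r (H.verts.card - 1) F + H.deg v := by
  simpa only [Finset.card_singleton, Finset.sum_singleton] using
    card_edges_le_exN_add_sum_deg hF (Finset.singleton_subset_iff.2 hv)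

theorem exN_succ_le (r n : ℕ) (F : HGraph r) :
    exN r (n + 1) F ≤ exN r n F + n.choose (r - 1) := by
  obtain h | ⟨H, hcard, hF, hex⟩ := exN_eq_zero_or_exists_isExtremalFree r (n + 1) F
  · exact h ▸ Nat.zero_le _
  obtain ⟨v, hv⟩ := Finset.card_pos.1 (hcard ▸ n.succ_pos : 0 < H.verts.card)
  have hdeg := deg_le_choose hv
  have hdel := card_edges_le_exN_add_deg hF hv
  rw [hcard, Nat.add_sub_cancel] at hdeg hdel
  exact hex ▸ hdel.trans (Nat.add_le_add_left hdeg _)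

theorem succ_mul_exN_succ_le (r n : ℕ) (F : HGraph r) :
    (n + 1) * exN r (n + 1) F ≤ (n + 1) * exN r n F + r * exN r (n + 1) F := by
  obtain h | ⟨H, hcard, hF, hex⟩ := exN_eq_zero_or_exists_isExtremalFree r (n + 1) F
  · rw [h, mul_zero]
    exact Nat.zero_le _
  obtain ⟨v, hv, hdeg⟩ :=
    exists_card_mul_deg_le (Finset.card_pos.1 (hcard ▸ n.succ_pos : 0 < H.verts.card))
  have hdel := card_edges_le_exN_add_deg hF hv
  rw [hcard, hex] at hdeg
  rw [hcard, hex, Nat.add_sub_cancel] at hdel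
  calc (n + 1) * exN r (n + 1) F ≤ (n + 1) * (exN r n F + H.deg v) := Nat.mul_le_mul_left _ hdel
    _ ≤ (n + 1) * exN r n F + r * exN r (n + 1) F := by
        rw [mul_add]
        exact Nat.add_le_add_left hdeg _

theorem card_edges_add_mul_deg_le_exN (hFP : ∀ H : HGraph r, P.IsConstruction H → ¬F.IsCopyIn H)
    (hH : P.IsSubconstruction H) (hv : v ∈ H.verts) (K : ℕ) :
    H.edges.card + K * H.deg v ≤ exN r (H.verts.card + K) F := by
  obtain ⟨G, hG, -, hverts, hedges, -⟩ := hH.exists_clones hv K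
  exact hverts ▸ hedges.trans (card_edges_le_exN (hG.not_isCopyIn hFP))

theorem IsTuranPair.succ_mul_exN_add_le (hTP : IsTuranPair r F P) (n : ℕ) :
    (n + 1) * exN r (n + 1) F + r * exN r (n + 1) F ≤ (n + 1) * exN r (n + 2) F := by
  obtain h | ⟨H, hcard, hF, hex⟩ := exN_eq_zero_or_exists_isExtremalFree r (n + 1) F
  · rw [h, mul_zero, mul_zero]
    exact Nat.zero_le _
  obtain ⟨v, hv, hdeg⟩ :=
    exists_le_card_mul_deg (Finset.card_pos.1 (hcard ▸ n.succ_pos : 0 < H.verts.card))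
  have hsub := (hTP.2 H hF (by rw [hex, hcard])).isSubconstruction
  have hclone := card_edges_add_mul_deg_le_exN hTP.1 hsub hv 1
  rw [one_mul, hcard, hex] at hclone
  rw [hcard, hex] at hdeg
  calc (n + 1) * exN r (n + 1) F + r * exN r (n + 1) F
      ≤ (n + 1) * exN r (n + 1) F + (n + 1) * H.deg v := Nat.add_le_add_left hdeg _
    _ = (n + 1) * (exN r (n + 1) F + H.deg v) := (mul_add _ _ _).symm
    _ ≤ (n + 1) * exN r (n + 2) F := Nat.mul_le_mul_left _ hclone

theorem deltaN_sub_dN_le (h : 0 ≤ deltaN r (n + 2) F) :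
    deltaN r (n + 2) F - dN r (n + 1) F ≤ n.choose (r - 2) := by
  have hdel : ((n + 2 : ℝ) * exN r (n + 2) F) ≤
      (n + 2) * exN r (n + 1) F + r * exN r (n + 2) F := by
    exact_mod_cast succ_mul_exN_succ_le r (n + 1) F
  have hcodeg : ((r : ℝ) - 1) * deltaN r (n + 2) F ≤ (n + 1) * n.choose (r - 2) := by
    obtain _ | _ | k := r
    · simp only [Nat.cast_zero, zero_sub, neg_one_mul]
      exact (neg_nonpos.2 h).trans (by positivity)
    · simp only [zero_add, Nat.cast_one, sub_self, zero_mul]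
      positivity
    · have hdelta : deltaN (k + 2) (n + 2) F ≤ (n + 1).choose (k + 1) :=
        sub_le_iff_le_add'.2 (by exact_mod_cast exN_succ_le (k + 2) (n + 1) F)
      have hchoose : ((n : ℝ) + 1) * n.choose k = (n + 1).choose (k + 1) * (k + 1) := by
        exact_mod_cast Nat.add_one_mul_choose_eq n k
      push_cast
      rw [add_sub_cancel_right, hchoose, mul_comm]
      exact mul_le_mul_of_nonneg_right hdelta (by positivity)
  rw [deltaN, show n + 2 - 1 = n + 1 from rfl] at hcodeg ⊢
  rw [dN, sub_le_iff_le_add, ← sub_le_iff_le_add', le_div_iff₀ (by positivity)]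
  push_cast
  linarith

theorem IsTuranPair.dN_le_deltaN (hTP : IsTuranPair r F P) (n : ℕ) :
    dN r (n + 1) F ≤ deltaN r (n + 2) F := by
  have hclone : ((n + 1 : ℝ) * exN r (n + 1) F + r * exN r (n + 1) F) ≤
      (n + 1) * exN r (n + 2) F := by
    exact_mod_cast hTP.succ_mul_exN_add_le n
  rw [deltaN, dN, show n + 2 - 1 = n + 1 from rfl, div_le_iff₀ (by positivity)]
  push_cast
  linarith

theorem smoothAt_one (F : HGraph r) : SmoothAt r 1 F (Nat.choose 0 (r - 2)) := by
  have hchoose : Nat.choose 1 r ≤ Nat.choose 0 (r - 2) := by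
    obtain _ | _ | r := r
    · rfl
    · rfl
    · exact (Nat.choose_eq_zero_of_lt (by omega)).trans_le (Nat.zero_le _)
  have h₀ : (exN r 0 F : ℝ) ≤ Nat.choose 0 (r - 2) := by
    exact_mod_cast (exN_le_choose r 0 F).trans ((Nat.choose_le_succ 0 r).trans hchoose)
  have h₁ : (exN r 1 F : ℝ) ≤ Nat.choose 0 (r - 2) := by
    exact_mod_cast (exN_le_choose r 1 F).trans hchoose
  rw [SmoothAt, deltaN, dN, Nat.sub_self, Nat.cast_zero, div_zero, sub_zero]
  exact abs_sub_le_of_nonneg_of_le (Nat.cast_nonneg _) h₁ (Nat.cast_nonneg _) h₀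

theorem IsTuranPair.smoothAt (hTP : IsTuranPair r F P) (n : ℕ) :
    SmoothAt r n F ((n - 1).choose (r - 2)) := by
  obtain _ | _ | n := n
  · simp [SmoothAt, deltaN, dN]
  · exact smoothAt_one F
  · have hdelta := hTP.dN_le_deltaN n
    have hdN : 0 ≤ dN r (n + 1) F := by rw [dN]; positivity
    rw [SmoothAt, show n + 2 - 1 = n + 1 from rfl, abs_of_nonneg (sub_nonneg.2 hdelta)]
    exact (deltaN_sub_dN_le (hdN.trans hdelta)).trans
      (Nat.cast_le.2 (Nat.choose_le_succ n (r - 2)))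

end TuranNumber

section Density

variable {r n : ℕ} {F : HGraph r} {π : ℝ}

/-- The degree `C(n - 1, r - 1)` of every vertex of the complete `r`-graph on `n` vertices, the
scale in which all degrees below are measured. -/
def completeDeg (r n : ℕ) : ℕ := (n - 1).choose (r - 1)

theorem mul_completeDeg (hr : r ≠ 0) (n : ℕ) : n * completeDeg r n = r * n.choose r := by
  obtain ⟨k, rfl⟩ := Nat.exists_eq_add_one_of_ne_zero hr
  obtain _ | n := n
  · rw [zero_mul, Nat.choose_zero_succ, mul_zero]
  · rw [completeDeg, Nat.add_sub_cancel, Nat.add_sub_cancel, Nat.add_one_mul_choose_eq, mul_comm]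

theorem completeDeg_mono (r : ℕ) : Monotone (completeDeg r) :=
  fun _ _ h => Nat.choose_le_choose _ (Nat.sub_le_sub_right h 1)

section Induce

variable {H : HGraph r} {S : Finset ℕ} {v : ℕ} {ε : ℝ}

open HGraph

theorem HGraph.deg_sub_le_deg_induce (hV : 2 ≤ H.verts.card)
    (hv : v ∈ H.verts) (hvS : v ∈ S) (hS : ((H.verts \ S).card : ℝ) ≤ ε * H.verts.card) :
    H.deg v - 2 * r * ε * completeDeg r H.verts.card ≤ (H.induce S).deg v := by
  set n := H.verts.card
  have hn : (2 : ℝ) ≤ n := Nat.ofNat_le_cast.2 hV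
  have hε : 0 ≤ ε := nonneg_of_mul_nonneg_left ((Nat.cast_nonneg _).trans hS)
    (zero_lt_two.trans_le hn)
  have hr : ((r - 1 : ℕ) : ℝ) ≤ r := Nat.cast_le.2 (Nat.sub_le r 1)
  have hcount : ((n : ℝ) - 1) * H.deg v ≤ (n - 1) * (H.induce S).deg v +
      (H.verts \ S).card * ((r - 1 : ℕ) * completeDeg r n) := by
    rw [← Nat.cast_pred (by omega)]
    exact_mod_cast mul_deg_le_mul_deg_induce_add hv hvS
  have hloss : (H.verts \ S).card * ((r - 1 : ℕ) * (completeDeg r n : ℝ)) ≤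
      (n - 1) * (2 * r * ε * completeDeg r n) := by
    calc (H.verts \ S).card * ((r - 1 : ℕ) * (completeDeg r n : ℝ))
        ≤ ε * n * (r * completeDeg r n) := by gcongr
      _ ≤ ε * (2 * (n - 1)) * (r * completeDeg r n) := by gcongr; linarith
      _ = (n - 1) * (2 * r * ε * completeDeg r n) := by ring
  refine le_of_mul_le_mul_left ?_ (by linarith : (0 : ℝ) < n - 1)
  linarith

theorem HGraph.le_minDeg_induce {x : ℝ} (hV : 2 ≤ H.verts.card)
    (hS : ((H.verts \ S).card : ℝ) ≤ ε * H.verts.card) (hne : (H.induce S).verts.Nonempty)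
    (hdeg : ∀ v ∈ (H.induce S).verts, (x + 2 * r * ε) * completeDeg r H.verts.card ≤ H.deg v) :
    x * completeDeg r (H.induce S).verts.card ≤ (H.induce S).minDeg := by
  refine le_minDeg hne fun v hv => ?_
  obtain ⟨hvV, hvS⟩ := Finset.mem_inter.1 hv
  have hdegS : x * completeDeg r H.verts.card ≤ (H.induce S).deg v := by
    linarith [deg_sub_le_deg_induce hV hvV hvS hS, hdeg v hv]
  obtain hx | hx := le_total 0 x
  · refine le_trans (mul_le_mul_of_nonneg_left (Nat.cast_le.2 ?_) hx) hdegS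
    exact completeDeg_mono r (Finset.card_le_card Finset.inter_subset_left)
  · exact (mul_nonpos_of_nonpos_of_nonneg hx (Nat.cast_nonneg _)).trans (Nat.cast_nonneg _)

end Induce

theorem exN_lt_choose (hF : F.verts.card ≤ n) (hr : r ≤ n) : exN r n F < n.choose r := by
  obtain h | ⟨H, rfl, hFH, hex⟩ := exN_eq_zero_or_exists_isExtremalFree r n F
  · exact h ▸ Nat.choose_pos hr
  · exact hex ▸ HGraph.card_edges_lt_choose hFH hF

theorem antitone_exN_div_choose (r : ℕ) (F : HGraph r) :
    Antitone fun n => (exN r (n + r) F : ℝ) / (n + r).choose r := by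
  refine antitone_nat_of_succ_le fun n => ?_
  have hdel : ((n : ℝ) + 1) * exN r (n + 1 + r) F ≤ (n + r + 1) * exN r (n + r) F := by
    have h := succ_mul_exN_succ_le r (n + r) F
    rw [show n + r + 1 = n + 1 + r by omega] at h
    have h' : ((n + 1 + r : ℕ) : ℝ) * exN r (n + 1 + r) F ≤
        (n + 1 + r : ℕ) * exN r (n + r) F + r * exN r (n + 1 + r) F := by exact_mod_cast h
    push_cast at h'
    linarith
  have hchoose : ((n + r).choose r : ℝ) * (n + r + 1) = (n + 1 + r).choose r * (n + 1) := by
    have h := Nat.choose_mul_succ_eq (n + r) r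
    rw [show n + r + 1 - r = n + 1 by omega, show n + r + 1 = n + 1 + r by omega] at h
    have h' : ((n + r).choose r : ℝ) * ((n + 1 + r : ℕ) : ℝ) =
        (n + 1 + r).choose r * ((n + 1 : ℕ) : ℝ) := by exact_mod_cast h
    push_cast at h'
    linarith
  have hpos (m : ℕ) : (0 : ℝ) < (m + r).choose r :=
    Nat.cast_pos.2 (Nat.choose_pos (Nat.le_add_left r m))
  rw [div_le_div_iff₀ (hpos (n + 1)) (hpos n)]
  refine le_of_mul_le_mul_left ?_ (by positivity : (0 : ℝ) < n + 1)
  nlinarith [mul_le_mul_of_nonneg_right hdel (hpos n).le]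

namespace HasTuranDensity

theorem nonneg (hπ : HasTuranDensity r F π) : 0 ≤ π :=
  ge_of_tendsto' hπ fun _ => by positivity

theorem mul_choose_le_exN (hπ : HasTuranDensity r F π) (n : ℕ) :
    π * n.choose r ≤ exN r n F := by
  obtain hn | hn := lt_or_ge n r
  · rw [Nat.choose_eq_zero_of_lt hn, Nat.cast_zero, mul_zero]
    exact Nat.cast_nonneg _
  · rw [← le_div_iff₀ (Nat.cast_pos.2 (Nat.choose_pos hn))]
    have h := (antitone_exN_div_choose r F).le_of_tendsto ((tendsto_add_atTop_iff_nat r).2 hπ)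
    simpa only [Nat.sub_add_cancel hn] using h (n - r)

theorem lt_one (hπ : HasTuranDensity r F π) : π < 1 := by
  set n := max F.verts.card r
  have hlt := exN_lt_choose (n := n) (le_max_left F.verts.card r) (le_max_right _ _)
  have hpos : (0 : ℝ) < n.choose r := Nat.cast_pos.2 (Nat.choose_pos (le_max_right _ _))
  refine lt_of_mul_lt_mul_right ?_ hpos.le
  rw [one_mul]
  exact (hπ.mul_choose_le_exN n).trans_lt (Nat.cast_lt.2 hlt)

theorem eventually_exN_le (hπ : HasTuranDensity r F π) {κ : ℝ} (hκ : 0 < κ) :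
    ∀ᶠ n in atTop, (exN r n F : ℝ) ≤ (π + κ) * n.choose r := by
  filter_upwards [hπ.eventually_lt_const (lt_add_of_pos_right π hκ), eventually_ge_atTop r]
    with n hn hr
  exact ((div_lt_iff₀ (Nat.cast_pos.2 (Nat.choose_pos hr))).1 hn).le

theorem mul_completeDeg_le_dN (hπ : HasTuranDensity r F π) (hr : r ≠ 0) (hn : n ≠ 0) :
    π * completeDeg r n ≤ dN r n F := by
  have hM : (n : ℝ) * completeDeg r n = r * n.choose r := by exact_mod_cast mul_completeDeg hr n
  rw [dN, le_div_iff₀ (Nat.cast_pos.2 (Nat.pos_of_ne_zero hn))]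
  calc π * completeDeg r n * n = r * (π * n.choose r) := by rw [mul_assoc, mul_comm _ (n : ℝ), hM,
        mul_left_comm]
    _ ≤ r * exN r n F := mul_le_mul_of_nonneg_left (hπ.mul_choose_le_exN n) (Nat.cast_nonneg r)

end HasTuranDensity

theorem exists_one_add_pow_le (r : ℕ) {δ : ℝ} (hδ : 0 < δ) :
    ∃ τ > 0, ∀ t : ℝ, |t| < τ → (1 + t) ^ r ≤ 1 + r * t + δ * |t| := by
  have hderiv : HasDerivAt (fun t : ℝ => (1 + t) ^ r) r 0 := by
    simpa using ((hasDerivAt_id (0 : ℝ)).const_add 1).fun_pow r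
  obtain ⟨τ, hτ, hball⟩ := Metric.eventually_nhds_iff.1 (hderiv.isLittleO.def hδ)
  refine ⟨τ, hτ, fun t ht => ?_⟩
  have h := hball (y := t) (by rwa [Real.dist_eq, sub_zero])
  simp only [add_zero, one_pow, sub_zero, smul_eq_mul, Real.norm_eq_abs] at h
  linarith [le_of_abs_le h, mul_comm t r]

theorem eventually_pow_div_factorial_le (r : ℕ) {κ : ℝ} (hκ : 0 < κ) :
    ∀ᶠ n : ℕ in atTop, (n : ℝ) ^ r / r.factorial ≤ (1 + κ) * n.choose r := by
  obtain ⟨φ, hφ, heq⟩ := (isEquivalent_choose r).symm.exists_eq_mul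
  filter_upwards [heq, hφ.eventually_lt_const (lt_add_of_pos_right 1 hκ)] with n hn hφn
  rw [hn]
  exact mul_le_mul_of_nonneg_right hφn.le (Nat.cast_nonneg _)

theorem exists_eventually_choose_le (r : ℕ) {δ : ℝ} (hδ : 0 < δ) :
    ∃ τ > 0, τ ≤ 1 / 2 ∧ ∀ κ > 0, ∀ᶠ n : ℕ in atTop, ∀ N : ℕ, |(N - n : ℝ) / n| < τ →
      (N.choose r : ℝ) ≤
        (1 + r * ((N - n) / n) + δ * |(N - n : ℝ) / n| + κ) * n.choose r := by
  obtain ⟨τ, hτ, hpow⟩ := exists_one_add_pow_le r hδ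
  refine ⟨min τ (1 / 2), lt_min hτ (by norm_num), min_le_right _ _, fun κ hκ => ?_⟩
  filter_upwards [eventually_pow_div_factorial_le r (by positivity : 0 < κ / 2 ^ r),
    eventually_gt_atTop 0] with n hn hn₀ N hN
  set t : ℝ := (N - n) / n with ht
  have hNt : (N : ℝ) = n * (1 + t) := by
    rw [ht, mul_add, mul_one, mul_div_cancel₀ _ (Nat.cast_ne_zero.2 hn₀.ne'), add_sub_cancel]
  have ht₁ : |t| ≤ 1 / 2 := hN.le.trans (min_le_right _ _)
  have hpow₀ : 0 ≤ (1 + t) ^ r := pow_nonneg (by linarith [neg_le_of_abs_le ht₁]) r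
  have hpow₂ : (1 + t) ^ r ≤ 2 ^ r :=
    pow_le_pow_left₀ (by linarith [neg_le_of_abs_le ht₁]) (by linarith [le_of_abs_le ht₁]) r
  calc (N.choose r : ℝ) ≤ (N : ℝ) ^ r / r.factorial := Nat.choose_le_pow_div r N
    _ = (1 + t) ^ r * ((n : ℝ) ^ r / r.factorial) := by rw [hNt, mul_pow]; ring
    _ ≤ (1 + t) ^ r * ((1 + κ / 2 ^ r) * n.choose r) := mul_le_mul_of_nonneg_left hn hpow₀
    _ = ((1 + t) ^ r + (1 + t) ^ r * (κ / 2 ^ r)) * n.choose r := by ring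
    _ ≤ (1 + r * t + δ * |t| + κ) * n.choose r := by
        gcongr
        · exact hpow t (hN.trans_le (min_le_left _ _))
        · calc (1 + t) ^ r * (κ / 2 ^ r) ≤ 2 ^ r * (κ / 2 ^ r) := by gcongr
            _ = κ := mul_div_cancel₀ κ (by positivity)

theorem HasTuranDensity.exists_eventually_exN_le_add_mul_choose (hπ : HasTuranDensity r F π)
    {δ : ℝ} (hδ : 0 < δ) :
    ∃ τ > 0, τ ≤ 1 / 2 ∧ ∀ κ > 0, ∀ᶠ n : ℕ in atTop, ∀ N : ℕ, |(N - n : ℝ) / n| < τ →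
      (exN r N F : ℝ) ≤
        exN r n F + (π * (r * ((N - n) / n)) + δ * |(N - n : ℝ) / n| + κ) * n.choose r := by
  obtain ⟨τ, hτ, hτ₂, hchoose⟩ := exists_eventually_choose_le r hδ
  refine ⟨τ, hτ, hτ₂, fun κ hκ => ?_⟩
  obtain ⟨n₀, hn₀⟩ := eventually_atTop.1 (hπ.eventually_exN_le (by positivity :
    0 < κ / (2 * (1 + r + δ + κ))))
  filter_upwards [hchoose (κ / 2) (by positivity), eventually_ge_atTop (2 * n₀),
    eventually_gt_atTop 0] with n hn hn₀n hn_pos N hN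
  have hN₀ : n₀ ≤ N := by
    have hnN : -(1 / 2 * n : ℝ) ≤ N - n := by
      rw [← neg_mul, ← le_div_iff₀ (Nat.cast_pos.2 hn_pos)]
      exact (neg_le_neg hτ₂).trans (neg_lt_of_abs_lt hN).le
    have hn₀n : (2 * n₀ : ℝ) ≤ n := by exact_mod_cast hn₀n
    exact_mod_cast (by linarith : (n₀ : ℝ) ≤ N)
  specialize hn N hN
  set t : ℝ := (N - n) / n
  set C : ℝ := ((n.choose r : ℕ) : ℝ)
  have hC : 0 ≤ C := Nat.cast_nonneg _
  have ht : t ≤ 1 ∧ |t| ≤ 1 := by constructor <;> linarith [le_abs_self t]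
  have hcrude : (N.choose r : ℝ) ≤ (1 + r + δ + κ) * C := by
    refine hn.trans (mul_le_mul_of_nonneg_right ?_ hC)
    have hrt : r * t ≤ r := mul_le_of_le_one_right (Nat.cast_nonneg r) ht.1
    have hδt : δ * |t| ≤ δ := mul_le_of_le_one_right hδ.le ht.2
    linarith
  calc (exN r N F : ℝ)
      ≤ (π + κ / (2 * (1 + r + δ + κ))) * N.choose r := hn₀ N hN₀
    _ = π * N.choose r + κ / (2 * (1 + r + δ + κ)) * N.choose r := add_mul _ _ _
    _ ≤ π * ((1 + r * t + δ * |t| + κ / 2) * C) +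
          κ / (2 * (1 + r + δ + κ)) * ((1 + r + δ + κ) * C) := by
        gcongr
        exact hπ.nonneg
    _ = π * C + (π * (r * t) + π * (δ * |t| + κ / 2) + κ / 2) * C := by field_simp; ring
    _ ≤ exN r n F + (π * (r * t) + (δ * |t| + κ / 2) + κ / 2) * C := by
        gcongr
        · exact hπ.mul_choose_le_exN n
        · exact mul_le_of_le_one_left (by positivity) hπ.lt_one.le
    _ = exN r n F + (π * (r * t) + δ * |t| + κ) * C := by ring

theorem HasTuranDensity.exists_eventually_exN_le (hπ : HasTuranDensity r F π) (hr : r ≠ 0)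
    {δ : ℝ} (hδ : 0 < δ) :
    ∃ τ > 0, ∀ κ > 0, ∀ᶠ n : ℕ in atTop, ∀ N : ℕ, |(N - n : ℝ)| < τ * n →
      (exN r N F : ℝ) ≤
        exN r n F + (π * (N - n) + δ * |(N - n : ℝ)| + κ * n) * completeDeg r n := by
  obtain ⟨τ, hτ, -, h⟩ := hπ.exists_eventually_exN_le_add_mul_choose hδ
  refine ⟨τ, hτ, fun κ hκ => ?_⟩
  filter_upwards [h κ hκ, eventually_gt_atTop 0] with n hn hn_pos N hN
  have hn_pos : (0 : ℝ) < n := Nat.cast_pos.2 hn_pos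
  have hM : (n : ℝ) * completeDeg r n = r * n.choose r := by exact_mod_cast mul_completeDeg hr n
  have hC : (n.choose r : ℝ) ≤ n * completeDeg r n :=
    hM ▸ le_mul_of_one_le_left (Nat.cast_nonneg _) (Nat.one_le_cast.2 (Nat.pos_of_ne_zero hr))
  have habs : |(N - n : ℝ) / n| = |(N - n : ℝ)| / n := by rw [abs_div, abs_of_pos hn_pos]
  calc (exN r N F : ℝ)
      ≤ exN r n F + (π * (r * ((N - n) / n)) + δ * |(N - n : ℝ) / n| + κ) * n.choose r :=
        hn N (habs ▸ (div_lt_iff₀ hn_pos).2 hN)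
    _ = exN r n F + (π * ((N - n) / n) * (r * n.choose r) +
          (δ * |(N - n : ℝ) / n| + κ) * n.choose r) := by ring
    _ ≤ exN r n F + (π * ((N - n) / n) * (n * completeDeg r n) +
          (δ * |(N - n : ℝ) / n| + κ) * (n * completeDeg r n)) := by
        rw [hM] at hC ⊢
        gcongr
    _ = exN r n F + (π * (N - n) + δ * |(N - n : ℝ)| + κ * n) * completeDeg r n := by
        rw [habs]
        field_simp
        ring

end Density

section NearExtremal

open HGraph

variable {r : ℕ} {F : HGraph r} {P : Pattern r} {π : ℝ}

/-- `H` is an `F`-free `r`-graph on `n` vertices missing at most `c · n · C(n - 1, r - 1)` of the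
`ex(n, F)` edges; up to the constant, this is `d(H) ≥ d(n, F) - c · C(n - 1, r - 1)`. -/
def IsNearExtremal (r n : ℕ) (F : HGraph r) (c : ℝ) (H : HGraph r) : Prop :=
  H.verts.card = n ∧ ¬F.IsCopyIn H ∧ exN r n F - c * n * completeDeg r n ≤ H.edges.card

theorem IsNearExtremal.mono {n : ℕ} {H : HGraph r} {c c' : ℝ} (hH : IsNearExtremal r n F c H)
    (hc : c ≤ c') : IsNearExtremal r n F c' H := by
  refine ⟨hH.1, hH.2.1, le_trans ?_ hH.2.2⟩
  gcongr

theorem HasTuranDensity.exists_eventually_card_low_deg_le (hπ : HasTuranDensity r F π) (hr : r ≠ 0)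
    {ζ ε : ℝ} (hζ : 0 < ζ) (hε : 0 < ε) :
    ∃ c > 0, ∀ᶠ n in atTop, ∀ H : HGraph r, IsNearExtremal r n F c H →
      ((H.verts.filter fun v => (H.deg v : ℝ) < (π - ζ) * completeDeg r n).card : ℝ) ≤ ε * n := by
  obtain ⟨τ, hτ, hgrowth⟩ := hπ.exists_eventually_exN_le hr (half_pos hζ)
  set ε' : ℝ := min ε (τ / 2)
  have hε' : 0 < ε' := lt_min hε (half_pos hτ)
  refine ⟨ζ * ε' / 8, by positivity, ?_⟩
  filter_upwards [hgrowth (ζ * ε' / 8) (by positivity), eventually_gt_atTop ⌈2 / τ⌉₊,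
    eventually_ge_atTop r] with n hn hnτ hnr H ⟨hcard, hF, hedges⟩
  by_contra! hlow
  have hn_pos : (0 : ℝ) < n := Nat.cast_pos.2 hnτ.bot_lt
  have hnτ : 2 < n * τ := (div_lt_iff₀ hτ).1 (Nat.lt_of_ceil_lt hnτ)
  have hM : (0 : ℝ) < completeDeg r n :=
    Nat.cast_pos.2 (Nat.choose_pos (Nat.sub_le_sub_right hnr 1))
  obtain ⟨U, hU, hUcard⟩ := Finset.exists_subset_card_eq (Nat.ceil_le.2
    ((mul_le_mul_of_nonneg_right (min_le_left ε (τ / 2)) hn_pos.le).trans hlow.le))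
  have hUV : U ⊆ H.verts := hU.trans (Finset.filter_subset _ _)
  have hUn : U.card ≤ n := hcard ▸ Finset.card_le_card hUV
  have hU_ge : ε' * n ≤ U.card := hUcard ▸ Nat.le_ceil _
  have hU_lt : (U.card : ℝ) < τ * n := by
    have hceil := Nat.ceil_lt_add_one (mul_pos hε' hn_pos).le
    have hε'τ := mul_le_mul_of_nonneg_right (min_le_right ε (τ / 2)) hn_pos.le
    rw [hUcard]
    linarith
  have hdel := card_edges_le_exN_add_mul hF hUV fun u hu => (Finset.mem_filter.1 (hU hu)).2.le
  have hgrow := hn (n - U.card)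
  rw [Nat.cast_sub hUn, sub_sub_cancel_left, abs_neg, Nat.abs_cast] at hgrow
  rw [hcard] at hdel
  have hloss : ζ / 2 * U.card * completeDeg r n ≤ ζ / 4 * (ε' * n) * completeDeg r n := by
    linarith [hgrow hU_lt]
  linarith [le_of_mul_le_mul_right hloss hM, mul_pos hζ (mul_pos hε' hn_pos),
    mul_le_mul_of_nonneg_left hU_ge hζ.le]

theorem DegreeStable.exists_eventually_exists_core (hds : DegreeStable r F P π)
    (hπ : HasTuranDensity r F π) (hr : r ≠ 0) {ε : ℝ} (hε : 0 < ε) :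
    ∃ c > 0, ∀ᶠ n in atTop, ∀ H : HGraph r, IsNearExtremal r n F c H →
      ∃ S : Finset ℕ, ((H.verts \ S).card : ℝ) ≤ ε * n ∧ P.IsSubconstruction (H.induce S) ∧
        ∀ v ∈ H.verts, π * completeDeg r n ≤ H.deg v → v ∈ S := by
  obtain ⟨ζ, hζ, n₀, hstable⟩ := hds
  set ε' : ℝ := min ε (min (1 / 2) (ζ / (4 * r)))
  have hε' : 0 < ε' := by positivity
  have hε'_half : ε' ≤ 1 / 2 := (min_le_right _ _).trans (min_le_left _ _)
  have hε'_r : 2 * r * ε' ≤ ζ / 2 := by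
    have h : ε' ≤ ζ / (4 * r) := (min_le_right _ _).trans (min_le_right _ _)
    rw [le_div_iff₀ (by positivity)] at h
    linarith
  obtain ⟨c, hc, hlow⟩ := hπ.exists_eventually_card_low_deg_le hr (half_pos hζ) hε'
  refine ⟨c, hc, ?_⟩
  filter_upwards [hlow, eventually_ge_atTop (2 * n₀), eventually_ge_atTop 2]
    with n hn hn₀ hn₂ H hH
  have hcard := hH.1
  set S := H.verts.filter fun v => (π - ζ / 2) * completeDeg r n ≤ H.deg v with hSdef
  have hSV : S ⊆ H.verts := Finset.filter_subset _ _
  have hcompl : ((H.verts \ S).card : ℝ) ≤ ε' * n := by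
    rw [hSdef, ← Finset.filter_not]
    simpa only [not_le] using hn H hH
  refine ⟨S, hcompl.trans (by gcongr; exact min_le_left _ _), ?_, fun v hv hdeg =>
    Finset.mem_filter.2 ⟨hv, le_trans (by gcongr; linarith) hdeg⟩⟩
  have hverts : (H.induce S).verts = S := Finset.inter_eq_right.2 hSV
  have hScard : ((H.induce S).verts.card : ℝ) + (H.verts \ S).card = n := by
    exact_mod_cast hcard ▸ card_verts_induce_add
  have hSn : (n : ℝ) / 2 ≤ (H.induce S).verts.card := by
    linarith [mul_le_mul_of_nonneg_right hε'_half (Nat.cast_nonneg (α := ℝ) n)]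
  have hn_pos : (0 : ℝ) < n := Nat.cast_pos.2 (by omega)
  have hS₀ : 0 < (H.induce S).verts.card := Nat.cast_pos.1 ((half_pos hn_pos).trans_le hSn)
  have hn₀S : n₀ ≤ (H.induce S).verts.card := by
    have h : (2 * n₀ : ℝ) ≤ n := by exact_mod_cast hn₀
    exact_mod_cast (by linarith : (n₀ : ℝ) ≤ (H.induce S).verts.card)
  refine hstable _ hn₀S (not_isCopyIn_induce hH.2.1) (le_minDeg_induce (ε := ε')
    (hcard.symm ▸ hn₂) (hcard.symm ▸ hcompl) (Finset.card_pos.1 hS₀) fun v hv => ?_)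
  have hvS : v ∈ S := hverts ▸ hv
  rw [hcard]
  exact le_trans (by gcongr; linarith) (Finset.mem_filter.1 hvS).2

theorem HasTuranDensity.exists_eventually_deg_le_of_isSubconstruction (hπ : HasTuranDensity r F π)
    (hFP : ∀ H : HGraph r, P.IsConstruction H → ¬F.IsCopyIn H) (hr : r ≠ 0) {η : ℝ} (hη : 0 < η) :
    ∃ c > (0 : ℝ), ∀ᶠ n in atTop, ∀ G : HGraph r, P.IsSubconstruction G → G.verts.card ≤ n →
      n - G.verts.card ≤ c * n → exN r n F - c * n * completeDeg r n ≤ G.edges.card →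
      ∀ v ∈ G.verts, G.deg v ≤ (π + η) * completeDeg r n := by
  obtain ⟨τ, hτ, hgrowth⟩ := hπ.exists_eventually_exN_le hr (half_pos hη)
  have hc_le : τ * η / (12 * (1 + η)) ≤ τ / 3 := by
    rw [div_le_div_iff₀ (by positivity) (by positivity)]
    nlinarith
  refine ⟨τ * η / (12 * (1 + η)), by positivity, ?_⟩
  set c := τ * η / (12 * (1 + η)) with hc
  have hc_mul : c + c * η = τ * η / 12 := by rw [hc]; field_simp
  filter_upwards [hgrowth (τ * η / 24) (by positivity), eventually_gt_atTop ⌈3 / τ⌉₊]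
    with n hn hnτ G hG hGn hmissing hedges v hv
  by_contra! hdeg
  have hn_pos : (0 : ℝ) < n := Nat.cast_pos.2 hnτ.bot_lt
  have hnτ : 3 < n * τ := (div_lt_iff₀ hτ).1 (Nat.lt_of_ceil_lt hnτ)
  set K := ⌈τ / 3 * n⌉₊
  have hK_ge : τ / 3 * n ≤ K := Nat.le_ceil _
  have hK_lt : (K : ℝ) < τ / 3 * n + 1 := Nat.ceil_lt_add_one (by positivity)
  have hclone : (G.edges.card : ℝ) + K * G.deg v ≤ exN r (G.verts.card + K) F := by
    exact_mod_cast card_edges_add_mul_deg_le_exN hFP hG hv K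
  set s : ℝ := n - G.verts.card
  have hs₀ : 0 ≤ s := sub_nonneg.2 (Nat.cast_le.2 hGn)
  have hcn := mul_le_mul_of_nonneg_right hc_le hn_pos.le
  have hNn : ((G.verts.card + K : ℕ) : ℝ) - n = K - s := by push_cast; ring
  have habs : |(K : ℝ) - s| ≤ K + s :=
    abs_le.2 ⟨by linarith [Nat.cast_nonneg (α := ℝ) K], by linarith⟩
  have hgrow := hn (G.verts.card + K)
  rw [hNn] at hgrow
  specialize hgrow (by linarith)
  have hM : (0 : ℝ) ≤ completeDeg r n := Nat.cast_nonneg _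
  have hK_pos : (0 : ℝ) < K := lt_of_lt_of_le (by positivity) hK_ge
  have hgain : (π * (K - s) + η / 2 * (K + s) + τ * η / 24 * n) + c * n ≤ (π + η) * K := by
    have hcn_mul : c * n + c * η * n = τ * η / 12 * n := by rw [← add_mul, hc_mul]
    have hτηn : 0 ≤ τ * η * n := by positivity
    linarith [mul_nonneg hπ.nonneg hs₀, mul_le_mul_of_nonneg_left hmissing hη.le,
      mul_nonneg hη.le (hs₀.trans hmissing), mul_le_mul_of_nonneg_left hK_ge hη.le]
  linarith [mul_lt_mul_of_pos_left hdeg hK_pos, mul_le_mul_of_nonneg_right hgain hM,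
    mul_le_mul_of_nonneg_right (mul_le_mul_of_nonneg_left habs (half_pos hη).le) hM]

theorem DegreeStable.exists_eventually_deg_le (hds : DegreeStable r F P π)
    (hπ : HasTuranDensity r F π) (hFP : ∀ H : HGraph r, P.IsConstruction H → ¬F.IsCopyIn H)
    (hr : r ≠ 0) {η : ℝ} (hη : 0 < η) :
    ∃ c > (0 : ℝ), ∀ᶠ n in atTop, ∀ H : HGraph r, IsNearExtremal r n F c H →
      ∀ v ∈ H.verts, H.deg v ≤ (π + η) * completeDeg r n := by
  obtain ⟨c₁, hc₁, hclone⟩ :=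
    hπ.exists_eventually_deg_le_of_isSubconstruction hFP hr (half_pos hη)
  set ε : ℝ := min (c₁ / 2) (η / (4 * r))
  have hε : 0 < ε := by positivity
  have hε_r : 2 * r * ε ≤ η / 2 := by
    have h : ε ≤ η / (4 * r) := min_le_right _ _
    rw [le_div_iff₀ (by positivity)] at h
    linarith
  have hε_c : ε ≤ c₁ / 2 := min_le_left _ _
  obtain ⟨c₂, hc₂, hcore⟩ := hds.exists_eventually_exists_core hπ hr hε
  refine ⟨min c₂ (c₁ / 2), by positivity, ?_⟩
  filter_upwards [hclone, hcore, eventually_ge_atTop 2] with n hclone hcore hn H hH v hv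
  obtain hdeg | hdeg := le_total (H.deg v : ℝ) (π * completeDeg r n)
  · exact hdeg.trans (by gcongr; linarith)
  obtain ⟨S, hcompl, hsub, hS⟩ := hcore H (hH.mono (min_le_left _ _))
  obtain ⟨rfl, -, hedges⟩ := hH.mono (min_le_right _ _)
  have hvS := hS v hv hdeg
  have hcard : ((H.induce S).verts.card : ℝ) + (H.verts \ S).card = H.verts.card := by
    exact_mod_cast card_verts_induce_add
  have hmissing : ((H.verts \ S).card : ℝ) ≤ c₁ / 2 * H.verts.card :=
    hcompl.trans (mul_le_mul_of_nonneg_right hε_c (Nat.cast_nonneg _))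
  have hM : (0 : ℝ) ≤ completeDeg r H.verts.card := Nat.cast_nonneg _
  have hdel : (H.edges.card : ℝ) ≤
      (H.induce S).edges.card + (H.verts \ S).card * completeDeg r H.verts.card := by
    exact_mod_cast card_edges_le_card_edges_induce_add_mul H S
  have hdeg_induce : ((H.induce S).deg v : ℝ) ≤ (π + η / 2) * completeDeg r H.verts.card :=
    hclone _ hsub (Finset.card_le_card Finset.inter_subset_left)
      (by linarith [(Nat.cast_nonneg _).trans hmissing])
      (by linarith [mul_le_mul_of_nonneg_right hmissing hM]) v (Finset.mem_inter.2 ⟨hv, hvS⟩)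
  linarith [deg_sub_le_deg_induce hn hv hvS hcompl, mul_le_mul_of_nonneg_right hε_r hM]

end NearExtremal

section Bounded

open HGraph

variable {r : ℕ} {F : HGraph r} {P : Pattern r} {π : ℝ}

theorem isNearExtremal_of_dN_sub_le_avgDeg {n : ℕ} {H : HGraph r} {c : ℝ} (hr : r ≠ 0)
    (hn : n ≠ 0) (hc : 0 ≤ c) (hcard : H.verts.card = n) (hF : ¬F.IsCopyIn H)
    (havg : dN r n F - c * completeDeg r n ≤ H.avgDeg) : IsNearExtremal r n F c H := by
  have hr₁ : (1 : ℝ) ≤ r := Nat.one_le_cast.2 (Nat.pos_of_ne_zero hr)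
  have hn_pos : (0 : ℝ) < n := Nat.cast_pos.2 (Nat.pos_of_ne_zero hn)
  refine ⟨hcard, hF, ?_⟩
  rw [dN, avgDeg, hcard, sub_le_iff_le_add, div_le_iff₀ hn_pos, add_mul,
    div_mul_cancel₀ _ hn_pos.ne'] at havg
  refine le_of_mul_le_mul_left ?_ (zero_lt_one.trans_le hr₁)
  have hloss : c * n * completeDeg r n ≤ r * (c * n * completeDeg r n) :=
    le_mul_of_one_le_left (by positivity) hr₁
  linarith

theorem boundedAt_of_uniformity_zero {F : HGraph 0} {n : ℕ} {f₁ f₂ : ℝ} (hf₂ : 0 ≤ f₂) :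
    BoundedAt 0 n F f₁ f₂ := by
  intro H _ _ _
  have hdN : dN 0 n F = 0 := by rw [dN, Nat.cast_zero, zero_mul, zero_div]
  rw [hdN, zero_add]
  exact maxDeg_le hf₂ fun v _ => by rwa [deg_eq_zero_of_uniformity_zero, Nat.cast_zero]

theorem boundedAt_of_verts_eq_empty (hF : F.verts = ∅) {n : ℕ} {f₁ f₂ : ℝ} (hf₂ : 0 ≤ f₂) :
    BoundedAt r n F f₁ f₂ := by
  obtain rfl | hr := eq_or_ne r 0
  · exact boundedAt_of_uniformity_zero hf₂
  · exact fun H _ hFH _ => absurd (isCopyIn_of_verts_eq_empty hr hF H) hFH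

theorem DegreeStable.exists_eventually_boundedAt (hds : DegreeStable r F P π)
    (hπ : HasTuranDensity r F π) (hFP : ∀ H : HGraph r, P.IsConstruction H → ¬F.IsCopyIn H)
    {η : ℝ} (hη : 0 < η) :
    ∃ c > (0 : ℝ), ∀ᶠ n in atTop,
      BoundedAt r n F (c * completeDeg r n) (η * completeDeg r n) := by
  obtain rfl | hr := eq_or_ne r 0
  · exact ⟨1, one_pos, .of_forall fun n => boundedAt_of_uniformity_zero (by positivity)⟩
  obtain ⟨c, hc, hdeg⟩ := hds.exists_eventually_deg_le hπ hFP hr hη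
  refine ⟨c, hc, ?_⟩
  filter_upwards [hdeg, eventually_ne_atTop 0] with n hdeg hn H hcard hF havg
  have hH := isNearExtremal_of_dN_sub_le_avgDeg hr hn hc.le hcard hF havg
  have hM : (0 : ℝ) ≤ completeDeg r n := Nat.cast_nonneg _
  calc (H.maxDeg : ℝ) ≤ (π + η) * completeDeg r n :=
        maxDeg_le (mul_nonneg (add_nonneg hπ.nonneg hη.le) hM) (hdeg H hH)
    _ = π * completeDeg r n + η * completeDeg r n := add_mul _ _ _
    _ ≤ dN r n F + η * completeDeg r n := by gcongr; exact hπ.mul_completeDeg_le_dN hr hn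

end Bounded

theorem statement_4_general {r : ℕ} {F : HGraph r} {P : Pattern r} {π : ℝ}
    (hTP : IsTuranPair r F P) (hπ : HasTuranDensity r F π) (hds : DegreeStable r F P π) :
    (∀ n : ℕ, SmoothAt r n F ((n - 1).choose (r - 2))) ∧
      ∀ η > (0 : ℝ), ∃ c > (0 : ℝ), ∀ᶠ n : ℕ in atTop,
        BoundedAt r n F (c * ((n - 1).choose (r - 1) : ℕ)) (η * ((n - 1).choose (r - 1) : ℕ)) :=
  ⟨hTP.smoothAt, fun _ hη => hds.exists_eventually_boundedAt hπ hTP.1 hη⟩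

/-- degree-stability implies smoothness and boundedness. -/
theorem statement_4 (r m : ℕ) (F : HGraph r) (hFm : F.verts.card = m)
    (P : Pattern r) (hmin : P.Minimal) (hTP : IsTuranPair r F P)
    (π : ℝ) (hπ : HasTuranDensity r F π)
    (hds : DegreeStable r F P π) :
    ∃ c : ℝ, 0 < c ∧
      (∀ n : ℕ, |deltaN r n F - dN r (n-1) F| ≤ 4 * ((n-1).choose (r-2) : ℝ)) ∧
      ∀ᶠ n : ℕ in atTop,
        BoundedAt r n F (c * (((n-1).choose (r-1) : ℕ) : ℝ))
          ((1 - π) / (8 * m) * (((n-1).choose (r-1) : ℕ) : ℝ)) := by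
  subst hFm
  have hπ₁ : 0 < 1 - π := sub_pos.2 hπ.lt_one
  obtain ⟨hsmooth, hbounded⟩ := statement_4_general hTP hπ hds
  have hsmooth₄ (n : ℕ) : SmoothAt r n F (4 * (n - 1).choose (r - 2)) :=
    (hsmooth n).trans (le_mul_of_one_le_left (Nat.cast_nonneg _) (by norm_num))
  obtain hF | hF := F.verts.eq_empty_or_nonempty
  · exact ⟨1, one_pos, hsmooth₄, .of_forall fun n =>
      boundedAt_of_verts_eq_empty hF (by positivity)⟩
  · have hm : (0 : ℝ) < F.verts.card := Nat.cast_pos.2 hF.card_pos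
    obtain ⟨c, hc, hb⟩ := hbounded _ (div_pos hπ₁ (mul_pos (by norm_num : (0 : ℝ) < 8) hm))
    exact ⟨c, hc, hsmooth₄, hb⟩

end DensityCH
end

section
/- Suppose that F is an edge-critical graph with chromatic number χ(F) ≥ 3. Then there exist constants N_0 and c_F > 0 such that for all integers n ≥ N_0 and all integers t with 0 ≤ t ≤ c_F·n, one has EX(n,(t+1)F) = { K_t ⋈ T(n−t, χ(F)−1) }; that is, the unique n-vertex graph with no t+1 pairwise vertex-disjoint copies of F and the maximum number of edges is the join of a complete graph on t vertices with the balanced complete (χ(F)−1)-partite graph on n−t vertices. -/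
open Filter

namespace DensityCH

/-!
An edge-critical graph `F` with `χ(F) = r + 2` is a subgraph of every large complete
`(r + 1)`-partite graph with one extra edge inside a part. By Erdős–Stone this gives Simonovits'
theorem: a large `F`-free graph with at least as many edges as the Turán graph `T(n, r + 1)` is
`K_{r + 2}`-free, hence is `T(n, r + 1)`. It also shows that an `F`-free graph of nearly Turán
density has no vertex of degree `(1 - 1 / (r + 1) + ε) n`.

Let `G` have at least `e(K_t ⋈ T(n - t, r + 1))` edges but no `t + 1` disjoint copies of `F`, where
`1 ≤ t ≤ c n`. The vertices covered by a maximal packing are few and the rest is `F`-free, so it has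
at most the Turán number of edges; hence some vertex `v` has degree `(1 - 1 / (r + 1) + ε) n`.
Any `t` disjoint copies of `F` avoiding `v` leave a graph of nearly Turán density in which `v` has
too high a degree, so they extend to `t + 1` copies. Therefore `G - v` has no `t` disjoint copies,
and induction on `t` applies to it. The edge count then forces `v` to be adjacent to all other
vertices, so that `G` is `K_t` joined to a `K_{r + 2}`-free graph with the Turán number of edges.
-/

open Finset SimpleGraph

universe u

section Counting

variable {V : Type*} (G : SimpleGraph V) [DecidableRel G.Adj] (S U : Finset V) (v : V)

/-- The number of neighbours of `v` in the finite set `S`. -/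
def degOn : ℕ := #{w ∈ S | G.Adj v w}

/-- The number of edges of `G` with both ends in the finite set `S`. -/
def edgesOn : ℕ := #(G.induce (S : Set V)).edgeFinset

variable {S U v}

lemma degOn_mono (h : U ⊆ S) : degOn G U v ≤ degOn G S v :=
  card_le_card (filter_subset_filter _ h)

lemma degOn_lt_card (hv : v ∈ S) : degOn G S v < #S :=
  card_lt_card (filter_ssubset.2 ⟨v, hv, G.irrefl⟩)

variable (S) in
lemma degree_induce (x : (S : Set V)) : (G.induce (S : Set V)).degree x = degOn G S x := by
  rw [degOn, ← card_neighborFinset_eq_degree,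
    ← card_map (Function.Embedding.subtype (· ∈ (S : Set V)))]
  congr 1
  ext w
  simp [and_comm]

variable (S) in
lemma two_mul_edgesOn : 2 * edgesOn G S = ∑ v ∈ S, degOn G S v := by
  rw [edgesOn, ← sum_degrees_eq_twice_card_edges, ← sum_coe_sort S]
  exact sum_congr rfl fun x _ => degree_induce G S x

variable [DecidableEq V]

lemma degOn_le_degOn_sdiff_add_card : degOn G S v ≤ degOn G (S \ U) v + #U := by
  rw [degOn, degOn]
  grw [← card_union_le]
  exact card_le_card fun w hw => by
    by_cases w ∈ U <;> simp_all

lemma degOn_erase (hv : v ∈ S) (w : V) :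
    degOn G S w = degOn G (S.erase v) w + if G.Adj v w then 1 else 0 := by
  rw [degOn, degOn, filter_erase]
  split_ifs with h
  · exact (card_erase_add_one (by simpa [hv] using h.symm)).symm
  · rw [erase_eq_of_notMem (by simp [G.adj_comm w v, h]), add_zero]

lemma edgesOn_erase_add_degOn (hv : v ∈ S) :
    edgesOn G (S.erase v) + degOn G S v = edgesOn G S := by
  have hS := two_mul_edgesOn G S
  have herase := two_mul_edgesOn G (S.erase v)
  have hsum : ∑ w ∈ S, degOn G S w
      = ∑ w ∈ S.erase v, degOn G (S.erase v) w + degOn G S v + degOn G S v := by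
    have hcount : degOn G S v = ∑ w ∈ S.erase v, if G.Adj v w then 1 else 0 := by
      have := degOn_erase G hv v
      simp only [SimpleGraph.irrefl, if_false, add_zero] at this
      rw [this, degOn, card_filter]
    conv_rhs => enter [1, 2]; rw [hcount]
    rw [← sum_add_distrib, ← sum_erase_add _ _ hv]
    exact congrArg (· + _) (sum_congr rfl fun w _ => degOn_erase G hv w)
  lia

lemma edgesOn_le_edgesOn_sdiff_add_sum (hU : U ⊆ S) :
    edgesOn G S ≤ edgesOn G (S \ U) + ∑ u ∈ U, degOn G S u := by
  induction U using Finset.induction_on with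
  | empty => simp
  | insert u U hu ih =>
    have huS : u ∈ S \ U := by simp_all [insert_subset_iff]
    have := edgesOn_erase_add_degOn G huS
    have := degOn_mono G (v := u) (sdiff_subset : S \ U ⊆ S)
    have := ih fun x hx => hU (mem_insert_of_mem hx)
    rw [sdiff_insert, sum_insert hu]
    lia

end Counting

section Containment

variable {V W : Type*} {F : SimpleGraph W} {G : SimpleGraph V} {S U : Finset V}

lemma isContained_induce_iff :
    F ⊑ G.induce (S : Set V) ↔ ∃ f : W → V, f.Injective ∧ (∀ x, f x ∈ S) ∧
      ∀ x y, F.Adj x y → G.Adj (f x) (f y) := by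
  refine ⟨fun ⟨f⟩ => ⟨fun x => f x, Subtype.val_injective.comp f.injective, fun x => (f x).2,
    fun x y h => f.toHom.map_adj h⟩, fun ⟨f, hinj, hS, hadj⟩ => ?_⟩
  exact ⟨⟨⟨fun x => ⟨f x, hS x⟩, fun {x y} h => hadj x y h⟩,
    fun x y h => hinj (congrArg Subtype.val h)⟩⟩

lemma isContained_induce_mono (hU : U ⊆ S) (h : F ⊑ G.induce (U : Set V)) :
    F ⊑ G.induce (S : Set V) :=
  h.trans ⟨(SimpleGraph.induceHomOfLE G (coe_subset.2 hU)).toCopy⟩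

end Containment

section ErdosStone

variable {V : Type*} (G : SimpleGraph V) [DecidableRel G.Adj]

lemma exists_subset_of_le_edgesOn (T : ℕ → ℝ) (S : Finset V) (hS : T #S ≤ edgesOn G S) :
    ∃ S' ⊆ S, T #S' ≤ edgesOn G S' ∧ ∀ v ∈ S', T #S' - T (#S' - 1) ≤ degOn G S' v := by
  classical
  induction S using Finset.strongInduction with
  | H S ih =>
    by_cases hdeg : ∀ v ∈ S, T #S - T (#S - 1) ≤ degOn G S v
    · exact ⟨S, subset_rfl, hS, hdeg⟩
    · push Not at hdeg
      obtain ⟨v, hv, hlt⟩ := hdeg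
      have hedges : (edgesOn G (S.erase v) + degOn G S v : ℝ) = edgesOn G S :=
        mod_cast edgesOn_erase_add_degOn G hv
      obtain ⟨S', hsub, hS'⟩ := ih (S.erase v) (erase_ssubset hv) (by
        rw [card_erase_of_mem hv]; linarith)
      exact ⟨S', hsub.trans (erase_subset _ _), hS'⟩

lemma two_mul_edgesOn_le_card_sq (S : Finset V) : 2 * edgesOn G S ≤ #S ^ 2 := by
  rw [two_mul_edgesOn, sq]
  exact sum_le_card_nsmul _ _ _ fun v hv => (degOn_lt_card G hv).le

end ErdosStone

lemma exists_completeEquipartiteGraph_isContained_of_le_degOn {ε : ℝ} (hε : 0 < ε) (r m : ℕ) :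
    ∃ N : ℕ, ∀ {V : Type u} (G : SimpleGraph V) [DecidableRel G.Adj] (S : Finset V), N ≤ #S →
      (∀ v ∈ S, (1 - 1 / (r : ℝ) + ε) * #S ≤ degOn G S v) →
      completeEquipartiteGraph (r + 1) m ⊑ G.induce (S : Set V) := by
  classical
  obtain ⟨N, hN⟩ := eventually_atTop.1
    (eventually_completeEquipartiteGraph_isContained_of_minDegree hε r m)
  refine ⟨N + 1, fun {V} G _ S hS hdeg => ?_⟩
  have hcard : Fintype.card (S : Set V) = #S := by simp
  have : Nonempty (Fin #S) := ⟨⟨0, by lia⟩⟩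
  let e := (G.induce (S : Set V)).overFinIso hcard
  refine (hN _ (by lia) ?_).trans ⟨e.symm.toCopy⟩
  obtain ⟨i, hi⟩ := ((G.induce (S : Set V)).overFin hcard).exists_minimal_degree_vertex
  rw [hi, ← e.symm.degree_eq, degree_induce]
  exact hdeg _ (e.symm i).2

lemma exists_completeEquipartiteGraph_isContained_of_le_edgesOn {ε : ℝ} (hε : 0 < ε) {r : ℕ}
    (hr : 1 ≤ r) (m : ℕ) :
    ∃ N : ℕ, ∀ {V : Type u} (G : SimpleGraph V) [DecidableRel G.Adj] (S : Finset V), N ≤ #S →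
      (1 - 1 / (r : ℝ) + ε) * #S ^ 2 ≤ 2 * edgesOn G S →
      completeEquipartiteGraph (r + 1) m ⊑ G.induce (S : Set V) := by
  obtain ⟨N, hN⟩ :=
    exists_completeEquipartiteGraph_isContained_of_le_degOn.{u} (half_pos hε) r m
  set γ : ℝ := 1 - 1 / (r : ℝ) + ε / 2 with hγ
  have hγpos : 0 < γ := by
    have : 1 / (r : ℝ) ≤ 1 := div_le_one_of_le₀ (mod_cast hr) (by positivity)
    linarith
  refine ⟨⌈2 * (γ + 2 * N ^ 2) / ε⌉₊ + 1, fun G _ S hS hedges => ?_⟩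
  set T : ℕ → ℝ := fun k => γ * (k * (k + 1) / 2) + N ^ 2 with hT
  have hTS : T #S ≤ edgesOn G S := by
    have hlarge : 2 * (γ + 2 * N ^ 2) ≤ ε * #S := by
      rw [← div_le_iff₀' hε]
      exact (Nat.le_ceil _).trans (Nat.cast_le.2 ((Nat.le_succ _).trans hS))
    have hone : (1 : ℝ) ≤ #S := mod_cast (Nat.le_add_left _ _).trans hS
    have : (N : ℝ) ^ 2 ≤ N ^ 2 * #S := le_mul_of_one_le_right (by positivity) hone
    have : 2 * (γ + 2 * N ^ 2) * #S ≤ ε * #S * #S := by gcongr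
    simp only [hT]
    nlinarith
  obtain ⟨S', hsub, hTS', hdeg⟩ := exists_subset_of_le_edgesOn G T S hTS
  have hNS' : N ≤ #S' := by
    by_contra! hlt
    have hedges' : (2 * edgesOn G S' : ℝ) ≤ #S' ^ 2 := mod_cast two_mul_edgesOn_le_card_sq G S'
    have hlt' : (#S' : ℝ) < N := mod_cast hlt
    have : 0 ≤ γ * (#S' * (#S' + 1) / 2) := by positivity
    simp only [hT] at hTS'
    nlinarith
  refine isContained_induce_mono hsub (hN G S' hNS' fun v hv => le_trans (le_of_eq ?_) (hdeg v hv))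
  have hpos : 1 ≤ #S' := card_pos.2 ⟨v, hv⟩
  simp only [hT]
  push_cast [hpos]
  ring

section NearlyColorable

variable {V W : Type*} {F : SimpleGraph W} {G : SimpleGraph V} {S : Finset V} {r : ℕ}

/-- `F` has an edge whose deletion leaves an `ℓ`-colouring in which the ends of that edge share a
colour. When `χ(F) = ℓ + 1`, this says that `F` is edge-critical. -/
def IsNearlyColorable (F : SimpleGraph W) (ℓ : ℕ) : Prop :=
  ∃ a b, F.Adj a b ∧ ∃ C : (F.deleteEdges {s(a, b)}).Coloring (Fin ℓ), C a = C b

lemma IsNearlyColorable.isContained_of_parts {ℓ : ℕ} (hF : IsNearlyColorable F ℓ) {i₀ : Fin ℓ}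
    {h : Fin ℓ → W → V} (hinj : ∀ i, (h i).Injective) (hS : ∀ i x, h i x ∈ S)
    (hadj : ∀ i j x y, i ≠ j → G.Adj (h i x) (h j y))
    {u v : V} (huv : G.Adj u v) (hu : u ∈ S) (hv : v ∈ S)
    (hu_adj : ∀ i x, i ≠ i₀ → G.Adj u (h i x)) (hv_adj : ∀ i x, i ≠ i₀ → G.Adj v (h i x))
    (hu_ne : ∀ x, u ≠ h i₀ x) (hv_ne : ∀ x, v ≠ h i₀ x) :
    F ⊑ G.induce (S : Set V) := by
  classical
  obtain ⟨a, b, hab, C₀, hC₀⟩ := hF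
  obtain ⟨C, hCa, hCb⟩ : ∃ C : (F.deleteEdges {s(a, b)}).Coloring (Fin ℓ), C a = i₀ ∧ C b = i₀ :=
    ⟨recolorOfEquiv _ (Equiv.swap (C₀ a) i₀) C₀, by simp, by simp [← hC₀]⟩
  have hC : ∀ x y, F.Adj x y → C x = C y → s(x, y) = s(a, b) := fun x y hxy hCxy =>
    by_contra fun hne => C.valid (by simpa [hxy] using hne) hCxy
  let f : W → V := fun x => if x = a then u else if x = b then v else h (C x) x
  have hf : ∀ x y, C x ≠ C y → G.Adj (f x) (f y) := by
    grind [SimpleGraph.adj_comm]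
  refine isContained_induce_iff.2 ⟨f, fun x y hxy => ?_, fun x => by grind, fun x y hxy => ?_⟩
  · by_cases hCxy : C x = C y
    · grind [G.ne_of_adj huv, Function.Injective]
    · exact absurd hxy (hf x y hCxy).ne
  · by_cases hCxy : C x = C y
    · rcases Sym2.eq_iff.1 (hC x y hxy hCxy) with ⟨rfl, rfl⟩ | ⟨rfl, rfl⟩
      · simpa [f, hab.ne'] using huv
      · simpa [f, hab.ne'] using huv.symm
    · exact hf x y hCxy

lemma exists_injective_of_card_le [Fintype W] {A : Finset V} (hA : Fintype.card W ≤ #A) :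
    ∃ f : W → V, f.Injective ∧ ∀ x, f x ∈ A := by
  obtain ⟨f⟩ := Function.Embedding.nonempty_of_card_le (α := W) (β := A) (by simpa using hA)
  exact ⟨fun x => f x, Subtype.val_injective.comp f.injective, fun x => (f x).2⟩

lemma IsNearlyColorable.isContained_of_neighbors [Fintype W] [DecidableRel G.Adj]
    (hF : IsNearlyColorable F (r + 1)) {v : V} (hv : v ∈ S)
    (hK : completeEquipartiteGraph (r + 1) (Fintype.card W + 1) ⊑
      G.induce (({w ∈ S | G.Adj v w} : Finset V) : Set V)) :
    F ⊑ G.induce (S : Set V) := by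
  obtain ⟨p, hp, hpS, hpadj⟩ := isContained_induce_iff.1 hK
  simp only [mem_filter] at hpS
  let e := Fintype.equivFin W
  refine hF.isContained_of_parts (i₀ := Fin.last r) (h := fun i x => p (i, (e x).castSucc))
    (u := v) (v := p (Fin.last r, Fin.last _)) ?_ (fun _ _ => (hpS _).1)
    (fun i j x y hij => hpadj _ _ (completeEquipartiteGraph_adj.2 hij)) (hpS _).2 hv (hpS _).1
    (fun _ _ _ => (hpS _).2)
    (fun i x hi => hpadj _ _ (completeEquipartiteGraph_adj.2 hi.symm))
    (fun x => (hpS _).2.ne) (fun x => ?_)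
  · intro i x y hxy
    simpa using hp hxy
  · exact fun h => (Fin.castSucc_lt_last (e x)).ne' (Prod.ext_iff.1 (hp h)).2

end NearlyColorable

section BoundedDegree

variable {W : Type*} {F : SimpleGraph W} {r : ℕ}

lemma edgesOn_le_edgesOn_neighbors_add {V : Type*} (G : SimpleGraph V) [DecidableRel G.Adj]
    {S : Finset V} {v : V} (hmax : ∀ w ∈ S, degOn G S w ≤ degOn G S v) :
    edgesOn G S ≤ edgesOn G {w ∈ S | G.Adj v w} + (#S - degOn G S v) * degOn G S v := by
  classical
  have h := edgesOn_le_edgesOn_sdiff_add_sum G (sdiff_subset (s := S) (t := {w ∈ S | G.Adj v w}))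
  rw [Finset.sdiff_sdiff_eq_self (filter_subset _ _)] at h
  refine h.trans (Nat.add_le_add_left ?_ _)
  rw [degOn, ← card_sdiff_of_subset (filter_subset _ _)]
  exact sum_le_card_nsmul _ _ _ fun w hw => hmax w (mem_sdiff.1 hw).1

lemma one_sub_one_div_mul_sq_add_sq_le {r n d ε : ℝ} (hr : 0 < r) (hn : 0 ≤ n) (hε : 0 ≤ ε)
    (hd : (1 - 1 / (r + 1) + ε) * n ≤ d) :
    (1 - 1 / r) * d ^ 2 + (ε * n) ^ 2 ≤ (1 - 1 / (r + 1)) * n ^ 2 - 2 * ((n - d) * d) := by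
  set a : ℝ := 1 - 1 / (r + 1) with ha
  have hsq : a * n ^ 2 - 2 * ((n - d) * d) - (1 - 1 / r) * d ^ 2
      = (1 + 1 / r) * (d - a * n) ^ 2 := by
    rw [show a = r / (r + 1) by rw [ha]; field_simp; ring]
    field_simp
    ring
  have hexcess : (ε * n) ^ 2 ≤ (d - a * n) ^ 2 :=
    pow_le_pow_left₀ (by positivity) (by linarith) 2
  have : (d - a * n) ^ 2 ≤ (1 + 1 / r) * (d - a * n) ^ 2 :=
    le_mul_of_one_le_left (sq_nonneg _) (by simp [hr.le])
  linarith

lemma IsNearlyColorable.degOn_lt_of_le_edgesOn [Finite W] (hr : 1 ≤ r)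
    (hF : IsNearlyColorable F (r + 1)) {ε : ℝ} (hε : 0 < ε) :
    ∃ δ : ℝ, 0 < δ ∧ ∃ N : ℕ, ∀ {V : Type u} (G : SimpleGraph V) [DecidableRel G.Adj]
      (S : Finset V), N ≤ #S → (1 - 1 / ((r : ℝ) + 1) - δ) * #S ^ 2 ≤ 2 * edgesOn G S →
      ¬ F ⊑ G.induce (S : Set V) → ∀ v ∈ S, degOn G S v < (1 - 1 / ((r : ℝ) + 1) + ε) * #S := by
  cases nonempty_fintype W
  obtain ⟨N, hN⟩ := exists_completeEquipartiteGraph_isContained_of_le_edgesOn.{u}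
    (ε := ε ^ 2 / 2) (by positivity) hr (Fintype.card W + 1)
  have hrR : (1 : ℝ) ≤ r := mod_cast hr
  set a : ℝ := 1 - 1 / ((r : ℝ) + 1)
  have ha_half : 1 / 2 ≤ a := by
    have : 1 / ((r : ℝ) + 1) ≤ 1 / 2 := one_div_le_one_div_of_le two_pos (by linarith)
    linarith
  refine ⟨ε ^ 2 / 2, by positivity, 2 * N, fun {V} G _ S hS hedges hfree => ?_⟩
  by_contra! ⟨v₀, hv₀, hdeg₀⟩
  obtain ⟨v, hv, hmax⟩ := exists_max_image S (degOn G S) ⟨v₀, hv₀⟩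
  have hle : degOn G S v ≤ #S := (degOn_lt_card G hv).le
  have hsplit := edgesOn_le_edgesOn_neighbors_add G hmax
  have hdeg : (a + ε) * #S ≤ degOn G S v := hdeg₀.trans (mod_cast hmax v₀ hv₀)
  refine hfree (hF.isContained_of_neighbors hv (hN G {w ∈ S | G.Adj v w} ?_ ?_)) <;>
    rw [show #{w ∈ S | G.Adj v w} = degOn G S v from rfl]
  · have : (2 * N : ℝ) ≤ #S := mod_cast hS
    rify
    nlinarith
  · have hleR : (degOn G S v : ℝ) ≤ #S := Nat.cast_le.2 hle
    rify [hle] at hsplit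
    have := one_sub_one_div_mul_sq_add_sq_le (by linarith) (Nat.cast_nonneg _) hε.le hdeg
    have : ε ^ 2 * (degOn G S v : ℝ) ^ 2 ≤ ε ^ 2 * #S ^ 2 := by gcongr
    linarith

end BoundedDegree

section CommonNeighbors

variable {V W ι κ : Type*} [Fintype ι] [Fintype κ] {F : SimpleGraph W} (G : SimpleGraph V)
  [DecidableRel G.Adj]

lemma sum_card_le_of_card_le {R : ι → Finset κ} {m : ℕ} {j : ι} (hj : #(R j) ≤ m) :
    ∑ j, #(R j) ≤ (Fintype.card ι - 1) * Fintype.card κ + m := by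
  classical
  rw [← sum_erase_add _ _ (mem_univ j), ← card_univ, ← card_erase_of_mem (mem_univ j)]
  exact add_le_add (sum_le_card_nsmul _ _ _ fun i _ => card_le_univ _) hj

lemma sum_degOn_le (S : Finset V) (g : ι × κ → V) (m : ℕ) :
    ∑ p, degOn G S (g p) ≤ #S * ((Fintype.card ι - 1) * Fintype.card κ + m)
      + #{w ∈ S | ∀ j, m ≤ #{i | G.Adj w (g (j, i))}} * Fintype.card κ := by
  have hswap : ∑ p, degOn G S (g p) = ∑ w ∈ S, ∑ j, #{i | G.Adj w (g (j, i))} := by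
    simp only [degOn, card_filter]
    rw [sum_comm]
    simp only [Fintype.sum_prod_type, G.adj_comm]
  have hrow : ∀ w, ∑ j, #{i | G.Adj w (g (j, i))} ≤ (Fintype.card ι - 1) * Fintype.card κ + m
      + if ∀ j, m ≤ #{i | G.Adj w (g (j, i))} then Fintype.card κ else 0 := fun w => by
    split_ifs with hw
    · rcases isEmpty_or_nonempty ι with _ | ⟨⟨j⟩⟩
      · simp
      · have := sum_card_le_of_card_le (R := fun j => {i | G.Adj w (g (j, i))}) (j := j)
          (card_le_univ _)
        lia
    · obtain ⟨j, hj⟩ := not_forall.1 hw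
      exact sum_card_le_of_card_le (not_le.1 hj).le
  calc ∑ p, degOn G S (g p)
    _ ≤ ∑ w ∈ S, ((Fintype.card ι - 1) * Fintype.card κ + m
          + if ∀ j, m ≤ #{i | G.Adj w (g (j, i))} then Fintype.card κ else 0) :=
      hswap.trans_le (sum_le_sum fun w _ => hrow w)
    _ = _ := by
      rw [sum_add_distrib, sum_const, smul_eq_mul, ← sum_filter, sum_const, smul_eq_mul]

variable {G}

lemma exists_common_neighbors [Fintype W] {g : ι × κ → V} {A : Finset V} {k : ℕ}
    (hA : ∀ w ∈ A, ∀ j, Fintype.card W ≤ #{i | G.Adj w (g (j, i))})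
    (hcard : 2 ^ (Fintype.card ι * Fintype.card κ) * k < #A) :
    ∃ B ⊆ A, k < #B ∧ ∃ s : ι → W → κ, (∀ j, (s j).Injective) ∧
      ∀ w ∈ B, ∀ j x, G.Adj w (g (j, s j x)) := by
  classical
  let pattern : V → Finset (ι × κ) := fun w => {p | G.Adj w (g p)}
  obtain ⟨P, -, hP⟩ := exists_lt_card_fiber_of_mul_lt_card_of_maps_to (f := pattern)
    (fun w _ => mem_univ (pattern w)) (by simpa using hcard)
  obtain ⟨w₀, hw₀⟩ := card_pos.1 (hP.trans_le' (Nat.zero_le _))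
  simp only [mem_filter] at hw₀
  choose s hinj hs using fun j => exists_injective_of_card_le (hA w₀ hw₀.1 j)
  refine ⟨_, filter_subset _ _, hP, s, hinj, fun w hw j x => ?_⟩
  have hmem : (j, s j x) ∈ pattern w := by
    rw [(mem_filter.1 hw).2, ← hw₀.2]
    simpa [pattern] using hs j x
  simpa [pattern] using hmem

end CommonNeighbors

section EdgeExtension

variable {V W : Type*} [Fintype W] {F : SimpleGraph W} {G : SimpleGraph V} [DecidableRel G.Adj]
  {S : Finset V} {r : ℕ}

lemma IsNearlyColorable.isContained_of_adj (hF : IsNearlyColorable F (r + 1)) {M : ℕ}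
    {g : Fin r × Fin M → V} (hg : g.Injective) (hgS : ∀ p, g p ∈ S)
    (hgadj : ∀ p q, p.1 ≠ q.1 → G.Adj (g p) (g q)) {u v : V} (hu : u ∈ S) (hv : v ∈ S)
    (huv : G.Adj u v) (hgu : ∀ p, G.Adj u (g p)) (hgv : ∀ p, G.Adj v (g p))
    (hcard : 2 ^ (r * M) * Fintype.card W + 2
      < #{w ∈ S | ∀ j, Fintype.card W ≤ #{i | G.Adj w (g (j, i))}}) :
    F ⊑ G.induce (S : Set V) := by
  classical
  set A : Finset V := {w ∈ S | ∀ j, Fintype.card W ≤ #{i | G.Adj w (g (j, i))}} with hA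
  have hcardA : 2 ^ (Fintype.card (Fin r) * Fintype.card (Fin M)) * Fintype.card W
      < #(A \ {u, v}) := by
    have := le_card_sdiff {u, v} A
    have := card_le_two (a := u) (b := v)
    simp only [Fintype.card_fin]
    lia
  obtain ⟨B, hBA, hB, s, hs, hsadj⟩ := exists_common_neighbors (W := W) (g := g)
    (fun w hw => (mem_filter.1 (mem_sdiff.1 hw).1).2) hcardA
  obtain ⟨w, hw, hwB⟩ := exists_injective_of_card_le hB.le
  have hwA : ∀ x, w x ∈ S ∧ w x ≠ u ∧ w x ≠ v := fun x => by
    have := hBA (hwB x)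
    simp_all
  refine hF.isContained_of_parts (i₀ := Fin.last r)
    (h := Fin.snoc (α := fun _ => W → V) (fun j x => g (j, s j x)) w) ?_ ?_ ?_ huv hu hv ?_ ?_
    (fun x => by simpa using (hwA x).2.1.symm) (fun x => by simpa using (hwA x).2.2.symm)
  · refine Fin.lastCases (by simpa using hw) fun j x y hxy => hs j ?_
    exact (Prod.ext_iff.1 (hg (by simpa using hxy))).2
  · exact Fin.lastCases (by simpa using fun x => (hwA x).1) fun j x => by simpa using hgS _
  · refine Fin.lastCases (fun j => ?_) fun i j => ?_ <;>
      refine Fin.lastCases (fun x y hij => ?_) (fun j x y hij => ?_) j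
    · exact absurd rfl hij
    · simpa using hsadj _ (hwB x) j y
    · simpa using (hsadj _ (hwB y) i x).symm
    · simpa using hgadj _ _ (by simpa using hij)
  · exact Fin.lastCases (by simp) fun j x _ => by simpa using hgu _
  · exact Fin.lastCases (by simp) fun j x _ => by simpa using hgv _

lemma card_le_mul_card_of_le_degOn (hr : 1 ≤ r) {ε : ℝ} (hε : r * ε ≤ 1 / (2 * ((r : ℝ) + 1)))
    {m M : ℕ} (hM : M = 2 * (r + 1) * (m + 1)) (g : Fin r × Fin M → V)
    (hdeg : ∀ p, (1 - 1 / ((r : ℝ) + 1) - ε) * #S ≤ degOn G S (g p)) :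
    #S ≤ M * #{w ∈ S | ∀ j, m ≤ #{i | G.Adj w (g (j, i))}} := by
  have hupper := sum_degOn_le G S g m
  have hlower := card_nsmul_le_sum univ (fun p => (degOn G S (g p) : ℝ)) _ fun p _ => hdeg p
  simp only [Fintype.card_fin] at hupper
  simp only [card_univ, Fintype.card_prod, Fintype.card_fin, nsmul_eq_mul, Nat.cast_mul] at hlower
  rify [hr] at hupper ⊢
  have hgap : (m + 1 : ℝ) ≤ M * (r * (1 - 1 / ((r : ℝ) + 1) - ε) - (r - 1)) := by
    calc (m + 1 : ℝ) = M * (1 / (2 * ((r : ℝ) + 1))) := by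
          rw [hM]
          push_cast
          field_simp
      _ ≤ M * (1 / (r + 1) - r * ε) := by
        gcongr
        have : 1 / ((r : ℝ) + 1) - 1 / (2 * ((r : ℝ) + 1)) = 1 / (2 * ((r : ℝ) + 1)) := by
          field_simp
          ring
        linarith
      _ = M * (r * (1 - 1 / ((r : ℝ) + 1) - ε) - (r - 1)) := by
        field_simp
        ring
  have := mul_le_mul_of_nonneg_right hgap (Nat.cast_nonneg #S)
  linarith

end EdgeExtension

section CliqueFree

variable {W : Type*} [Finite W] {F : SimpleGraph W} {r : ℕ}

lemma IsNearlyColorable.isContained_of_commonNeighbors (hr : 1 ≤ r)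
    (hF : IsNearlyColorable F (r + 1)) {ε : ℝ}
    (hε : r * ε ≤ 1 / (2 * ((r : ℝ) + 1))) :
    ∃ N M : ℕ, ∀ {V : Type u} (G : SimpleGraph V) [DecidableRel G.Adj] (S : Finset V), N ≤ #S →
      (∀ v ∈ S, (1 - 1 / ((r : ℝ) + 1) - ε) * #S ≤ degOn G S v) →
      ∀ u ∈ S, ∀ v ∈ S, G.Adj u v →
      completeEquipartiteGraph r M ⊑
        G.induce (({x ∈ S | G.Adj u x ∧ G.Adj v x} : Finset V) : Set V) →
      F ⊑ G.induce (S : Set V) := by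
  cases nonempty_fintype W
  set m := Fintype.card W
  set M := 2 * (r + 1) * (m + 1) with hM
  refine ⟨M * (2 ^ (r * M) * m + 3), M, fun {V} G _ S hS hdeg u hu v hv huv hK => ?_⟩
  obtain ⟨g, hg, hgmem, hgadj⟩ := isContained_induce_iff.1 hK
  simp only [mem_filter] at hgmem
  refine hF.isContained_of_adj hg (fun p => (hgmem p).1)
    (fun p q hpq => hgadj p q (completeEquipartiteGraph_adj.2 hpq)) hu hv huv
    (fun p => (hgmem p).2.1) (fun p => (hgmem p).2.2) ?_
  have hgood := card_le_mul_card_of_le_degOn hr hε hM g fun p => hdeg _ (hgmem p).1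
  exact Nat.le_of_mul_le_mul_left (hS.trans hgood) (by positivity)

lemma sum_card_filter_le_sum_card_filter_and {ι V : Type*} (I : Finset ι) (S : Finset V)
    (R : ι → V → Prop) [∀ i, DecidablePred (R i)] (k : ℕ) :
    (2 * k + 1) * ∑ i ∈ I, #{w ∈ S | R i w}
      ≤ ∑ i ∈ I, ∑ j ∈ I, #{w ∈ S | R i w ∧ R j w} + k * (k + 1) * #S := by
  have hsingle : ∑ i ∈ I, #{w ∈ S | R i w} = ∑ w ∈ S, #{i ∈ I | R i w} := by
    simp only [card_filter]
    exact sum_comm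
  have hpair : ∑ i ∈ I, ∑ j ∈ I, #{w ∈ S | R i w ∧ R j w} = ∑ w ∈ S, #{i ∈ I | R i w} ^ 2 := by
    simp only [card_filter, sq, sum_mul_sum, ite_zero_mul_ite_zero, mul_one]
    exact (sum_congr rfl fun i _ => sum_comm).trans sum_comm
  have hconvex : ∀ c : ℕ, (2 * k + 1) * c ≤ c ^ 2 + k * (k + 1) := fun c => by
    rcases le_or_gt c k with h | h <;> nlinarith
  calc _ = ∑ w ∈ S, (2 * k + 1) * #{i ∈ I | R i w} := by rw [hsingle, mul_sum]
    _ ≤ ∑ w ∈ S, (#{i ∈ I | R i w} ^ 2 + k * (k + 1)) := sum_le_sum fun w _ => hconvex _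
    _ = _ := by rw [sum_add_distrib, hpair, sum_const, smul_eq_mul, mul_comm #S]

lemma exists_adj_le_card_commonNeighbors {V : Type*} {G : SimpleGraph V} [DecidableRel G.Adj]
    {S : Finset V} {ε : ℝ} (hε : 0 ≤ ε)
    (hdeg : ∀ v ∈ S, (1 - 1 / ((r : ℝ) + 1) - ε) * #S ≤ degOn G S v)
    (hclique : ¬ G.CliqueFreeOn S (r + 2)) :
    ∃ u ∈ S, ∃ v ∈ S, G.Adj u v ∧
      (1 - 2 / ((r : ℝ) + 1) + 2 / (((r : ℝ) + 1) ^ 2 * (r + 2)) - 2 * ε) * #S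
        ≤ #{x ∈ S | G.Adj u x ∧ G.Adj v x} := by
  classical
  simp only [CliqueFreeOn, not_forall, not_not] at hclique
  obtain ⟨Q, hQS, hQ, hQcard⟩ := hclique
  rw [coe_subset] at hQS
  set β : ℝ := 1 - 2 / ((r : ℝ) + 1) + 2 / (((r : ℝ) + 1) ^ 2 * (r + 2)) - 2 * ε with hβ
  by_contra! hsmall
  have hcount := sum_card_filter_le_sum_card_filter_and Q S G.Adj r
  have hdiag : ∀ u ∈ Q, (∑ v ∈ Q, #{x ∈ S | G.Adj u x ∧ G.Adj v x} : ℝ)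
      < (r + 1) * (β * #S) + #{x ∈ S | G.Adj u x} := fun u hu => by
    have hcard : #(Q.erase u) = r + 1 := by rw [card_erase_of_mem hu, hQcard]; rfl
    rw [← sum_erase_add _ _ hu]
    simp only [and_self]
    refine add_lt_add_left ?_ _
    refine (sum_lt_sum_of_nonempty (card_pos.1 (by lia)) fun v hv => ?_).trans_eq
      (b := ∑ _v ∈ Q.erase u, β * #S) (by simp [hcard])
    have hvQ := mem_of_mem_erase hv
    exact hsmall u (hQS hu) v (hQS hvQ) (hQ hu hvQ (ne_of_mem_erase hv).symm)
  have hlower := card_nsmul_le_sum Q _ _ fun u hu => hdeg u (hQS hu)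
  have hupper := sum_lt_sum_of_nonempty (card_pos.1 (by lia)) hdiag
  simp only [degOn, hQcard, nsmul_eq_mul, sum_add_distrib, sum_const] at hlower hupper
  rify at hcount
  have hβ_eq : ((r : ℝ) + 2) * ((r + 1) * β)
      = 2 * r * ((r + 2) * (1 - 1 / ((r : ℝ) + 1) - ε)) - r * (r + 1) - 2 * (r + 2) * ε := by
    rw [hβ]
    field_simp
    ring
  have := congrArg (· * (#S : ℝ)) hβ_eq
  have : 2 * (r : ℝ) * _ ≤ _ := mul_le_mul_of_nonneg_left hlower (by positivity)
  have : 0 ≤ 2 * ((r : ℝ) + 2) * ε * #S := by positivity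
  push_cast at *
  linarith

lemma le_degOn_of_subset {V : Type*} {G : SimpleGraph V} [DecidableRel G.Adj] {S C : Finset V}
    {v : V} {η : ℝ} (hr : 1 < r) (hη : 0 ≤ η) (hCS : C ⊆ S)
    (hC : (1 - 2 / ((r : ℝ) + 1) + η) * #S ≤ #C)
    (hdeg : (1 - 1 / ((r : ℝ) + 1) - η / (2 * r)) * #S ≤ degOn G S v) :
    (1 - 1 / ((r : ℝ) - 1) + η / (2 * r)) * #C ≤ degOn G C v := by
  classical
  have hloss := degOn_le_degOn_sdiff_add_card G (S := S) (U := S \ C) (v := v)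
  rw [Finset.sdiff_sdiff_eq_self hCS, card_sdiff_of_subset hCS] at hloss
  have hCS' := card_le_card hCS
  have hCSR : (#C : ℝ) ≤ #S := mod_cast hCS'
  have hr1 : (0 : ℝ) < r - 1 := by
    rw [sub_pos]
    exact mod_cast hr
  have hpart : (1 / ((r : ℝ) + 1) + η / (r - 1)) * #S ≤ 1 / ((r : ℝ) - 1) * #C := by
    calc _ = 1 / ((r : ℝ) - 1) * ((1 - 2 / ((r : ℝ) + 1) + η) * #S) := by field_simp; ring
      _ ≤ _ := by gcongr
  have : η / (2 * r) * #C ≤ η / (2 * r) * #S := by gcongr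
  have : 2 * (η / (2 * r)) * #S ≤ η / (r - 1) * #S := by
    rw [show 2 * (η / (2 * r)) = η / r by field_simp]
    gcongr
    linarith
  rify [hCS'] at hloss
  linarith

lemma exists_completeEquipartiteGraph_isContained_of_le_card (hr : 1 ≤ r) {η : ℝ} (hη : 0 < η)
    (M : ℕ) :
    ∃ N : ℕ, ∀ {V : Type u} (G : SimpleGraph V) [DecidableRel G.Adj] (S C : Finset V), C ⊆ S →
      N ≤ #S → (∀ v ∈ C, (1 - 1 / ((r : ℝ) + 1) - η / (2 * r)) * #S ≤ degOn G S v) →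
      (1 - 2 / ((r : ℝ) + 1) + η) * #S ≤ #C →
      completeEquipartiteGraph r M ⊑ G.induce (C : Set V) := by
  classical
  have hrR : (1 : ℝ) ≤ r := mod_cast hr
  obtain ⟨N, hN⟩ := exists_completeEquipartiteGraph_isContained_of_le_degOn.{u}
    (ε := η / (2 * r)) (by positivity) (r - 1) M
  rw [Nat.sub_add_cancel hr] at hN
  refine ⟨⌈((N + M : ℕ) : ℝ) / η⌉₊, fun {V} G _ S C hCS hS hdeg hC => ?_⟩
  have hlarge : N + M ≤ #C := by
    have hS' : ((N + M : ℕ) : ℝ) ≤ η * #S := by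
      rw [← div_le_iff₀' hη]
      exact (Nat.le_ceil _).trans (Nat.cast_le.2 hS)
    have : 2 / ((r : ℝ) + 1) ≤ 1 := (div_le_one₀ (by linarith)).2 (by linarith)
    have : 0 ≤ (1 - 2 / ((r : ℝ) + 1)) * #S := mul_nonneg (by linarith) (Nat.cast_nonneg _)
    rify
    push_cast at hS'
    linarith
  obtain rfl | hr2 : r = 1 ∨ 1 < r := by lia
  · obtain ⟨f, hinj, hf⟩ := exists_injective_of_card_le (W := Fin 1 × Fin M) (A := C)
      (by simp; lia)
    refine isContained_induce_iff.2 ⟨f, hinj, hf, fun x y hxy => ?_⟩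
    exact absurd (Subsingleton.elim _ _) (completeEquipartiteGraph_adj.1 hxy)
  · refine hN G C (by lia) fun v hv => ?_
    rw [Nat.cast_sub hr, Nat.cast_one]
    exact le_degOn_of_subset hr2 hη.le hCS hC (hdeg v hv)

lemma IsNearlyColorable.cliqueFreeOn (hr : 1 ≤ r) (hF : IsNearlyColorable F (r + 1)) :
    ∃ ε : ℝ, 0 < ε ∧ ∃ N : ℕ, ∀ {V : Type u} (G : SimpleGraph V) [DecidableRel G.Adj]
      (S : Finset V), N ≤ #S → (∀ v ∈ S, (1 - 1 / ((r : ℝ) + 1) - ε) * #S ≤ degOn G S v) →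
      ¬ F ⊑ G.induce (S : Set V) → G.CliqueFreeOn S (r + 2) := by
  have hrR : (1 : ℝ) ≤ r := mod_cast hr
  set η : ℝ := 1 / (((r : ℝ) + 1) ^ 2 * (r + 2)) with hη
  have hηpos : 0 < η := by positivity
  obtain ⟨N₁, M, hedge⟩ := hF.isContained_of_commonNeighbors.{u} hr (ε := η / (2 * r)) (by
    have : η ≤ 1 / ((r : ℝ) + 1) := one_div_le_one_div_of_le (by positivity) (by nlinarith)
    calc r * (η / (2 * r)) = η / 2 := by field_simp
      _ ≤ 1 / (r + 1) / 2 := by gcongr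
      _ = _ := by field_simp)
  obtain ⟨N₂, hnbhd⟩ := exists_completeEquipartiteGraph_isContained_of_le_card.{u} hr hηpos M
  refine ⟨η / (2 * r), by positivity, N₁ + N₂, fun {V} G _ S hS hdeg hfree => ?_⟩
  by_contra hclique
  obtain ⟨u, hu, v, hv, huv, hcard⟩ :=
    exists_adj_le_card_commonNeighbors (by positivity) hdeg hclique
  refine hfree (hedge G S (by lia) hdeg u hu v hv huv (hnbhd G S _ (filter_subset _ _) (by lia)
    (fun x hx => hdeg x (mem_filter.1 hx).1) (hcard.trans' ?_)))
  gcongr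
  have : 2 * (η / (2 * r)) ≤ η := by
    rw [show 2 * (η / (2 * r)) = η / r by field_simp]
    exact div_le_self hηpos.le hrR
  have : 2 / (((r : ℝ) + 1) ^ 2 * (r + 2)) = 2 * η := by rw [hη]; ring
  linarith

end CliqueFree

section TuranNumber

/-- The number of edges of the Turán graph on `n` vertices with `r + 1` parts. -/
def turanNumber (r n : ℕ) : ℕ := #(turanGraph n (r + 1)).edgeFinset

lemma mul_sq_le_mul_turanNumber (r n : ℕ) :
    r * n ^ 2 ≤ (r + 1) * (2 * turanNumber r n) + r * (r + 1) ^ 2 := by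
  induction n using Nat.strong_induction_on with
  | _ n ih =>
    rcases lt_or_ge n (r + 1) with hn | hn
    · have : n ^ 2 ≤ (r + 1) ^ 2 := Nat.pow_le_pow_left hn.le 2
      nlinarith
    · obtain ⟨k, rfl⟩ := Nat.exists_eq_add_of_le' hn
      have hadd : turanNumber r (k + (r + 1)) = turanNumber r k + k * r + (r + 1).choose 2 := by
        simpa [turanNumber] using card_edgeFinset_turanGraph_add (n := k) (r := r + 1)
      have hchoose : (r + 1).choose 2 * 2 = (r + 1) * r := by
        rw [Nat.choose_two_right, Nat.div_mul_cancel (Nat.even_mul_pred_self _).two_dvd,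
          Nat.add_sub_cancel]
      rw [hadd]
      nlinarith [ih k (by lia)]

lemma one_sub_mul_sq_sub_le_two_mul_turanNumber (r n : ℕ) :
    (1 - 1 / ((r : ℝ) + 1)) * n ^ 2 - r * (r + 1) ≤ 2 * turanNumber r n := by
  have h : (r * n ^ 2 : ℝ) ≤ (r + 1) * (2 * turanNumber r n) + r * (r + 1) ^ 2 :=
    mod_cast mul_sq_le_mul_turanNumber r n
  field_simp
  linarith

lemma two_mul_turanNumber_le (r n : ℕ) :
    2 * (turanNumber r n : ℝ) ≤ (1 - 1 / ((r : ℝ) + 1)) * n ^ 2 := by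
  have h : (2 * (r + 1) * turanNumber r n : ℝ) ≤ r * n ^ 2 :=
    mod_cast mul_card_edgeFinset_turanGraph_le (n := n) (r := r + 1)
  field_simp
  linarith

section

variable {V : Type*} {G : SimpleGraph V} [DecidableRel G.Adj] {r : ℕ}

lemma card_edgeFinset_le_turanNumber [Fintype V] (hG : G.CliqueFree (r + 2)) :
    #G.edgeFinset ≤ turanNumber r (Fintype.card V) := by
  simpa [turanNumber, card_edgeFinset_turanGraph] using hG.card_edgeFinset_le

lemma edgesOn_le_turanNumber_of_cliqueFreeOn {S : Finset V} (hS : G.CliqueFreeOn S (r + 2)) :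
    edgesOn G S ≤ turanNumber r #S := by
  simpa [edgesOn] using card_edgeFinset_le_turanNumber ((cliqueFree_induce_iff G S _).2 hS)

end

end TuranNumber

section Simonovits

variable {W : Type*} [Finite W] {F : SimpleGraph W} {r : ℕ}

lemma IsNearlyColorable.cliqueFreeOn_of_turanNumber_le (hr : 1 ≤ r)
    (hF : IsNearlyColorable F (r + 1)) :
    ∃ N : ℕ, ∀ {V : Type u} (G : SimpleGraph V) [DecidableRel G.Adj] (S : Finset V), N ≤ #S →
      turanNumber r #S ≤ edgesOn G S → ¬ F ⊑ G.induce (S : Set V) →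
      G.CliqueFreeOn S (r + 2) := by
  obtain ⟨ε, hε, N₁, hN₁⟩ := hF.cliqueFreeOn.{u} hr
  obtain ⟨N₂, hN₂⟩ := exists_nat_gt (((r : ℝ) * (r + 1) + 3) / ε)
  set N := max N₁ (N₂ + 1)
  refine ⟨N ^ 2 + N + 1, fun G _ S hS hedges hfree => ?_⟩
  -- the extra `#S - k` makes a subset that loses vertices beat the Turán number of its size
  obtain ⟨S', hsub, hT, hdeg⟩ := exists_subset_of_le_edgesOn G
    (fun k => turanNumber r k + (#S - k : ℝ)) S (by simpa using hedges)
  have hNS' : N ≤ #S' := by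
    by_contra! hlt
    have hedges' : 2 * (edgesOn G S' : ℝ) ≤ #S' ^ 2 := mod_cast two_mul_edgesOn_le_card_sq G S'
    have hlt' : (#S' : ℝ) ≤ N := mod_cast hlt.le
    have hS_large : (N : ℝ) ^ 2 + N + 1 ≤ #S := mod_cast hS
    have : (#S' : ℝ) ^ 2 ≤ N ^ 2 := by gcongr
    have : (0 : ℝ) ≤ turanNumber r #S' := by positivity
    nlinarith
  have hfree' : G.CliqueFreeOn S' (r + 2) := by
    refine hN₁ G S' (by lia) (fun v hv => ?_) fun h => hfree (isContained_induce_mono hsub h)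
    have hlarge : (r * (r + 1) + 3 : ℝ) ≤ ε * #S' := by
      rw [div_lt_iff₀' hε] at hN₂
      have : (N₂ : ℝ) ≤ #S' := mod_cast (by lia : N₂ ≤ #S')
      nlinarith
    have hlower := one_sub_mul_sq_sub_le_two_mul_turanNumber r #S'
    have hupper := two_mul_turanNumber_le r (#S' - 1)
    have hv_deg := hdeg v hv
    push_cast [show 1 ≤ #S' by lia] at hupper hv_deg
    have : (0 : ℝ) ≤ 1 / (r + 1) := by positivity
    have : (0 : ℝ) ≤ r * (r + 1) := by positivity
    linarith
  have hedges' : (edgesOn G S' : ℝ) ≤ turanNumber r #S' :=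
    mod_cast edgesOn_le_turanNumber_of_cliqueFreeOn hfree'
  have hcard : #S ≤ #S' := by
    rw [← Nat.cast_le (α := ℝ)]
    linarith
  rwa [← eq_of_subset_of_card_le hsub hcard]

lemma IsNearlyColorable.edgesOn_le_turanNumber (hr : 1 ≤ r) (hF : IsNearlyColorable F (r + 1)) :
    ∃ N : ℕ, ∀ {V : Type u} (G : SimpleGraph V) [DecidableRel G.Adj] (S : Finset V), N ≤ #S →
      ¬ F ⊑ G.induce (S : Set V) → edgesOn G S ≤ turanNumber r #S := by
  obtain ⟨N, hN⟩ := hF.cliqueFreeOn_of_turanNumber_le.{u} hr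
  refine ⟨N, fun G _ S hS hfree => ?_⟩
  by_contra! hlt
  exact hlt.not_ge (edgesOn_le_turanNumber_of_cliqueFreeOn (hN G S hS hlt.le hfree))

end Simonovits

section DisjointCopies

variable {V W : Type*} {F : SimpleGraph W} {G : SimpleGraph V} {S : Finset V} {k : ℕ}

/-- The disjoint union of `k` copies of `F`, the vertex `(i, x)` being the vertex `x` of the `i`-th
copy. -/
def disjointCopies (k : ℕ) (F : SimpleGraph W) : SimpleGraph (Fin k × W) := ⊥ □ F

lemma disjointCopies_adj {p q : Fin k × W} :
    (disjointCopies k F).Adj p q ↔ F.Adj p.2 q.2 ∧ p.1 = q.1 := by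
  simp [disjointCopies]

lemma isContained_disjointCopies (i : Fin k) : F ⊑ disjointCopies k F :=
  ⟨(boxProdRight ⊥ F i).toCopy⟩

lemma disjointCopies_one_isContained_iff : disjointCopies 1 F ⊑ G ↔ F ⊑ G :=
  ⟨(isContained_disjointCopies 0).trans,
    fun ⟨f⟩ => ⟨⟨⟨fun p => f p.2, fun h => f.toHom.map_adj (disjointCopies_adj.1 h).1⟩,
      fun _ _ h => Prod.ext (Subsingleton.elim _ _) (f.injective h)⟩⟩⟩

lemma disjointCopies_zero_isContained (F : SimpleGraph W) (G : SimpleGraph V) :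
    disjointCopies 0 F ⊑ G :=
  .of_isEmpty

lemma exists_disjointCopies_isContained (h : ¬ disjointCopies (k + 1) F ⊑ G) :
    ∃ j ≤ k, disjointCopies j F ⊑ G ∧ ¬ disjointCopies (j + 1) F ⊑ G := by
  induction k with
  | zero => exact ⟨0, le_rfl, disjointCopies_zero_isContained F G, h⟩
  | succ k ih =>
    by_cases hk : disjointCopies (k + 1) F ⊑ G
    · exact ⟨k + 1, le_rfl, hk, h⟩
    · obtain ⟨j, hj, hcopies⟩ := ih hk
      exact ⟨j, hj.trans k.le_succ, hcopies⟩

lemma exists_subset_disjointCopies_succ_isContained [Fintype W] [DecidableEq V]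
    (h : disjointCopies k F ⊑ G.induce (S : Set V)) :
    ∃ U ⊆ S, #U = k * Fintype.card W ∧ ∀ S', S ⊆ S' → F ⊑ G.induce ((S' \ U : Finset V) : Set V) →
      disjointCopies (k + 1) F ⊑ G.induce (S' : Set V) := by
  obtain ⟨f, hf, hfS, hfadj⟩ := isContained_induce_iff.1 h
  refine ⟨univ.image f, by simpa [image_subset_iff] using fun i x => hfS (i, x),
    by simp [card_image_of_injective _ hf], fun S' hS' hF => ?_⟩
  obtain ⟨g, hg, hgS, hgadj⟩ := isContained_induce_iff.1 hF
  simp only [Finset.mem_sdiff, Finset.mem_image, mem_univ, true_and, not_exists] at hgS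
  refine isContained_induce_iff.2
    ⟨fun p => Fin.cases (g p.2) (fun i => f (i, p.2)) p.1, ?_, ?_, ?_⟩
  · rintro ⟨i, x⟩ ⟨j, y⟩ hxy
    cases i using Fin.cases <;> cases j using Fin.cases <;>
      simp only [Fin.cases_zero, Fin.cases_succ] at hxy
    · rw [hg hxy]
    · exact absurd hxy.symm ((hgS x).2 _)
    · exact absurd hxy ((hgS y).2 _)
    · simpa using hf hxy
  · rintro ⟨i, x⟩
    cases i using Fin.cases
    · exact (hgS x).1
    · exact hS' (hfS _)
  · rintro ⟨i, x⟩ ⟨j, y⟩ hxy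
    obtain ⟨hadj, rfl : i = j⟩ := disjointCopies_adj.1 hxy
    cases i using Fin.cases
    · exact hgadj x y hadj
    · exact hfadj _ _ (disjointCopies_adj.2 ⟨hadj, rfl⟩)

end DisjointCopies

section UniversalVertices

/-- The number of edges of the join `K_t ⋈ T(N, r + 1)`. -/
def joinTuranEdges (r t N : ℕ) : ℕ := t.choose 2 + t * N + turanNumber r N

lemma joinTuranEdges_succ (r t N : ℕ) :
    joinTuranEdges r (t + 1) N = joinTuranEdges r t N + (t + N) := by
  rw [joinTuranEdges, joinTuranEdges, Nat.choose_succ_succ' t 1, Nat.choose_one_right]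
  ring

variable {V : Type*} {G : SimpleGraph V} [DecidableRel G.Adj] {S : Finset V} {v : V}

lemma card_le_degOn_succ_iff (hv : v ∈ S) : #S ≤ degOn G S v + 1 ↔ ∀ x ∈ S, x ≠ v → G.Adj v x := by
  classical
  have hsub : {w ∈ S | G.Adj v w} ⊆ S.erase v := fun w hw =>
    mem_erase.2 ⟨(mem_filter.1 hw).2.ne', (mem_filter.1 hw).1⟩
  have hcard := card_erase_add_one hv
  constructor
  · intro hdeg x hx hxv
    have heq := eq_of_subset_of_card_le hsub (by rw [degOn] at hdeg; lia)
    exact (mem_filter.1 (heq.symm ▸ mem_erase.2 ⟨hxv, hx⟩)).2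
  · intro hadj
    rw [← hcard, degOn]
    exact Nat.succ_le_succ <| card_le_card fun w hw => mem_filter.2
      ⟨mem_of_mem_erase hw, hadj w (mem_of_mem_erase hw) (ne_of_mem_erase hw)⟩

lemma edgesOn_eq_of_forall_adj [DecidableEq V] {Q : Finset V} (hQ : Q ⊆ S)
    (hadj : ∀ q ∈ Q, ∀ x ∈ S, x ≠ q → G.Adj q x) :
    edgesOn G S = (#Q).choose 2 + #Q * #(S \ Q) + edgesOn G (S \ Q) := by
  induction Q using Finset.induction_on with
  | empty => simp
  | insert q Q hq ih =>
    have hqS : q ∈ S \ Q := by simp_all [insert_subset_iff]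
    have hedges := ih (fun x hx => hQ (mem_insert_of_mem hx)) fun x hx =>
      hadj x (mem_insert_of_mem hx)
    have herase := edgesOn_erase_add_degOn G hqS
    have hcard := card_erase_add_one hqS
    have hdeg := (card_le_degOn_succ_iff (G := G) hqS).2 fun x hx =>
      hadj q (mem_insert_self q Q) x (mem_sdiff.1 hx).1
    have hlt := degOn_lt_card G hqS
    rw [card_insert_of_notMem hq, sdiff_insert, Nat.choose_succ_succ' _ 1, Nat.choose_one_right]
    nlinarith

lemma edgesOn_le_joinTuranEdges {Q : Finset V} {r N : ℕ} (hQ : Q ⊆ S) (hS : #S = N + #Q)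
    (hadj : ∀ q ∈ Q, ∀ x ∈ S, x ≠ q → G.Adj q x) (hfree : G.CliqueFreeOn (S \ Q) (r + 2)) :
    edgesOn G S ≤ joinTuranEdges r #Q N := by
  classical
  have hturan := edgesOn_le_turanNumber_of_cliqueFreeOn (G := G) (S := S \ Q) (by simpa using hfree)
  have hcard : #(S \ Q) = N := by rw [card_sdiff_of_subset hQ]; lia
  rw [hcard] at hturan
  rw [edgesOn_eq_of_forall_adj hQ hadj, joinTuranEdges, hcard]
  lia

lemma forall_mem_insert_adj {V : Type*} [DecidableEq V] {G : SimpleGraph V} {S Q : Finset V}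
    {v : V} (hQ : Q ⊆ S.erase v)
    (hv : ∀ x ∈ S, x ≠ v → G.Adj v x) (hadj : ∀ q ∈ Q, ∀ x ∈ S.erase v, x ≠ q → G.Adj q x) :
    ∀ q ∈ insert v Q, ∀ x ∈ S, x ≠ q → G.Adj q x := by
  intro q hq x hx hxq
  obtain rfl | hqQ := mem_insert.1 hq
  · exact hv x hx hxq
  · obtain rfl | hxv := eq_or_ne x v
    · exact (hv q (mem_of_mem_erase (hQ hqQ)) hxq.symm).symm
    · exact hadj q hqQ x (mem_erase.2 ⟨hxv, hx⟩) hxq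

lemma le_two_mul_joinTuranEdges (r t N : ℕ) :
    (t * (t - 1) + 2 * t * N + ((1 - 1 / ((r : ℝ) + 1)) * N ^ 2 - r * (r + 1)) : ℝ) ≤
      2 * joinTuranEdges r t N := by
  have hturan := one_sub_mul_sq_sub_le_two_mul_turanNumber r N
  push_cast [joinTuranEdges, Nat.cast_choose_two]
  linarith

end UniversalVertices

section HighDegree

variable {W : Type*} [Finite W] {F : SimpleGraph W} {r : ℕ}

lemma le_two_mul_edgesOn_sdiff {V : Type*} [DecidableEq V] {G : SimpleGraph V}
    [DecidableRel G.Adj] {S U : Finset V} {N : ℕ} {δ : ℝ} (hδ : 0 ≤ δ) (hU : U ⊆ S)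
    (hT : turanNumber r N ≤ edgesOn G S) (hS : #S ≤ 2 * N) (hcard : #(S \ U) ≤ N)
    (hcard' : N ≤ 2 * #(S \ U)) (hu : #U ≤ δ / 32 * N) (hN : 8 * (r * (r + 1)) ≤ δ * N) :
    (1 - 1 / ((r : ℝ) + 1) - δ) * #(S \ U) ^ 2 ≤ 2 * edgesOn G (S \ U) := by
  have hloss : edgesOn G S ≤ edgesOn G (S \ U) + #U * #S :=
    (edgesOn_le_edgesOn_sdiff_add_sum G hU).trans <| Nat.add_le_add_left
      (sum_le_card_nsmul _ _ _ fun u hu => (degOn_lt_card G (hU hu)).le) _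
  have hT_lower := one_sub_mul_sq_sub_le_two_mul_turanNumber r N
  have ha : 0 ≤ 1 - 1 / ((r : ℝ) + 1) :=
    sub_nonneg.2 (div_le_one_of_le₀ (by simp) (by positivity))
  have hconst : 8 * (r * (r + 1)) ≤ δ * N ^ 2 :=
    hN.trans (by gcongr; exact mod_cast Nat.le_self_pow two_ne_zero N)
  have hsq : (1 - 1 / ((r : ℝ) + 1)) * #(S \ U) ^ 2 ≤ (1 - 1 / ((r : ℝ) + 1)) * N ^ 2 := by gcongr
  have hsq' : δ * (N : ℝ) ^ 2 ≤ δ * (2 * #(S \ U)) ^ 2 := by gcongr; exact mod_cast hcard'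
  have hprod : (#U * #S : ℝ) ≤ δ / 32 * N * (2 * N) := by gcongr; exact mod_cast hS
  rify at hloss hT
  linarith

lemma IsNearlyColorable.isContained_sdiff_of_le_degOn (hr : 1 ≤ r)
    (hF : IsNearlyColorable F (r + 1)) {ε : ℝ} (hε : 0 < ε) :
    ∃ δ : ℝ, 0 < δ ∧ ∃ N₀ : ℕ, ∀ N ≥ N₀,
      ∀ {V : Type u} [DecidableEq V] (G : SimpleGraph V) [DecidableRel G.Adj] (S U : Finset V),
      U ⊆ S → N ≤ #S → #S ≤ N + #U → #U ≤ δ * N → turanNumber r N ≤ edgesOn G S →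
      ∀ v ∈ S \ U, (1 - 1 / ((r : ℝ) + 1) + ε) * #S ≤ degOn G S v →
      F ⊑ G.induce ((S \ U : Finset V) : Set V) := by
  obtain ⟨δ, hδ, N₁, hN₁⟩ := hF.degOn_lt_of_le_edgesOn.{u} hr (half_pos hε)
  obtain ⟨N₂, hN₂⟩ := exists_nat_gt (8 * (r * (r + 1)) / δ)
  rw [div_lt_iff₀' hδ] at hN₂
  set a : ℝ := 1 - 1 / ((r : ℝ) + 1)
  have ha : 0 ≤ a := sub_nonneg.2 (div_le_one_of_le₀ (by simp) (by positivity))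
  refine ⟨min δ (min ε 1) / 32, by positivity, 2 * N₁ + N₂,
    fun N hN V _ G _ S U hU hNS hSN hu hT v hv hdeg => ?_⟩
  have hu_δ : (#U : ℝ) ≤ δ / 32 * N := hu.trans (by gcongr; exact min_le_left _ _)
  have hu_ε : (#U : ℝ) ≤ ε / 32 * N :=
    hu.trans (by gcongr; exact (min_le_right _ _).trans (min_le_left _ _))
  have hu_one : (#U : ℝ) ≤ 1 / 32 * N :=
    hu.trans (by gcongr; exact (min_le_right _ _).trans (min_le_right _ _))
  have hu_nat : 32 * #U ≤ N := mod_cast (by linarith : (32 * #U : ℝ) ≤ N)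
  have hcard := card_sdiff_of_subset hU
  by_contra hfree
  refine (hN₁ G (S \ U) (by lia) ?_ hfree v hv).not_ge ?_
  · refine le_two_mul_edgesOn_sdiff hδ.le hU hT (by lia) (by lia) (by lia) hu_δ (hN₂.le.trans ?_)
    gcongr
    lia
  · have hloss : (degOn G S v : ℝ) ≤ degOn G (S \ U) v + #U :=
      mod_cast degOn_le_degOn_sdiff_add_card G
    have : (a + ε / 2) * #(S \ U) ≤ (a + ε / 2) * #S := by gcongr; exact sdiff_subset
    have : ε / 32 * N ≤ ε / 2 * #S := by gcongr; linarith
    linarith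

lemma IsNearlyColorable.disjointCopies_succ_isContained (hr : 1 ≤ r)
    (hF : IsNearlyColorable F (r + 1)) {ε : ℝ} (hε : 0 < ε) :
    ∃ c : ℝ, 0 < c ∧ ∃ N₀ : ℕ, ∀ N ≥ N₀, ∀ t : ℕ, (t : ℝ) ≤ c * N →
      ∀ {V : Type u} [DecidableEq V] (G : SimpleGraph V) [DecidableRel G.Adj] (S : Finset V),
      #S = N + t → turanNumber r N ≤ edgesOn G S →
      ∀ v ∈ S, (1 - 1 / ((r : ℝ) + 1) + ε) * #S ≤ degOn G S v →
      disjointCopies t F ⊑ G.induce (S.erase v : Set V) →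
      disjointCopies (t + 1) F ⊑ G.induce (S : Set V) := by
  cases nonempty_fintype W
  have hW : 0 < Fintype.card W := Fintype.card_pos_iff.2 (let ⟨a, _⟩ := hF; ⟨a⟩)
  obtain ⟨δ, hδ, N₀, hN₀⟩ := hF.isContained_sdiff_of_le_degOn.{u} hr hε
  refine ⟨δ / Fintype.card W, by positivity, N₀,
    fun N hN t ht V _ G _ S hS hT v hv hdeg hcopies => ?_⟩
  obtain ⟨U, hU, hUcard, hUext⟩ := exists_subset_disjointCopies_succ_isContained hcopies
  have hu : (#U : ℝ) ≤ δ * N := by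
    rw [hUcard, Nat.cast_mul, ← le_div_iff₀ (by positivity)]
    exact ht.trans_eq (by ring)
  have htU : t ≤ #U := hUcard ▸ Nat.le_mul_of_pos_right t hW
  have hvU : v ∈ S \ U := Finset.mem_sdiff.2 ⟨hv, fun h => notMem_erase v S (hU h)⟩
  exact hUext S (erase_subset _ _) (hN₀ N hN G S U (hU.trans (erase_subset _ _)) (by lia) (by lia)
    hu hT v hvU hdeg)

lemma two_mul_edgesOn_le_of_degOn_le {V : Type*} [DecidableEq V] {G : SimpleGraph V}
    [DecidableRel G.Adj] {S U : Finset V} (hU : U ⊆ S)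
    (hT : edgesOn G (S \ U) ≤ turanNumber r #(S \ U)) {D : ℝ} (hD : ∀ v ∈ S, degOn G S v ≤ D) :
    2 * (edgesOn G S : ℝ) ≤ (1 - 1 / ((r : ℝ) + 1)) * (#S - #U) ^ 2 + 2 * #U * D := by
  have hloss : (edgesOn G S : ℝ) ≤ edgesOn G (S \ U) + ∑ u ∈ U, (degOn G S u : ℝ) :=
    mod_cast edgesOn_le_edgesOn_sdiff_add_sum G hU
  have hsum : ∑ u ∈ U, (degOn G S u : ℝ) ≤ #U * D := by
    simpa using sum_le_card_nsmul U _ D fun u hu => hD u (hU hu)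
  have hturan := two_mul_turanNumber_le r #(S \ U)
  rw [card_sdiff_of_subset hU, Nat.cast_sub (card_le_card hU)] at hturan
  rify [card_sdiff_of_subset hU] at hT
  linarith

lemma mul_le_one_add_of_quadratic_le {q m t u N C : ℝ} (hq : 0 < q) (hq_le : q ≤ 1) (hm : 1 ≤ m)
    (ht : 1 ≤ t) (hu₀ : 0 ≤ u) (hC : 0 ≤ C) (hu : u ≤ t * m) (hmt : m ^ 2 * t ≤ q / 2 * N)
    (h : t * (t - 1) + 2 * t * N + ((1 - q) * N ^ 2 - C) ≤
      (1 - q) * (N + t - u) ^ 2 + 2 * u * ((1 - q + q / (8 * m)) * (N + t))) :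
    N * q ≤ 1 + C := by
  have ht_le : t ≤ N := by nlinarith
  have hN : 0 ≤ N := by linarith
  have hε : u * (q / (8 * m)) * (N + t) ≤ t * q / 8 * (2 * N) := by
    calc u * (q / (8 * m)) * (N + t) ≤ t * m * (q / (8 * m)) * (2 * N) := by gcongr; linarith
      _ = t * q / 8 * (2 * N) := by field_simp
  have hu_sq : (1 - q) * u ^ 2 ≤ t * (q / 2 * N) := by
    calc (1 - q) * u ^ 2 ≤ 1 * (t * m) ^ 2 := by gcongr; linarith
      _ = t * (m ^ 2 * t) := by ring
      _ ≤ t * (q / 2 * N) := by gcongr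
  have : t * t * q ≤ t * N * q := by gcongr
  refine le_of_mul_le_mul_left (?_ : t * (N * q) ≤ t * (1 + C)) (by linarith)
  nlinarith

lemma IsNearlyColorable.exists_le_degOn (hr : 1 ≤ r) (hF : IsNearlyColorable F (r + 1)) :
    ∃ ε : ℝ, 0 < ε ∧ ∃ c : ℝ, 0 < c ∧ ∃ N₀ : ℕ, ∀ N ≥ N₀, ∀ t : ℕ, 1 ≤ t → (t : ℝ) ≤ c * N →
      ∀ {V : Type u} [DecidableEq V] (G : SimpleGraph V) [DecidableRel G.Adj] (S : Finset V),
      #S = N + t → joinTuranEdges r t N ≤ edgesOn G S →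
      ¬ disjointCopies (t + 1) F ⊑ G.induce (S : Set V) →
      ∃ v ∈ S, (1 - 1 / ((r : ℝ) + 1) + ε) * #S ≤ degOn G S v := by
  cases nonempty_fintype W
  have hW : (1 : ℝ) ≤ (Fintype.card W : ℝ) :=
    Nat.one_le_cast.2 (Fintype.card_pos_iff.2 (let ⟨a, _⟩ := hF; ⟨a⟩))
  obtain ⟨N₁, hN₁⟩ := hF.edgesOn_le_turanNumber.{u} hr
  set m : ℝ := (Fintype.card W : ℝ)
  set q : ℝ := 1 / ((r : ℝ) + 1)
  have hq : 0 < q := by positivity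
  have hq_le : q ≤ 1 := div_le_one_of_le₀ (by simp) (by positivity)
  obtain ⟨N₂, hN₂⟩ := exists_nat_gt ((1 + r * (r + 1)) / q)
  refine ⟨q / (8 * m), by positivity, q / (2 * m ^ 2), by positivity, 2 * N₁ + N₂,
    fun N hN t ht htN V _ G _ S hS hT hfree => ?_⟩
  by_contra! hdeg
  obtain ⟨j, hj, hcopies, hmax⟩ := exists_disjointCopies_isContained hfree
  obtain ⟨U, hU, hUcard, hUext⟩ := exists_subset_disjointCopies_succ_isContained hcopies
  have hNR : (2 * N₁ + N₂ : ℝ) ≤ N := mod_cast hN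
  have htR : (1 : ℝ) ≤ t := mod_cast ht
  have hn : (#S : ℝ) = N + t := mod_cast hS
  have hu : (#U : ℝ) ≤ t * m := by rw [hUcard, Nat.cast_mul]; gcongr
  have hmt : m ^ 2 * t ≤ q / 2 * N := by
    calc m ^ 2 * t ≤ m ^ 2 * (q / (2 * m ^ 2) * N) := by gcongr
      _ = q / 2 * N := by field_simp
  have hmt' : t * m ≤ N / 2 := by nlinarith
  have ht_le : (t : ℝ) ≤ N := by nlinarith
  have hcard : (#(S \ U) : ℝ) = #S - #U := by
    rw [card_sdiff_of_subset hU, Nat.cast_sub (card_le_card hU)]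
  have hN₁S : N₁ ≤ #(S \ U) := by rify; linarith
  have hupper : 2 * (edgesOn G S : ℝ) ≤
      (1 - q) * (#S - #U) ^ 2 + 2 * #U * ((1 - q + q / (8 * m)) * #S) :=
    two_mul_edgesOn_le_of_degOn_le hU
      (hN₁ G (S \ U) hN₁S fun h => hmax (hUext S Subset.rfl h)) fun v hv => (hdeg v hv).le
  have hlower : (t * (t - 1) + 2 * t * N + ((1 - q) * N ^ 2 - r * (r + 1)) : ℝ) ≤
      2 * edgesOn G S :=
    (le_two_mul_joinTuranEdges r t N).trans (by gcongr)
  have hmain : N * q ≤ 1 + r * (r + 1) :=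
    mul_le_one_add_of_quadratic_le hq hq_le hW htR (by positivity) (by positivity) hu hmt
      (hlower.trans (hn ▸ hupper))
  rw [div_lt_iff₀ hq] at hN₂
  have : N₂ * q ≤ N * q := by gcongr; lia
  linarith

end HighDegree

section Induction

variable {W : Type*} [Finite W] {F : SimpleGraph W} {r : ℕ}

theorem IsNearlyColorable.exists_universal_of_joinTuranEdges_le (hr : 1 ≤ r)
    (hF : IsNearlyColorable F (r + 1)) :
    ∃ c : ℝ, 0 < c ∧ ∃ N₀ : ℕ, ∀ N ≥ N₀, ∀ t : ℕ, (t : ℝ) ≤ c * N →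
      ∀ {V : Type u} [DecidableEq V] (G : SimpleGraph V) [DecidableRel G.Adj] (S : Finset V),
      #S = N + t → joinTuranEdges r t N ≤ edgesOn G S →
      ¬ disjointCopies (t + 1) F ⊑ G.induce (S : Set V) →
      ∃ Q ⊆ S, #Q = t ∧ (∀ q ∈ Q, ∀ x ∈ S, x ≠ q → G.Adj q x) ∧ G.CliqueFreeOn (S \ Q) (r + 2) := by
  obtain ⟨N₁, hN₁⟩ := hF.cliqueFreeOn_of_turanNumber_le.{u} hr
  obtain ⟨ε, hε, c₂, hc₂, N₂, hN₂⟩ := hF.exists_le_degOn.{u} hr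
  obtain ⟨c₃, hc₃, N₃, hN₃⟩ := hF.disjointCopies_succ_isContained.{u} hr hε
  refine ⟨min c₂ c₃, lt_min hc₂ hc₃, max N₁ (max N₂ N₃), fun N hN t => ?_⟩
  simp only [ge_iff_le, max_le_iff] at hN
  obtain ⟨hNN₁, hNN₂, hNN₃⟩ := hN
  induction t with
  | zero =>
    intro _ V _ G _ S hS hT hfree
    refine ⟨∅, empty_subset S, rfl, by simp, ?_⟩
    simpa using hN₁ G S (by lia) (by simpa [joinTuranEdges, hS] using hT) fun h =>
      hfree (disjointCopies_one_isContained_iff.2 h)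
  | succ t ih =>
    intro ht V _ G _ S hS hT hfree
    have ht₂ : ((t + 1 : ℕ) : ℝ) ≤ c₂ * N := ht.trans (by gcongr; exact min_le_left _ _)
    have ht₃ : ((t + 1 : ℕ) : ℝ) ≤ c₃ * N := ht.trans (by gcongr; exact min_le_right _ _)
    obtain ⟨v, hv, hdeg⟩ := hN₂ N hNN₂ (t + 1) (by lia) ht₂ G S hS hT hfree
    have hfree' : ¬ disjointCopies (t + 1) F ⊑ G.induce (S.erase v : Set V) := fun h =>
      hfree (hN₃ N hNN₃ (t + 1) ht₃ G S hS
        ((Nat.le_add_left _ _).trans hT) v hv hdeg h)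
    have hcard : #(S.erase v) = N + t := by rw [card_erase_of_mem hv, hS]; rfl
    have hedges := edgesOn_erase_add_degOn G hv
    have hdeg_lt := degOn_lt_card G hv
    rw [joinTuranEdges_succ] at hT
    obtain ⟨Q, hQ, hQcard, hQadj, hQfree⟩ := ih (le_trans (by simp) ht) G (S.erase v) hcard
      (by lia) hfree'
    have hupper : edgesOn G (S.erase v) ≤ joinTuranEdges r t N :=
      hQcard ▸ edgesOn_le_joinTuranEdges hQ (hQcard ▸ hcard) hQadj hQfree
    have hvadj := (card_le_degOn_succ_iff (G := G) hv).1 (by lia)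
    have hvQ : v ∉ Q := fun h => notMem_erase v S (hQ h)
    refine ⟨insert v Q, insert_subset hv (hQ.trans (erase_subset _ _)),
      by rw [card_insert_of_notMem hvQ, hQcard],
      forall_mem_insert_adj hQ hvadj hQadj, ?_⟩
    convert hQfree using 1
    ext x
    simp [and_assoc]

end Induction

section Join

variable {V W : Type*} {A : SimpleGraph V} {B : SimpleGraph W}

/-- The join `A ⋈ B` of two graphs on disjoint vertex sets, realised on the sum type. -/
def graphJoin (A : SimpleGraph V) (B : SimpleGraph W) : SimpleGraph (V ⊕ W) :=
  (A ⊕g B) ⊔ completeBipartiteGraph V W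

instance [DecidableRel A.Adj] [DecidableRel B.Adj] : DecidableRel (graphJoin A B).Adj
  | .inl x, .inl y => decidable_of_iff (A.Adj x y) (by simp [graphJoin])
  | .inl _, .inr _ => .isTrue (by simp [graphJoin])
  | .inr _, .inl _ => .isTrue (by simp [graphJoin])
  | .inr x, .inr y => decidable_of_iff (B.Adj x y) (by simp [graphJoin])

@[simp] lemma graphJoin_adj_inl {x y : V} : (graphJoin A B).Adj (.inl x) (.inl y) ↔ A.Adj x y := by
  simp [graphJoin]

@[simp] lemma graphJoin_adj_inr {x y : W} : (graphJoin A B).Adj (.inr x) (.inr y) ↔ B.Adj x y := by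
  simp [graphJoin]

@[simp] lemma graphJoin_adj_inl_inr (x : V) (y : W) : (graphJoin A B).Adj (.inl x) (.inr y) := by
  simp [graphJoin]

@[simp] lemma graphJoin_adj_inr_inl (x : V) (y : W) : (graphJoin A B).Adj (.inr y) (.inl x) :=
  (graphJoin_adj_inl_inr x y).symm

lemma nonempty_iso_graphJoin {U : Type*} {G : SimpleGraph U} {s : Set U} (e₁ : G.induce s ≃g A)
    (e₂ : G.induce sᶜ ≃g B) (h : ∀ x ∈ s, ∀ y ∉ s, G.Adj x y) : Nonempty (G ≃g graphJoin A B) := by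
  classical
  let e := (e₁.toEquiv.sumCongr e₂.toEquiv).symm.trans (Equiv.Set.sumCompl s)
  refine ⟨(⟨e, ?_⟩ : graphJoin A B ≃g G).symm⟩
  rintro (x | x) (y | y)
  · exact e₁.symm.map_adj_iff.trans graphJoin_adj_inl.symm
  · exact iff_of_true (h _ (e₁.symm x).2 _ (e₂.symm y).2) (graphJoin_adj_inl_inr x y)
  · exact iff_of_true (h _ (e₁.symm y).2 _ (e₂.symm x).2).symm (graphJoin_adj_inr_inl y x)
  · exact e₂.symm.map_adj_iff.trans graphJoin_adj_inr.symm

lemma not_disjointCopies_succ_isContained_graphJoin [Fintype V] {X : Type*} {F : SimpleGraph X}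
    (hF : ¬ F ⊑ B) : ¬ disjointCopies (Fintype.card V + 1) F ⊑ graphJoin A B := by
  rintro ⟨f⟩
  have hinl (i) : ∃ x v, f (i, x) = Sum.inl v := by
    by_contra! hi
    have hinr (x) : ∃ w, f (i, x) = Sum.inr w := by
      cases hx : f (i, x) with
      | inl v => exact absurd hx (hi x v)
      | inr w => exact ⟨w, rfl⟩
    choose g hg using hinr
    refine hF ⟨⟨⟨g, fun {x y} hxy => ?_⟩, fun x y (hxy : g x = g y) => ?_⟩⟩
    · rw [← graphJoin_adj_inr (A := A), ← hg, ← hg]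
      exact f.toHom.map_adj (disjointCopies_adj.2 ⟨hxy, rfl⟩)
    · exact congrArg Prod.snd (f.injective ((hg x).trans (hxy ▸ (hg y).symm)))
  choose x v hv using hinl
  refine (Fintype.card_le_of_injective v fun i j hij => ?_).not_gt (by simp)
  exact congrArg Prod.fst (f.injective ((hv i).trans (hij ▸ (hv j).symm)))

lemma card_edgeFinset_graphJoin [Fintype V] [Fintype W] [DecidableRel A.Adj] [DecidableRel B.Adj] :
    #(graphJoin A B).edgeFinset =
      #A.edgeFinset + Fintype.card V * Fintype.card W + #B.edgeFinset := by
  have hinl (x) : (graphJoin A B).degree (.inl x) = A.degree x + Fintype.card W := by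
    rw [← card_neighborFinset_eq_degree, ← card_neighborFinset_eq_degree, ← card_univ (α := W),
      ← card_disjSum]
    congr 1
    ext (y | y) <;> simp
  have hinr (x) : (graphJoin A B).degree (.inr x) = Fintype.card V + B.degree x := by
    rw [← card_neighborFinset_eq_degree, ← card_neighborFinset_eq_degree, ← card_univ (α := V),
      ← card_disjSum]
    congr 1
    ext (y | y) <;> simp
  have hsum := (graphJoin A B).sum_degrees_eq_twice_card_edges
  simp_rw [Fintype.sum_sum_type, hinl, hinr, sum_add_distrib] at hsum
  rw [A.sum_degrees_eq_twice_card_edges, B.sum_degrees_eq_twice_card_edges] at hsum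
  simp only [sum_const, card_univ, smul_eq_mul] at hsum
  linarith [mul_comm (Fintype.card V) (Fintype.card W)]

end Join

section JoinTuran

variable {V : Type u} {G : SimpleGraph V} {r t N : ℕ}

/-- The graph `K_t ⋈ T(N, r + 1)`. -/
abbrev joinTuran (r t N : ℕ) : SimpleGraph (Fin t ⊕ Fin N) := graphJoin ⊤ (turanGraph N (r + 1))

lemma card_edgeFinset_joinTuran : #(joinTuran r t N).edgeFinset = joinTuranEdges r t N := by
  rw [card_edgeFinset_graphJoin, card_edgeFinset_top_eq_card_choose_two, Fintype.card_fin,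
    Fintype.card_fin, joinTuranEdges, turanNumber]

lemma not_disjointCopies_succ_isContained_joinTuran {W : Type*} {F : SimpleGraph W}
    (hF : ¬ F.Colorable (r + 1)) : ¬ disjointCopies (t + 1) F ⊑ joinTuran r t N := by
  have hturan : (turanGraph N (r + 1)).Colorable (r + 1) :=
    ⟨.mk (fun v => ⟨v % (r + 1), Nat.mod_lt _ r.succ_pos⟩) fun h h' => h (Fin.ext_iff.1 h')⟩
  have hF' : ¬ F ⊑ turanGraph N (r + 1) := fun ⟨f⟩ => hF (hturan.of_hom f.toHom)
  have := not_disjointCopies_succ_isContained_graphJoin (A := (⊤ : SimpleGraph (Fin t))) hF'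
  rwa [Fintype.card_fin] at this

variable [Fintype V] [DecidableRel G.Adj]

lemma edgesOn_univ : edgesOn G univ = #G.edgeFinset := by
  rw [edgesOn, ← (induceUnivIso G).card_edgeFinset_eq]
  congr! <;> simp

lemma nonempty_iso_joinTuran_of_universal [DecidableEq V] {Q : Finset V} (hQ : #Q = t)
    (hV : Fintype.card V = N + t) (hadj : ∀ q ∈ Q, ∀ x, x ≠ q → G.Adj q x)
    (hfree : G.CliqueFreeOn (Qᶜ : Finset V) (r + 2))
    (hedges : joinTuranEdges r t N ≤ #G.edgeFinset) :
    Nonempty (G ≃g joinTuran r t N) := by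
  have hcard : #Qᶜ = N := by rw [card_compl]; lia
  have hQc : turanNumber r N ≤ edgesOn G Qᶜ := by
    have := edgesOn_eq_of_forall_adj (subset_univ Q) fun q hq x _ => hadj q hq x
    rw [edgesOn_univ, ← compl_eq_univ_sdiff, hcard, hQ] at this
    rw [joinTuranEdges] at hedges
    lia
  have hcard' : Fintype.card ((Qᶜ : Finset V) : Set V) = N :=
    (Fintype.card_coe _).trans hcard
  have hmax : (G.induce ((Qᶜ : Finset V) : Set V)).IsTuranMaximal (r + 1) :=
    ⟨(cliqueFree_induce_iff G _ _).2 hfree, fun G' _ hG' =>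
      (hcard' ▸ card_edgeFinset_le_turanNumber hG').trans hQc⟩
  have hQc_iso := hmax.nonempty_iso_turanGraph
  rw [hcard', coe_compl] at hQc_iso
  let e : (Q : Set V) ≃ Fin t := Q.equivFinOfCardEq hQ
  have hQ_iso : G.induce (Q : Set V) ≃g (⊤ : SimpleGraph (Fin t)) :=
    ⟨e, by
      intro x y
      simpa [← Subtype.ext_iff, e.injective.ne_iff] using
        ⟨fun h => hadj _ x.2 _ (Subtype.coe_ne_coe.2 (Ne.symm h)),
          fun h hxy => h.ne (congrArg Subtype.val hxy)⟩⟩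
  exact nonempty_iso_graphJoin hQ_iso hQc_iso.some fun x hx y hy =>
    hadj x hx y fun h => hy (h ▸ hx)

end JoinTuran

section Extremal

variable {W : Type*} [Finite W] {F : SimpleGraph W} {r : ℕ}

theorem IsNearlyColorable.nonempty_iso_joinTuran (hr : 1 ≤ r) (hF : IsNearlyColorable F (r + 1)) :
    ∃ c : ℝ, 0 < c ∧ ∃ N₀ : ℕ, ∀ N ≥ N₀, ∀ t : ℕ, (t : ℝ) ≤ c * N →
      ∀ {V : Type u} [Fintype V] (G : SimpleGraph V) [DecidableRel G.Adj],
      Fintype.card V = N + t → (disjointCopies (t + 1) F).Free G →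
      joinTuranEdges r t N ≤ #G.edgeFinset → Nonempty (G ≃g joinTuran r t N) := by
  classical
  obtain ⟨c, hc, N₀, hN₀⟩ := hF.exists_universal_of_joinTuranEdges_le.{u} hr
  refine ⟨c, hc, N₀, fun N hN t ht V _ G _ hV hfree hedges => ?_⟩
  obtain ⟨Q, -, hQ, hadj, hQfree⟩ := hN₀ N hN t ht G univ hV (by rwa [edgesOn_univ])
    (by rwa [coe_univ, isContained_congr .refl (induceUnivIso G)])
  exact nonempty_iso_joinTuran_of_universal hQ hV (fun q hq x => hadj q hq x (mem_univ x))
    (by rwa [coe_compl, Set.compl_eq_univ_sdiff, ← coe_univ]) hedges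

theorem IsNearlyColorable.isExtremal_free_iff (hr : 1 ≤ r) (hF : IsNearlyColorable F (r + 1))
    (hχ : ¬ F.Colorable (r + 1)) :
    ∃ c : ℝ, 0 < c ∧ ∃ N₀ : ℕ, ∀ N ≥ N₀, ∀ t : ℕ, (t : ℝ) ≤ c * N →
      ∀ {V : Type u} [Fintype V] (G : SimpleGraph V) [DecidableRel G.Adj],
      Fintype.card V = N + t →
      (G.IsExtremal (disjointCopies (t + 1) F).Free ↔ Nonempty (G ≃g joinTuran r t N)) := by
  obtain ⟨c, hc, N₀, hN₀⟩ := hF.nonempty_iso_joinTuran.{u} hr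
  refine ⟨c, hc, N₀, fun N hN t ht V _ G _ hV =>
    ⟨fun hG => ?_, fun ⟨e⟩ => ⟨?_, fun G' _ hG' => ?_⟩⟩⟩
  · refine hN₀ N hN t ht G hV hG.1 ?_
    rw [card_edgeFinset_of_isExtremal_free hG, ← card_edgeFinset_joinTuran]
    have hcard : Fintype.card V = Fintype.card (Fin t ⊕ Fin N) := by simp [hV, add_comm]
    rw [hcard]
    exact card_edgeFinset_le_extremalNumber (not_disjointCopies_succ_isContained_joinTuran hχ)
  · rw [free_congr .refl e]
    exact not_disjointCopies_succ_isContained_joinTuran hχ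
  · rw [e.card_edgeFinset_eq, card_edgeFinset_joinTuran]
    by_contra! hlt
    obtain ⟨e'⟩ := hN₀ N hN t ht G' hV hG' hlt.le
    exact hlt.ne' (by rw [e'.card_edgeFinset_eq, card_edgeFinset_joinTuran])

end Extremal

namespace HGraph

variable {F H K : HGraph 2} {n t k : ℕ}

/-- The simple graph on the vertex set of a `2`-uniform hypergraph, adjacent vertices being those
that form an edge. -/
def graph (H : HGraph 2) : SimpleGraph H.verts where
  Adj x y := {x.1, y.1} ∈ H.edges
  symm := ⟨fun x y h => by rwa [pair_comm]⟩
  loopless := ⟨fun x h => by simpa using H.edges_card _ h⟩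

instance : DecidableRel H.graph.Adj := fun x y => inferInstanceAs (Decidable ({x.1, y.1} ∈ H.edges))

lemma graph_adj {x y : H.verts} : H.graph.Adj x y ↔ {x.1, y.1} ∈ H.edges := Iff.rfl

lemma exists_graph_adj_of_mem_edges {e : Finset ℕ} (he : e ∈ H.edges) :
    ∃ x y, H.graph.Adj x y ∧ e = {x.1, y.1} := by
  obtain ⟨x, y, -, rfl⟩ := card_eq_two.1 (H.edges_card e he)
  have hsub := H.edges_sub _ he
  exact ⟨⟨x, hsub (by simp)⟩, ⟨y, hsub (by simp)⟩, he, rfl⟩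

lemma injective_toFinset_map_val (S : Finset ℕ) :
    Function.Injective fun e : Sym2 S => (e.map Subtype.val).toFinset := fun e e' h => by
  refine Sym2.map.injective Subtype.val_injective (Sym2.ext fun x => ?_)
  simpa only [Sym2.mem_toFinset] using Finset.ext_iff.1 h x

lemma card_edgeFinset_graph : #H.graph.edgeFinset = #H.edges := by
  refine card_bij (fun e _ => (e.map Subtype.val).toFinset) ?_
    (fun e _ e' _ h => injective_toFinset_map_val _ h) fun e he => ?_
  · rintro ⟨x, y⟩ he
    simpa [Sym2.toFinset_mk_eq, graph_adj] using he
  · obtain ⟨x, y, hxy, rfl⟩ := exists_graph_adj_of_mem_edges he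
    exact ⟨s(x, y), by simpa using hxy, by simp [Sym2.toFinset_mk_eq]⟩

/-- The `2`-uniform hypergraph whose edges are the adjacent pairs of a graph on a set of natural
numbers. -/
def ofGraph {S : Finset ℕ} (G : SimpleGraph S) [DecidableRel G.Adj] : HGraph 2 :=
  ofEdges 2 S (G.edgeFinset.image fun e => (e.map Subtype.val).toFinset)

lemma graph_ofGraph {S : Finset ℕ} (G : SimpleGraph S) [DecidableRel G.Adj] :
    (ofGraph G).graph = G := by
  ext (x : S) (y : S)
  have hmem := (injective_toFinset_map_val S).mem_finset_image (s := G.edgeFinset) (a := s(x, y))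
  simp only [Sym2.map_mk, Sym2.toFinset_mk_eq, mem_edgeFinset, mem_edgeSet] at hmem
  refine (mem_filter.trans (and_congr_left' hmem)).trans (and_iff_left_of_imp fun h => ⟨?_, ?_⟩)
  · exact insert_subset x.2 (singleton_subset_iff.2 y.2)
  · exact card_pair (Subtype.coe_ne_coe.2 h.ne)

lemma exists_forall_eq_coe (g : F.verts → H.verts) : ∃ f : ℕ → ℕ, ∀ x : F.verts, f x = g x :=
  ⟨Function.extend Subtype.val (fun x => (g x).1) id, Subtype.val_injective.extend_apply _ _⟩

lemma iso_iff : H.Iso K ↔ Nonempty (H.graph ≃g K.graph) := by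
  constructor
  · rintro ⟨f, hf, hedges⟩
    refine ⟨⟨hf.equiv f, fun {x y} => ?_⟩⟩
    obtain rfl | hxy := eq_or_ne x y
    · simp
    · have := hedges {x.1, y.1} (mem_powersetCard.2 ⟨by simp [insert_subset_iff],
        card_pair (Subtype.coe_ne_coe.2 hxy)⟩)
      rw [image_insert, image_singleton] at this
      exact this.symm
  · rintro ⟨e⟩
    obtain ⟨f, hf⟩ := exists_forall_eq_coe e
    refine ⟨f, ⟨?_, ?_, ?_⟩, fun s hs => ?_⟩
    · exact fun x hx => hf ⟨x, hx⟩ ▸ (e ⟨x, hx⟩).2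
    · intro x hx y hy hxy
      rw [hf ⟨x, hx⟩, hf ⟨y, hy⟩] at hxy
      exact congrArg Subtype.val (e.injective (Subtype.ext hxy))
    · exact fun y hy => ⟨e.symm ⟨y, hy⟩, (e.symm ⟨y, hy⟩).2, by simp [hf]⟩
    · obtain ⟨hsub, hcard⟩ := mem_powersetCard.1 hs
      obtain ⟨x, y, -, rfl⟩ := card_eq_two.1 hcard
      rw [image_insert, image_singleton, hf ⟨x, hsub (by simp)⟩, hf ⟨y, hsub (by simp)⟩]
      exact (e.map_adj_iff (v := ⟨x, hsub (by simp)⟩) (w := ⟨y, hsub (by simp)⟩)).symm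

lemma isCopyIn_induce_iff {S : Finset ℕ} (hS : S ⊆ H.verts) :
    F.IsCopyIn (H.induce S) ↔ ∃ f : F.graph.Copy H.graph, ∀ x, (f x).1 ∈ S := by
  have hverts : (H.induce S).verts = S := inter_eq_right.2 hS
  have hedges {e : Finset ℕ} : e ∈ (H.induce S).edges ↔ e ∈ H.edges ∧ e ⊆ S := by
    simp only [induce, ofEdges, mem_filter, subset_inter_iff]
    exact ⟨fun h => h.1, fun h => ⟨h, ⟨H.edges_sub e h.1, h.2⟩, H.edges_card e h.1⟩⟩
  constructor
  · rintro ⟨f, hinj, hf, hfe⟩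
    rw [hverts] at hf
    refine ⟨⟨⟨fun x => ⟨f x, hS (hf x x.2)⟩, fun {x y} hxy => ?_⟩, fun x y hxy => ?_⟩,
      fun x => hf x x.2⟩
    · have := (hedges.1 (hfe _ hxy)).1
      rwa [image_insert, image_singleton] at this
    · exact Subtype.ext (hinj x.2 y.2 (congrArg Subtype.val hxy))
  · rintro ⟨g, hgS⟩
    obtain ⟨f, hf⟩ := exists_forall_eq_coe g
    refine ⟨f, fun x hx y hy hxy => ?_, fun x hx => ?_, fun e he => ?_⟩
    · rw [hf ⟨x, hx⟩, hf ⟨y, hy⟩] at hxy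
      exact congrArg Subtype.val (g.injective (Subtype.ext hxy))
    · rw [hverts, hf ⟨x, hx⟩]
      exact hgS ⟨x, hx⟩
    · obtain ⟨x, y, hxy, rfl⟩ := exists_graph_adj_of_mem_edges he
      rw [image_insert, image_singleton, hf, hf, hedges]
      exact ⟨g.toHom.map_adj hxy, by simp [insert_subset_iff, hgS]⟩

lemma hasMatching_iff : F.HasMatching H k ↔ disjointCopies k F.graph ⊑ H.graph := by
  constructor
  · rintro ⟨S, hS, hdisj, hcopy⟩
    choose f hf using fun i => (isCopyIn_induce_iff (hS i).1).1 (hcopy i)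
    refine ⟨⟨⟨fun p => f p.1 p.2, ?_⟩, ?_⟩⟩
    · rintro ⟨i, x⟩ ⟨j, y⟩ h
      obtain ⟨hadj, rfl : i = j⟩ := disjointCopies_adj.1 h
      exact (f i).toHom.map_adj hadj
    · rintro ⟨i, x⟩ ⟨j, y⟩ (h : f i x = f j y)
      obtain rfl : i = j := by
        by_contra hij
        exact Finset.disjoint_left.1 (hdisj i j hij) (hf i x) (h ▸ hf j y)
      rw [(f i).injective h]
  · rintro ⟨f⟩
    let g (i : Fin k) : F.graph.Copy H.graph :=
      ⟨⟨fun x => f (i, x), fun h => f.toHom.map_adj (disjointCopies_adj.2 ⟨h, rfl⟩)⟩,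
        fun x y h => congrArg Prod.snd (f.injective h)⟩
    have hsub (i) : univ.image (fun x => (g i x).1) ⊆ H.verts := by
      simp [image_subset_iff]
    refine ⟨fun i => univ.image fun x => (g i x).1, fun i => ⟨hsub i, ?_⟩, fun i j hij => ?_,
      fun i => (isCopyIn_induce_iff (hsub i)).2 ⟨g i, fun x => mem_image_of_mem _ (mem_univ x)⟩⟩
    · exact (card_image_of_injective _ (Subtype.val_injective.comp (g i).injective)).trans
        (Fintype.card_coe _)
    · rw [Finset.disjoint_left]
      simp only [Finset.mem_image, mem_univ, true_and, not_exists]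
      rintro _ ⟨x, rfl⟩ y hxy
      exact hij (congrArg Prod.fst (f.injective (Subtype.ext hxy))).symm

lemma exMatchN_eq_extremalNumber :
    exMatchN 2 n t F = extremalNumber n (disjointCopies (t + 1) F.graph) := by
  have hle : ∀ m ∈ {m | ∃ H : HGraph 2, #H.verts = n ∧ ¬ F.HasMatching H (t + 1) ∧ #H.edges = m},
      m ≤ extremalNumber n (disjointCopies (t + 1) F.graph) := by
    rintro _ ⟨H, rfl, hH, rfl⟩
    rw [hasMatching_iff] at hH
    simpa [card_edgeFinset_graph] using card_edgeFinset_le_extremalNumber hH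
  refine (csSup_le' hle).antisymm ?_
  have hcard : n = Fintype.card (range n) := by simp
  nth_rw 1 [hcard]
  rw [extremalNumber_le_iff]
  intro G _ hG
  refine le_csSup ⟨_, hle⟩ ⟨ofGraph G, card_range n, ?_, ?_⟩
  · rwa [hasMatching_iff, graph_ofGraph]
  · rw [← card_edgeFinset_graph]
    congr!
    exact graph_ofGraph G

lemma isExtremalMatchingFree_iff : IsExtremalMatchingFree 2 n t F H ↔
    #H.verts = n ∧ H.graph.IsExtremal (disjointCopies (t + 1) F.graph).Free := by
  rw [IsExtremalMatchingFree, exMatchN_eq_extremalNumber, isExtremal_free_iff, hasMatching_iff,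
    card_edgeFinset_graph, Fintype.card_coe]
  exact and_congr_right fun h => h ▸ Iff.rfl

lemma pair_mem_edges_join {x y : ℕ} (hd : Disjoint H.verts K.verts) (hx : x ∈ H.verts)
    (hy : y ∈ K.verts) : {x, y} ∈ (H.join K).edges := by
  have hsub : ({x, y} : Finset ℕ) ⊆ H.verts ∪ K.verts := by
    simp [insert_subset_iff, hx, hy]
  have hcard : #{x, y} = 2 := card_pair (Finset.disjoint_iff_ne.1 hd x hx y hy)
  refine mem_filter.2 ⟨mem_union_right _ (mem_filter.2 ⟨mem_powersetCard.2 ⟨hsub, hcard⟩, ?_⟩),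
    hsub, hcard⟩
  exact ⟨⟨x, by simp [hx]⟩, ⟨y, by simp [hy]⟩⟩

lemma mem_edges_join_of_subset_left {e : Finset ℕ} (hd : Disjoint H.verts K.verts)
    (he : e ⊆ H.verts) : e ∈ (H.join K).edges ↔ e ∈ H.edges := by
  have hK : e ∩ K.verts = ∅ := disjoint_iff_inter_eq_empty.1 (hd.mono_left he)
  refine ⟨fun h => ?_, fun h => mem_filter.2 ⟨by simp [h],
    he.trans subset_union_left, H.edges_card e h⟩⟩
  simp only [join, ofEdges, mem_filter, mem_union, hK] at h
  obtain ⟨(h | h) | h, -, hcard⟩ := h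
  · exact h
  · rw [inter_eq_left.2 (K.edges_sub e h)] at hK
    simp [hK] at hcard
  · simp at h

lemma join_comm : H.join K = K.join H := by
  simp only [join, and_comm, union_comm]

lemma mem_edges_join_of_subset_right {e : Finset ℕ} (hd : Disjoint H.verts K.verts)
    (he : e ⊆ K.verts) : e ∈ (H.join K).edges ↔ e ∈ K.edges := by
  rw [join_comm, mem_edges_join_of_subset_left hd.symm he]

lemma nonempty_iso_graphJoin {V W : Type*} {A : SimpleGraph V} {B : SimpleGraph W}
    (hd : Disjoint H.verts K.verts) (e₁ : H.graph ≃g A) (e₂ : K.graph ≃g B) :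
    Nonempty ((H.join K).graph ≃g graphJoin A B) := by
  let e : V ⊕ W ≃ (H.join K).verts :=
    (e₁.symm.toEquiv.sumCongr e₂.symm.toEquiv).trans (Equiv.Finset.union _ _ hd)
  refine ⟨(⟨e, ?_⟩ : graphJoin A B ≃g (H.join K).graph).symm⟩
  rintro (x | x) (y | y)
  · rw [graphJoin_adj_inl, ← e₁.symm.map_adj_iff]
    exact mem_edges_join_of_subset_left hd
      (insert_subset (e₁.symm x).2 (singleton_subset_iff.2 (e₁.symm y).2))
  · exact iff_of_true (pair_mem_edges_join hd (e₁.symm x).2 (e₂.symm y).2) (by simp)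
  · refine iff_of_true (Adj.symm ?_) (by simp)
    exact pair_mem_edges_join hd (e₁.symm y).2 (e₂.symm x).2
  · rw [graphJoin_adj_inr, ← e₂.symm.map_adj_iff]
    exact mem_edges_join_of_subset_right hd
      (insert_subset (e₂.symm x).2 (singleton_subset_iff.2 (e₂.symm y).2))

lemma pair_mem_edges_ofEdges {S : Finset ℕ} {E : Finset (Finset ℕ)} {x y : ℕ} (hx : x ∈ S)
    (hy : y ∈ S) : {x, y} ∈ (ofEdges 2 S E).edges ↔ {x, y} ∈ E ∧ x ≠ y := by
  simp [ofEdges, insert_subset_iff, hx, hy, card_pair_eq_two_iff]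

lemma graph_completeOn (S : Finset ℕ) : (completeOn 2 S).graph = ⊤ := by
  ext (x : S) (y : S)
  refine (pair_mem_edges_ofEdges x.2 y.2).trans
    ((and_iff_right_of_imp fun hxy => ?_).trans Subtype.coe_ne_coe)
  exact mem_powersetCard.2 ⟨insert_subset x.2 (singleton_subset_iff.2 y.2), card_pair hxy⟩

lemma graph_turanOn_adj {ℓ : ℕ} {S : Finset ℕ} {x y : S} :
    (turanOn 2 ℓ S).graph.Adj x y ↔ x.1 % ℓ ≠ y.1 % ℓ := by
  refine (pair_mem_edges_ofEdges x.2 y.2).trans ?_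
  simp only [mem_filter, mem_powersetCard, insert_subset_iff, singleton_subset_iff,
    card_pair_eq_two_iff, mem_insert, mem_singleton]
  grind

lemma nonempty_iso_joinTuran {r t n : ℕ} :
    Nonempty (((completeOn 2 (range t)).join (turanOn 2 (r + 1) (Ico t n))).graph ≃g
      joinTuran r t (n - t)) := by
  have hd : Disjoint (completeOn 2 (range t)).verts (turanOn 2 (r + 1) (Ico t n)).verts := by
    rw [Finset.disjoint_left]
    intro x hx hx'
    exact (mem_range.1 hx).not_ge (mem_Ico.1 hx').1
  let e₁ : range t ≃ Fin t := (range t).equivFinOfCardEq (card_range t)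
  let e₂ : Fin (n - t) ≃ Ico t n :=
    { toFun i := ⟨t + i, by simp; lia⟩
      invFun x := ⟨x - t, by have := mem_Ico.1 x.2; lia⟩
      left_inv i := by simp
      right_inv x := by have := mem_Ico.1 x.2; ext; simp; lia }
  refine nonempty_iso_graphJoin hd ⟨e₁, fun {x y} => ?_⟩ (Iso.symm ⟨e₂, fun {i j} => ?_⟩)
  · rw [graph_completeOn, top_adj, top_adj]
    exact e₁.injective.ne_iff
  · rw [turanGraph_adj]
    refine graph_turanOn_adj.trans (not_congr ?_)
    exact ⟨fun h => Nat.ModEq.add_left_cancel' t h, fun h => Nat.ModEq.add_left t h⟩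

lemma iso_join_turanOn_iff {r t n : ℕ} :
    H.Iso ((completeOn 2 (range t)).join (turanOn 2 (r + 1) (Ico t n))) ↔
      Nonempty (H.graph ≃g joinTuran r t (n - t)) := by
  obtain ⟨e⟩ := nonempty_iso_joinTuran (r := r) (t := t) (n := n)
  exact iso_iff.trans ⟨Nonempty.map (·.trans e), Nonempty.map (·.trans e.symm)⟩

lemma colorable_graph_iff : F.graph.Colorable k ↔ ∃ c : ℕ → ℕ, (∀ v ∈ F.verts, c v < k) ∧
    ∀ e ∈ F.edges, ∀ u ∈ e, ∀ v ∈ e, u ≠ v → c u ≠ c v := by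
  constructor
  · rintro ⟨C⟩
    let c : ℕ → ℕ := Function.extend Subtype.val (fun x => (C x).1) id
    have hc (x : F.verts) : c x = C x := Subtype.val_injective.extend_apply _ _ x
    refine ⟨c, fun v hv => (hc ⟨v, hv⟩).trans_lt (C _).2, fun e he u hu v hv huv => ?_⟩
    have huF := F.edges_sub e he hu
    have hvF := F.edges_sub e he hv
    have hadj : F.graph.Adj ⟨u, huF⟩ ⟨v, hvF⟩ := by
      have hsub : {u, v} ⊆ e := insert_subset hu (singleton_subset_iff.2 hv)
      have := eq_of_subset_of_card_le hsub (by rw [F.edges_card e he, card_pair huv])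
      rwa [graph_adj, this]
    rw [hc ⟨u, huF⟩, hc ⟨v, hvF⟩]
    exact Fin.val_ne_of_ne (C.valid hadj)
  · rintro ⟨c, hc, hproper⟩
    refine ⟨.mk (fun x => ⟨c x, hc x x.2⟩) fun {x y} hxy h => ?_⟩
    exact hproper _ hxy x (by simp) y (by simp) (Subtype.coe_ne_coe.2 hxy.ne) (Fin.ext_iff.1 h)

lemma colorable_graph_iff_chrom_le : F.graph.Colorable k ↔ chrom F ≤ k := by
  have hchrom : chrom F = sInf {k | F.graph.Colorable k} := by
    simp only [chrom, colorable_graph_iff]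
  rw [hchrom]
  exact ⟨fun h => Nat.sInf_le h, fun h =>
    (Nat.sInf_mem (s := {k | F.graph.Colorable k}) ⟨_, F.graph.colorable_of_fintype⟩).mono h⟩

lemma graph_ofEdges_erase (x y : F.verts) :
    (ofEdges 2 F.verts (F.edges.erase {x.1, y.1})).graph = F.graph.deleteEdges {s(x, y)} := by
  ext (u : F.verts) (v : F.verts)
  refine (pair_mem_edges_ofEdges u.2 v.2).trans ?_
  rw [deleteEdges_adj, Set.mem_singleton_iff, mem_erase]
  have huv : ({u.1, v.1} : Finset ℕ) = {x.1, y.1} ↔ s(u, v) = s(x, y) := by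
    simpa only [Sym2.map_mk, Sym2.toFinset_mk_eq] using
      (injective_toFinset_map_val F.verts).eq_iff (a := s(u, v)) (b := s(x, y))
  refine ⟨fun h => ⟨h.1.2, huv.not.1 h.1.1⟩, fun h => ⟨⟨huv.not.2 h.2, h.1⟩, ?_⟩⟩
  exact Subtype.coe_ne_coe.2 h.1.ne

end HGraph

lemma isNearlyColorable_of_not_colorable {W : Type*} {F : SimpleGraph W} {ℓ : ℕ} {a b : W}
    (hab : F.Adj a b) (hF : ¬ F.Colorable ℓ) (hdel : (F.deleteEdges {s(a, b)}).Colorable ℓ) :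
    IsNearlyColorable F ℓ := by
  obtain ⟨C⟩ := hdel
  refine ⟨a, b, hab, C, ?_⟩
  by_contra hC
  refine hF ⟨.mk C fun {x y} hxy h => ?_⟩
  by_cases he : s(x, y) = s(a, b)
  · obtain ⟨rfl, rfl⟩ | ⟨rfl, rfl⟩ := Sym2.eq_iff.1 he
    exacts [hC h, hC h.symm]
  · exact C.valid (by simpa [hxy] using he) h

lemma EdgeCritical.isNearlyColorable {F : HGraph 2} {k : ℕ} (hF : EdgeCritical F)
    (hk : chrom F = k + 1) : IsNearlyColorable F.graph k := by
  obtain ⟨e, he, hlt⟩ := hF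
  obtain ⟨x, y, hxy, rfl⟩ := HGraph.exists_graph_adj_of_mem_edges he
  refine isNearlyColorable_of_not_colorable hxy
    (HGraph.colorable_graph_iff_chrom_le.not.2 (by lia)) ?_
  rw [← HGraph.graph_ofEdges_erase]
  exact HGraph.colorable_graph_iff_chrom_le.2 (by lia)

/-- the density Corrádi–Hajnal theorem for edge-critical graphs. -/
theorem statement_5 (F : HGraph 2) (hcrit : EdgeCritical F) (hχ : 3 ≤ chrom F) :
    ∃ N₀ : ℕ, ∃ cF : ℝ, 0 < cF ∧ ∀ n : ℕ, N₀ ≤ n → ∀ t : ℕ, (t : ℝ) ≤ cF * n →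
      ∀ H : HGraph 2, IsExtremalMatchingFree 2 n t F H ↔
        H.Iso ((completeOn 2 (Finset.range t)).join
          (turanOn 2 (chrom F - 1) (Finset.Ico t n))) := by
  obtain ⟨r, hr⟩ : ∃ r, chrom F = r + 2 := ⟨chrom F - 2, by lia⟩
  obtain ⟨c, hc, N₀, hN₀⟩ := (hcrit.isNearlyColorable hr).isExtremal_free_iff (by lia)
    (HGraph.colorable_graph_iff_chrom_le.not.2 (by lia))
  refine ⟨2 * N₀, min (c / 2) (1 / 2), by positivity, fun n hn t ht H => ?_⟩
  have ht_half : (t : ℝ) ≤ 1 / 2 * n := ht.trans (by gcongr; exact min_le_right _ _)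
  have ht_c : (t : ℝ) ≤ c / 2 * n := ht.trans (by gcongr; exact min_le_left _ _)
  have htn : 2 * t ≤ n := mod_cast (by linarith : (2 * t : ℝ) ≤ n)
  have ht_sub : (t : ℝ) ≤ c * (n - t : ℕ) := by
    rw [Nat.cast_sub (by lia)]
    nlinarith
  have hiff (hH : #H.verts = n) := hN₀ (n - t) (by lia) t ht_sub H.graph
    (by rw [Fintype.card_coe, hH]; lia)
  rw [HGraph.isExtremalMatchingFree_iff, show chrom F - 1 = r + 1 by lia,
    HGraph.iso_join_turanOn_iff]
  have hcard : Nonempty (H.graph ≃g joinTuran r t (n - t)) → #H.verts = n := fun ⟨e⟩ => by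
    simpa [show t + (n - t) = n by lia] using Fintype.card_congr e.toEquiv
  exact ⟨fun ⟨hH, hext⟩ => (hiff hH).1 hext, fun h => ⟨hcard h, (hiff (hcard h)).2 h⟩⟩

end DensityCH
end
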